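/- (Lee–Szczarba, quoted in Section 5.) The group cohomology of GL(4,ℤ) with trivial rational coefficients vanishes in degree 5: H^5(GL(4,ℤ);ℚ) = 0. -/

import Mathlib

noncomputable section

open Matrix

/-!
The group `GL(4,ℤ)` acts on a simplicial refinement of Voronoi's decomposition of the cone of
positive definite symmetric `4 × 4` matrices: the vertices are the squares `v vᵀ`, and the cone over
the minimal vectors of `D₄` is coned off from its centre, so that every top cell has ten vertices.
A top cell is where a form attains its minimum, `12` on squares and `104` on centres. The values of
these forms at a generic matrix shell the cells, and therefore the locally finite chains are exact
below the top degree, where the cycles are the multiples of the fundamental cycle, on which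
`GL(4,ℤ)` acts by the orientation character `χ`.

Stabilizers of cells are finite, hence the chains twisted by `χ` form an acyclic resolution of the
trivial representation, and the cohomology in degree `5` is the space of invariant boundaries on
five vertices modulo boundaries of invariant chains. Averaging over the centres lifts such a
boundary up to an invariant chain on cells without a centre. In such a cell, spanned by the squares
of five vectors with minors among `0`, `1` and `-1`, the vectors satisfy a single relation. If a
coefficient vanishes, the reflection in that vector fixes the cell but has `χ = -1`, and the chain
vanishes on it. Otherwise the relation involves all five vectors with coefficients `±1`; then it is
destroyed by the exchange of a single vertex, since half a sum of two minimal vectors would be too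
short. Coning off to the mean of the neighbouring vertices therefore inverts the boundary on what
is left.
-/

universe u

section Cohomology

open CategoryTheory

variable {k G : Type u} [CommRing k] [Group G]

theorem shortExact_of_exact {X : ShortComplex (Rep.{u} k G)} (hf : Function.Injective X.f.hom)
    (hg : Function.Surjective X.g.hom) (hfg : Function.Exact X.f.hom X.g.hom) :
    X.ShortExact where
  exact := by
    rw [← ShortComplex.exact_map_iff_of_faithful _ (forget₂ (Rep k G) (ModuleCat k)),
      ShortComplex.moduleCat_exact_iff]
    exact fun b => (hfg b).1
  mono_f := (Rep.mono_iff_injective _).2 hf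
  epi_g := (Rep.epi_iff_surjective _).2 hg

theorem δ_surjective_of_subsingleton {X : ShortComplex (Rep.{u} k G)} (hX : X.ShortExact) (n : ℕ)
    (_ : Subsingleton (groupCohomology X.X₂ (n + 1))) :
    Function.Surjective (groupCohomology.δ hX n (n + 1) rfl) :=
  (ModuleCat.epi_iff_surjective _).1 <|
    groupCohomology.epi_δ_of_isZero hX n (ModuleCat.isZero_of_subsingleton _)

theorem subsingleton_groupCohomology_succ_of_shortExact {X : ShortComplex (Rep.{u} k G)}
    (hX : X.ShortExact) (n : ℕ) (_ : Subsingleton (groupCohomology X.X₂ (n + 1)))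
    (_ : Subsingleton (groupCohomology X.X₃ n)) :
    Subsingleton (groupCohomology X.X₁ (n + 1)) :=
  (δ_surjective_of_subsingleton hX n ‹_›).subsingleton

theorem subsingleton_groupCohomology_one_of_shortExact {X : ShortComplex (Rep.{u} k G)}
    (hX : X.ShortExact) (h₂ : Subsingleton (groupCohomology X.X₂ 1))
    (hlift : ∀ c, (∀ g, X.X₃.ρ g c = c) → ∃ b, (∀ g, X.X₂.ρ g b = b) ∧ X.g.hom b = c) :
    Subsingleton (groupCohomology X.X₁ 1) := by
  refine subsingleton_of_forall_eq 0 fun y => ?_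
  obtain ⟨z, rfl⟩ := δ_surjective_of_subsingleton hX 0 h₂ y
  induction z using groupCohomology.H0_induction_on with
  | h z =>
    obtain ⟨b, hb, hbz⟩ := hlift z.1 z.2
    have h0 : X.f.hom ∘ (0 : G → X.X₁) = groupCohomology.d₀₁ X.X₂ b := by
      ext g
      simp [groupCohomology.d₀₁, hb]
    have hzero : (⟨0, groupCohomology.mem_cocycles₁_of_comp_eq_d₀₁ hX h0⟩ :
        groupCohomology.cocycles₁ X.X₁) = 0 := rfl
    refine (groupCohomology.δ₀_apply hX z b hbz 0 h0).trans ?_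
    erw [hzero]
    exact map_zero _

section Kernel

variable {V W : Type u} [AddCommGroup V] [Module k V] [AddCommGroup W] [Module k W]
  {ρ : Representation k G V} {σ : Representation k G W}

/-- The sequence `0 → ker d → V → range d → 0` of representations attached to an intertwining
map `d` out of `V`. -/
def kerRangeSequence (d : ρ.IntertwiningMap σ) : ShortComplex (Rep.{u} k G) where
  X₁ := Rep.of d.ker.toRepresentation
  X₂ := Rep.of ρ
  X₃ := Rep.of d.range.toRepresentation
  f := Rep.ofHom ⟨d.ker.toSubmodule.subtype, fun _ => rfl⟩
  g := Rep.ofHom ⟨d.toLinearMap.rangeRestrict, fun g => LinearMap.ext fun v =>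
    Subtype.ext (LinearMap.congr_fun (d.isIntertwining' g) v)⟩
  zero := by
    ext v
    exact v.2

theorem kerRangeSequence_shortExact (d : ρ.IntertwiningMap σ) :
    (kerRangeSequence d).ShortExact :=
  shortExact_of_exact Subtype.val_injective d.toLinearMap.surjective_rangeRestrict fun v =>
    ⟨fun hv => ⟨⟨v, congrArg Subtype.val hv⟩, rfl⟩, by
      rintro ⟨w, rfl⟩
      exact Subtype.ext w.2⟩

theorem subsingleton_groupCohomology_ker_succ (d : ρ.IntertwiningMap σ) (n : ℕ)
    (hV : Subsingleton (groupCohomology (Rep.of ρ) (n + 1)))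
    (hd : Subsingleton (groupCohomology (Rep.of d.range.toRepresentation) n)) :
    Subsingleton (groupCohomology (Rep.of d.ker.toRepresentation) (n + 1)) :=
  subsingleton_groupCohomology_succ_of_shortExact (kerRangeSequence_shortExact d) n hV hd

theorem subsingleton_groupCohomology_ker_one (d : ρ.IntertwiningMap σ)
    (hV : Subsingleton (groupCohomology (Rep.of ρ) 1))
    (hlift : ∀ v, (∀ g, σ g (d v) = d v) → ∃ v', (∀ g, ρ g v' = v') ∧ d v' = d v) :
    Subsingleton (groupCohomology (Rep.of d.ker.toRepresentation) 1) := by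
  refine subsingleton_groupCohomology_one_of_shortExact (kerRangeSequence_shortExact d) hV ?_
  rintro ⟨_, v, rfl⟩ hv
  obtain ⟨v', hinv, hv'⟩ := hlift v fun g => congrArg Subtype.val (hv g)
  exact ⟨v', hinv, Subtype.ext hv'⟩

end Kernel

section Retract

variable {V : Type u} [AddCommGroup V] [Module k V] (ρ : Representation k G V)

/-- The embedding of a representation into the representation coinduced from its restriction to
the trivial subgroup, given by its orbit maps. -/
def orbitMap : Rep.of ρ ⟶
    Rep.coind (⊥ : Subgroup G).subtype (Rep.res (⊥ : Subgroup G).subtype (Rep.of ρ)) :=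
  Rep.ofHom
    { toFun v := ⟨fun g => ρ g v, by
        rintro ⟨g, hg⟩ h
        simp⟩
      map_add' _ _ := by ext; simp
      map_smul' _ _ := by ext; simp
      isIntertwining' g := by
        ext v h
        exact (LinearMap.congr_fun (ρ.map_mul h g) v).symm }

theorem subsingleton_groupCohomology_succ_of_retract (r : (G → V) →ₗ[k] V)
    (hr : ∀ v, r (fun g => ρ g v) = v) (hrρ : ∀ h F, r (fun g => F (g * h)) = ρ h (r F)) (n : ℕ) :
    Subsingleton (groupCohomology (Rep.of ρ) (n + 1)) := by
  let A := Rep.res (⊥ : Subgroup G).subtype (Rep.of ρ)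
  let p : Rep.coind (⊥ : Subgroup G).subtype A ⟶ Rep.of ρ := Rep.ofHom
    { toLinearMap := r ∘ₗ Submodule.subtype _
      isIntertwining' g := LinearMap.ext fun F => hrρ g F.1 }
  have hip : orbitMap ρ ≫ p = 𝟙 _ := by
    ext v
    exact hr v
  have hcoind : Limits.IsZero (groupCohomology (Rep.coind (⊥ : Subgroup G).subtype A) (n + 1)) :=
    (isZero_groupCohomology_succ_of_subsingleton A n).of_iso (groupCohomology.coindIso A (n + 1))
  have hid : (groupCohomology.functor k G (n + 1)).map (orbitMap ρ) ≫
      (groupCohomology.functor k G (n + 1)).map p = 𝟙 _ := by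
    rw [← Functor.map_comp, hip, CategoryTheory.Functor.map_id]
  refine ModuleCat.subsingleton_of_isZero ((Limits.IsZero.iff_id_eq_zero _).2 (hid.symm.trans ?_))
  exact (congrArg (· ≫ _) (hcoind.eq_of_tgt _ 0)).trans Limits.zero_comp

end Retract

end Cohomology

section Alternating

open Equiv.Perm

variable {k P : Type*} [Field k]

/-- A function on `m`-tuples is alternating if permuting the entries multiplies its values by the
sign of the permutation. -/
def IsAlternating {m : ℕ} (φ : (Fin m → P) → k) : Prop :=
  ∀ (x : Fin m → P) (σ : Equiv.Perm (Fin m)), φ (x ∘ σ) = sign σ • φ x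

namespace IsAlternating

theorem cons_comp {m : ℕ} {φ : (Fin (m + 1) → P) → k} (h : IsAlternating φ) (v : P)
    (x : Fin m → P) (σ : Equiv.Perm (Fin m)) :
    φ (Fin.cons v (x ∘ σ)) = sign σ • φ (Fin.cons v x) := by
  have hσ : (Fin.cons v (x ∘ σ) : Fin (m + 1) → P) =
      (Fin.cons v x : Fin (m + 1) → P) ∘ decomposeFin.symm (0, σ) := by
    ext i
    refine Fin.cases ?_ (fun j => ?_) i <;> simp
  rw [hσ, h, decomposeFin.symm_sign]
  simp

theorem cons_cons {m : ℕ} {φ : (Fin (m + 2) → P) → k} (h : IsAlternating φ) (u v : P)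
    (x : Fin m → P) :
    φ (Fin.cons u (Fin.cons v x : Fin (m + 1) → P)) =
      -φ (Fin.cons v (Fin.cons u x : Fin (m + 1) → P)) := by
  have hswap : (Fin.cons u (Fin.cons v x : Fin (m + 1) → P) : Fin (m + 2) → P) =
      (Fin.cons v (Fin.cons u x : Fin (m + 1) → P) : Fin (m + 2) → P) ∘ Equiv.swap 0 1 := by
    ext i
    refine Fin.cases (by simp) (Fin.cases (by simp) fun j => ?_) i
    rw [Function.comp_apply,
      Equiv.swap_apply_of_ne_of_ne (Fin.succ_ne_zero _) (by simp [Fin.ext_iff])]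
    simp
  rw [hswap, h, sign_swap (by simp)]
  simp

theorem injective_of_ne_zero [CharZero k] {m : ℕ} {φ : (Fin m → P) → k} (h : IsAlternating φ)
    {x : Fin m → P} (hx : φ x ≠ 0) : Function.Injective x := by
  intro i j hij
  by_contra hne
  have hswap : x ∘ Equiv.swap i j = x := by
    simp [Equiv.comp_swap_eq_update, hij]
  have := h x (Equiv.swap i j)
  rw [hswap, sign_swap hne, Units.neg_smul, one_smul] at this
  exact hx (self_eq_neg.1 this)

theorem eq_of_forall_cons {m : ℕ} {φ ψ : (Fin (m + 1) → P) → k} (hφ : IsAlternating φ)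
    (hψ : IsAlternating ψ) {x : Fin (m + 1) → P} {u : P} (hu : u ∈ Set.range x)
    (H : ∀ y : Fin m → P, insert u (Set.range y) = Set.range x →
      φ (Fin.cons u y) = ψ (Fin.cons u y)) : φ x = ψ x := by
  obtain ⟨j, rfl⟩ := hu
  have hx : (Fin.cons (x j) (Fin.tail (x ∘ Equiv.swap 0 j)) : Fin (m + 1) → P) =
      x ∘ Equiv.swap 0 j := by
    conv_rhs => rw [← Fin.cons_self_tail (x ∘ Equiv.swap 0 j)]
    simp
  have := H (Fin.tail (x ∘ Equiv.swap 0 j)) (by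
    rw [← Fin.range_cons, hx, (Equiv.swap 0 j).surjective.range_comp])
  rwa [hx, hφ, hψ, smul_left_cancel_iff] at this

theorem zero {m : ℕ} : IsAlternating (0 : (Fin m → P) → k) := fun _ _ => (smul_zero _).symm

end IsAlternating

/-- The antisymmetrization in all `m + 1` points of a function of a point and of an `m`-tuple. The
factor `1 / m!` is the right one for functions that are already alternating in the tuple. -/
def antisymmetrize {m : ℕ} (θ : P → (Fin m → P) → k) (y : Fin (m + 1) → P) : k :=
  (m.factorial : k)⁻¹ *
    ∑ σ : Equiv.Perm (Fin (m + 1)), sign σ • θ (y (σ 0)) (fun i => y (σ i.succ))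

theorem isAlternating_antisymmetrize {m : ℕ} (θ : P → (Fin m → P) → k) :
    IsAlternating (antisymmetrize θ) := by
  intro y σ
  simp only [antisymmetrize, ← mul_smul_comm, Finset.smul_sum, Function.comp_apply]
  congr 1
  refine Fintype.sum_equiv (Equiv.mulLeft σ) _ _ fun τ => ?_
  simp [smul_smul, ← mul_assoc]

theorem exists_ne_zero_of_antisymmetrize_ne_zero {m : ℕ} {θ : P → (Fin m → P) → k}
    {y : Fin (m + 1) → P} (h : antisymmetrize θ y ≠ 0) :
    ∃ u x, θ u x ≠ 0 ∧ insert u (Set.range x) = Set.range y := by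
  obtain ⟨σ, -, hσ⟩ := Finset.exists_ne_zero_of_sum_ne_zero (right_ne_zero_of_mul h)
  refine ⟨_, _, right_ne_zero_of_smul hσ, ?_⟩
  rw [← Fin.range_cons, ← σ.surjective.range_comp y]
  congr 1
  exact Fin.cons_self_tail (y ∘ σ)

theorem antisymmetrize_cons [CharZero k] {m : ℕ} {θ : P → (Fin m → P) → k}
    (hθ : ∀ u, IsAlternating (θ u)) (u : P) (x : Fin m → P) :
    antisymmetrize θ (Fin.cons u x) = θ u x - ∑ j, θ (x j) (Function.update x j u) := by
  set y : Fin (m + 1) → P := Fin.cons u x with hy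
  have hterm (p : Fin (m + 1)) (e : Equiv.Perm (Fin m)) :
      sign (decomposeFin.symm (p, e)) • θ (y (decomposeFin.symm (p, e) 0))
        (fun i => y (decomposeFin.symm (p, e) i.succ)) =
      (if p = 0 then 1 else -1 : ℤˣ) • θ (y p) (fun i => y (Equiv.swap 0 p i.succ)) := by
    have hcomp : (fun i => y (decomposeFin.symm (p, e) i.succ)) =
        (fun i => y (Equiv.swap 0 p i.succ)) ∘ e := by
      ext i
      simp
    rw [hcomp, decomposeFin_symm_apply_zero, hθ, decomposeFin.symm_sign, smul_smul, mul_assoc,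
      Int.units_mul_self, mul_one]
  have hupdate (j : Fin m) : (fun i => y (Equiv.swap 0 j.succ i.succ)) = Function.update x j u := by
    ext i
    rcases eq_or_ne i j with rfl | hij
    · simp [hy]
    · rw [Function.update_of_ne hij, Equiv.swap_apply_of_ne_of_ne (Fin.succ_ne_zero _) (by simpa)]
      simp [hy]
  have hm : (m.factorial : k) ≠ 0 := Nat.cast_ne_zero.2 m.factorial_ne_zero
  rw [antisymmetrize, ← decomposeFin.symm.sum_comp, Fintype.sum_prod_type,
    inv_mul_eq_iff_eq_mul₀ hm]
  simp only [hterm, Finset.sum_const, Finset.card_univ, Fintype.card_perm, Fintype.card_fin,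
    nsmul_eq_mul, ← Finset.mul_sum]
  rw [Fin.sum_univ_succ, sub_eq_add_neg, ← Finset.sum_neg_distrib]
  simp only [hupdate]
  simp [hy, Fin.succ_ne_zero]

end Alternating

/-- A locally finite family of finite sets of points, the cells, that is convex for inclusion: a
simplicial complex relative to a subcomplex, as far as its finite stars are concerned. -/
structure CellFamily (P : Type*) where
  /-- The vertex sets of the cells. -/
  Cell : Set P → Prop
  convex {S T U : Set P} : Cell S → S ⊆ T → T ⊆ U → Cell U → Cell T
  finite_link {S : Set P} : Cell S → {v | Cell (insert v S)}.Finite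

namespace CellFamily

variable {P : Type*} (K : CellFamily P) (k : Type*) [Field k]

/-- The submodule underlying `CellFamily.Chain`. -/
def chains (m : ℕ) : Submodule k ((Fin m → P) → k) where
  carrier := {φ | IsAlternating φ ∧ ∀ x, φ x ≠ 0 → Function.Injective x ∧ K.Cell (Set.range x)}
  zero_mem' := ⟨.zero, fun _ h => absurd rfl h⟩
  add_mem' := by
    rintro φ ψ ⟨hφ, hφK⟩ ⟨hψ, hψK⟩
    refine ⟨fun x σ => by simp [hφ x σ, hψ x σ], fun x hx => ?_⟩
    by_cases h : φ x = 0
    · exact hψK x (by simpa [h] using hx)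
    · exact hφK x h
  smul_mem' := by
    rintro c φ ⟨hφ, hφK⟩
    exact ⟨fun x σ => by simp [hφ x σ, mul_smul_comm], fun x hx => hφK x (right_ne_zero_of_mul hx)⟩

/-- Locally finite chains with coefficients in `k`, written as alternating functions on the ordered
cells with `m` vertices. The degree `m` counts vertices, so that it is one more than the
dimension. -/
abbrev Chain (m : ℕ) : Type _ := K.chains k m

variable {K k} {m : ℕ}

namespace Chain

instance : CoeFun (K.Chain k m) fun _ => (Fin m → P) → k := ⟨Subtype.val⟩

@[ext]
theorem ext {φ ψ : K.Chain k m} (h : ∀ x, φ x = ψ x) : φ = ψ := Subtype.ext (funext h)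

theorem isAlternating (φ : K.Chain k m) : IsAlternating φ := φ.2.1

theorem injective (φ : K.Chain k m) {x : Fin m → P} (h : φ x ≠ 0) : Function.Injective x :=
  (φ.2.2 x h).1

theorem cell (φ : K.Chain k m) {x : Fin m → P} (h : φ x ≠ 0) : K.Cell (Set.range x) :=
  (φ.2.2 x h).2

theorem apply_eq_zero (φ : K.Chain k m) {x : Fin m → P} (h : ¬ K.Cell (Set.range x)) : φ x = 0 :=
  by_contra fun hx => h (φ.cell hx)

theorem cell_cons (φ : K.Chain k (m + 1)) {v : P} {x : Fin m → P} (h : φ (Fin.cons v x) ≠ 0) :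
    K.Cell (insert v (Set.range x)) :=
  Fin.range_cons v x ▸ φ.cell h

theorem notMem_of_cons (φ : K.Chain k (m + 1)) {v : P} {x : Fin m → P}
    (h : φ (Fin.cons v x) ≠ 0) : v ∉ Set.range x :=
  (Fin.cons_injective_iff.1 (φ.injective h)).1

theorem cons_eq_zero (φ : K.Chain k (m + 1)) {v : P} {x : Fin m → P} (h : v ∈ Set.range x) :
    φ (Fin.cons v x) = 0 :=
  by_contra fun hv => φ.notMem_of_cons hv h

theorem finite_support_cons (φ : K.Chain k (m + 1)) {x : Fin m → P} (hx : K.Cell (Set.range x)) :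
    (Function.support fun v => φ (Fin.cons v x)).Finite :=
  (K.finite_link hx).subset fun _ hv => φ.cell_cons hv

theorem smul_apply (c : k) (φ : K.Chain k m) (x : Fin m → P) : (c • φ) x = c * φ x := rfl

theorem sub_apply (φ ψ : K.Chain k m) (x : Fin m → P) : (φ - ψ) x = φ x - ψ x := rfl

theorem sum_apply {ι : Type*} (s : Finset ι) (φ : ι → K.Chain k m) (x : Fin m → P) :
    (∑ i ∈ s, φ i) x = ∑ i ∈ s, φ i x := by
  simp

/-- The chain with one more vertex obtained by antisymmetrizing a function `θ` of a point and of a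
tuple. -/
protected def antisymmetrize [CharZero k] (θ : P → (Fin m → P) → k)
    (hθ : ∀ u x, θ u x ≠ 0 → K.Cell (insert u (Set.range x))) : K.Chain k (m + 1) :=
  ⟨antisymmetrize θ, isAlternating_antisymmetrize θ, fun _ hy =>
    ⟨(isAlternating_antisymmetrize θ).injective_of_ne_zero hy, by
      obtain ⟨u, x, hne, hx⟩ := exists_ne_zero_of_antisymmetrize_ne_zero hy
      exact hx ▸ hθ u x hne⟩⟩

end Chain

open Classical in
/-- The boundary of a locally finite chain, summing over the finitely many points that extend an
ordered cell. -/
def boundary (m : ℕ) : K.Chain k (m + 1) →ₗ[k] K.Chain k m where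
  toFun φ := ⟨fun x => if K.Cell (Set.range x) then ∑ᶠ v, φ (Fin.cons v x) else 0, by
    refine ⟨fun x σ => ?_, fun x hx => ?_⟩
    · simp only [σ.surjective.range_comp, φ.isAlternating.cons_comp, smul_ite, smul_zero]
      split_ifs with h
      · exact (smul_finsum' _ (φ.finite_support_cons h)).symm
      · rfl
    · have hcell := (ite_ne_right_iff.1 hx).1
      obtain ⟨v, hv⟩ : ∃ v, φ (Fin.cons v x) ≠ 0 := by
        by_contra! h
        exact hx ((if_pos hcell).trans (finsum_eq_zero_of_forall_eq_zero h))
      exact ⟨(Fin.cons_injective_iff.1 (φ.injective hv)).2, hcell⟩⟩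
  map_add' φ ψ := by
    ext x
    by_cases h : K.Cell (Set.range x)
    · simp [h, finsum_add_distrib (φ.finite_support_cons h) (ψ.finite_support_cons h)]
    · simp [h]
  map_smul' c φ := by
    ext x
    by_cases h : K.Cell (Set.range x)
    · simp [h, mul_finsum]
    · simp [h]

theorem boundary_apply (φ : K.Chain k (m + 1)) {x : Fin m → P} (hx : K.Cell (Set.range x)) :
    boundary m φ x = ∑ᶠ v, φ (Fin.cons v x) :=
  if_pos hx

theorem boundary_apply_of_subset (φ : K.Chain k (m + 1)) {x : Fin m → P} {S : Set P}
    (hS : K.Cell S) (hSx : S ⊆ Set.range x) :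
    boundary m φ x = ∑ v ∈ (K.finite_link hS).toFinset, φ (Fin.cons v x) := by
  have hlink {v} (hv : K.Cell (insert v (Set.range x))) : K.Cell (insert v S) :=
    K.convex hS (Set.subset_insert v S) (Set.insert_subset_insert hSx) hv
  by_cases hx : K.Cell (Set.range x)
  · rw [boundary_apply φ hx]
    exact finsum_eq_sum_of_support_subset _ fun v hv => by simpa using hlink (φ.cell_cons hv)
  · rw [(boundary m φ).apply_eq_zero hx, Finset.sum_eq_zero fun v _ => ?_]
    by_contra hv
    exact hx (K.convex hS hSx (Set.subset_insert _ _) (φ.cell_cons hv))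

theorem boundary_boundary [CharZero k] (φ : K.Chain k (m + 2)) :
    boundary m (boundary (m + 1) φ) = 0 := by
  ext x
  by_cases hx : K.Cell (Set.range x)
  · let F := (K.finite_link hx).toFinset
    suffices h : ∑ u ∈ F, ∑ v ∈ F, φ (Fin.cons v (Fin.cons u x : Fin (m + 1) → P)) =
        -∑ u ∈ F, ∑ v ∈ F, φ (Fin.cons v (Fin.cons u x : Fin (m + 1) → P)) by
      rw [boundary_apply_of_subset _ hx le_rfl]
      simp only [boundary_apply_of_subset φ hx (Fin.range_cons _ x ▸ Set.subset_insert _ _)]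
      exact self_eq_neg.1 h
    conv_lhs => rw [Finset.sum_comm]
    simp only [← Finset.sum_neg_distrib]
    exact Finset.sum_congr rfl fun u _ => Finset.sum_congr rfl fun v _ =>
      φ.isAlternating.cons_cons _ _ _
  · exact (boundary m _).apply_eq_zero hx

end CellFamily

namespace CellFamily

/-- A shelling of a cell family: a partition of the cells into Boolean intervals
`[top τ \ free τ, top τ]`, one for each `τ : ι`, with a rank of the intervals that does not
increase when a cell is enlarged. -/
structure Shelling {P : Type*} (K : CellFamily P) (ι : Type*) where
  /-- The largest cell of an interval. -/
  top : ι → Set P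
  /-- The vertices that can be removed from the largest cell without leaving the interval. -/
  free : ι → Set P
  /-- The interval of a cell, with a junk value at other sets. -/
  piece : Set P → ι
  /-- The position of an interval in the shelling, counted from the last one. -/
  rank : ι → ℕ
  rank_injective : Function.Injective rank
  free_subset : ∀ τ, free τ ⊆ top τ
  subset_top {S : Set P} : K.Cell S → S ⊆ top (piece S)
  diff_subset_free {S : Set P} : K.Cell S → top (piece S) \ S ⊆ free (piece S)
  cell_and_piece_eq {S : Set P} {τ : ι} :
    S ⊆ top τ → top τ \ S ⊆ free τ → K.Cell S ∧ piece S = τ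
  rank_antitone {S T : Set P} : K.Cell S → K.Cell T → S ⊆ T → rank (piece T) ≤ rank (piece S)

namespace Shelling

variable {P ι : Type*} {K : CellFamily P} (M : K.Shelling ι)

theorem cell_insert {S : Set P} (hS : K.Cell S) {u : P} (hu : u ∈ M.top (M.piece S)) :
    K.Cell (insert u S) ∧ M.piece (insert u S) = M.piece S :=
  M.cell_and_piece_eq (Set.insert_subset hu (M.subset_top hS))
    ((Set.sdiff_subset_sdiff_right (Set.subset_insert _ _)).trans (M.diff_subset_free hS))

theorem cell_of_insert {S : Set P} {u : P} (hS : K.Cell (insert u S))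
    (hu : u ∈ M.free (M.piece (insert u S))) : K.Cell S ∧ M.piece S = M.piece (insert u S) := by
  refine M.cell_and_piece_eq ((Set.subset_insert _ _).trans (M.subset_top hS)) fun v hv => ?_
  rcases eq_or_ne v u with rfl | hvu
  · exact hu
  · exact M.diff_subset_free hS ⟨hv.1, fun h => h.elim hvu hv.2⟩

theorem piece_eq_of_subset {S T : Set P} (hS : K.Cell S) (hT : K.Cell T) (hST : S ⊆ T)
    (hr : M.rank (M.piece S) ≤ M.rank (M.piece T)) : M.piece T = M.piece S :=
  M.rank_injective ((M.rank_antitone hS hT hST).antisymm hr)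

variable {k : Type*} [Field k] {m : ℕ}

/-- The chain `φ` is supported in the intervals of rank at least `N`. -/
def SupportedFrom (N : ℕ) (φ : K.Chain k m) : Prop :=
  ∀ x, φ x ≠ 0 → N ≤ M.rank (M.piece (Set.range x))

section Cone

variable [Nonempty P]

/-- A chosen free vertex of an interval, with a junk value if there is none. -/
def apex (τ : ι) : P := Classical.epsilon (· ∈ M.free τ)

theorem apex_mem_free {τ : ι} (h : (M.free τ).Nonempty) : M.apex τ ∈ M.free τ :=
  Classical.epsilon_spec h

open Classical in
/-- The chain `φ` on the faces `x` of the cells `u ∪ x` for which `u` is the apex of the interval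
of `x`. -/
def coneForm (φ : K.Chain k m) (u : P) (x : Fin m → P) : k :=
  if u = M.apex (M.piece (Set.range x)) ∧ u ∈ M.free (M.piece (Set.range x)) then φ x else 0

theorem isAlternating_coneForm (φ : K.Chain k m) (u : P) : IsAlternating (M.coneForm φ u) := by
  intro x σ
  rw [coneForm, σ.surjective.range_comp, φ.isAlternating x σ, coneForm, smul_ite, smul_zero]

open Classical in
theorem coneForm_ne_zero {φ : K.Chain k m} {u : P} {x : Fin m → P} (h : M.coneForm φ u x ≠ 0) :
    u = M.apex (M.piece (Set.range x)) ∧ φ x ≠ 0 ∧ K.Cell (insert u (Set.range x)) ∧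
      M.piece (insert u (Set.range x)) = M.piece (Set.range x) := by
  obtain ⟨⟨hu, hfree⟩, hx⟩ := ite_ne_right_iff.1 h
  exact ⟨hu, hx, M.cell_insert (φ.cell hx) (M.free_subset _ hfree)⟩

variable [CharZero k]

/-- The chain coning the part of `φ` in each interval off to the apex of that interval. -/
def cone (φ : K.Chain k m) : K.Chain k (m + 1) :=
  Chain.antisymmetrize (M.coneForm φ) fun _ _ h => (M.coneForm_ne_zero h).2.2.1

theorem SupportedFrom.cone {N : ℕ} {φ : K.Chain k m} (hφ : M.SupportedFrom N φ) :
    M.SupportedFrom N (M.cone φ) := by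
  intro y hy
  obtain ⟨u, x, hne, hxy⟩ := exists_ne_zero_of_antisymmetrize_ne_zero hy
  obtain ⟨-, hx, -, hpiece⟩ := M.coneForm_ne_zero hne
  rw [← hxy, hpiece]
  exact hφ x hx

open Classical in
theorem cone_cons {φ : K.Chain k m} {S : Set P} (hS : K.Cell S)
    (hφ : M.SupportedFrom (M.rank (M.piece S)) φ) (hapex : M.apex (M.piece S) ∈ M.free (M.piece S))
    {x : Fin m → P} (hSx : S ⊆ Set.range x) (hx : M.apex (M.piece S) ∉ Set.range x) (w : P) :
    M.cone φ (Fin.cons w x) = if w = M.apex (M.piece S) then φ x else 0 := by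
  have hpiece {y : Fin m → P} (hy : φ y ≠ 0) {u : P} (hu : M.coneForm φ u y ≠ 0)
      (hSy : S ⊆ insert u (Set.range y)) : M.piece (Set.range y) = M.piece S := by
    obtain ⟨-, -, hcell, heq⟩ := M.coneForm_ne_zero hu
    rw [← heq]
    exact M.piece_eq_of_subset hS hcell hSy (heq ▸ hφ y hy)
  have hsum (j : Fin m) : M.coneForm φ (x j) (Function.update x j w) = 0 := by
    by_contra hj
    obtain ⟨hxj, hy, -⟩ := M.coneForm_ne_zero hj
    refine hx ⟨j, hxj.trans (congrArg M.apex (hpiece hy hj (hSx.trans ?_)))⟩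
    rintro _ ⟨i, rfl⟩
    rcases eq_or_ne i j with rfl | hij
    · exact Set.mem_insert _ _
    · exact Or.inr ⟨i, Function.update_of_ne hij _ _⟩
  refine (antisymmetrize_cons (M.isAlternating_coneForm φ) w x).trans ?_
  rw [Finset.sum_eq_zero fun j _ => hsum j, sub_zero, coneForm]
  by_cases hφx : φ x = 0
  · simp [hφx]
  · rw [M.piece_eq_of_subset hS (φ.cell hφx) hSx (hφ x hφx)]
    refine if_congr (and_iff_left_of_imp ?_) rfl rfl
    rintro rfl
    exact hapex

theorem boundary_cone_of_notMem {φ : K.Chain k m} {x : Fin m → P} (hx : K.Cell (Set.range x))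
    (hφ : M.SupportedFrom (M.rank (M.piece (Set.range x))) φ)
    (hapex : M.apex (M.piece (Set.range x)) ∈ M.free (M.piece (Set.range x)))
    (hux : M.apex (M.piece (Set.range x)) ∉ Set.range x) : boundary m (M.cone φ) x = φ x := by
  rw [boundary_apply _ hx]
  simp_rw [M.cone_cons hx hφ hapex le_rfl hux]
  exact (finsum_eq_single _ _ fun v hv => if_neg hv).trans (if_pos rfl)

theorem boundary_cone_cons_apex {φ : K.Chain k (m + 1)} (hφ : boundary m φ = 0) {y : Fin m → P}
    (hy : K.Cell (Set.range y)) (hφy : M.SupportedFrom (M.rank (M.piece (Set.range y))) φ)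
    (hapex : M.apex (M.piece (Set.range y)) ∈ M.free (M.piece (Set.range y)))
    (huy : M.apex (M.piece (Set.range y)) ∉ Set.range y) :
    boundary (m + 1) (M.cone φ) (Fin.cons (M.apex (M.piece (Set.range y))) y) =
      φ (Fin.cons (M.apex (M.piece (Set.range y))) y) := by
  classical
  set u := M.apex (M.piece (Set.range y)) with hu
  have hcell : K.Cell (Set.range (Fin.cons u y : Fin (m + 1) → P)) :=
    Fin.range_cons u y ▸ (M.cell_insert hy (M.free_subset _ hapex)).1
  have hterm (v : P) : M.cone φ (Fin.cons v (Fin.cons u y : Fin (m + 1) → P)) =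
      -φ (Fin.cons v y) + Pi.single (M := fun _ => k) u (φ (Fin.cons u y)) v := by
    rcases eq_or_ne v u with rfl | hvu
    · simp [(M.cone φ).cons_eq_zero ⟨0, Fin.cons_zero _ _⟩]
    · have hux : u ∉ Set.range (Fin.cons v y : Fin (m + 1) → P) := by
        rw [Fin.range_cons]
        exact fun h => h.elim hvu.symm huy
      rw [(M.cone φ).isAlternating.cons_cons, M.cone_cons hy hφy hapex
        (Fin.range_cons v y ▸ Set.subset_insert _ _) hux, if_pos hu, Pi.single_eq_of_ne hvu,
        add_zero]
  have hsum : ∑ᶠ v, φ (Fin.cons v y) = 0 := by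
    rw [← boundary_apply φ hy, hφ]
    rfl
  rw [boundary_apply _ hcell]
  simp_rw [hterm]
  rw [finsum_add_distrib (Function.HasFiniteSupport.fun_neg (φ.finite_support_cons hy))
    ((Set.finite_singleton u).subset Pi.support_single_subset), finsum_neg_distrib, hsum,
    finsum_eq_single _ u fun v hv => Pi.single_eq_of_ne hv _]
  simp

theorem boundary_cone {φ : K.Chain k (m + 1)} (hφ : boundary m φ = 0) {x : Fin (m + 1) → P}
    (hx : K.Cell (Set.range x)) (hφx : M.SupportedFrom (M.rank (M.piece (Set.range x))) φ)
    (hfree : (M.free (M.piece (Set.range x))).Nonempty) :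
    boundary (m + 1) (M.cone φ) x = φ x := by
  have hapex := M.apex_mem_free hfree
  by_cases hux : M.apex (M.piece (Set.range x)) ∈ Set.range x
  · refine (Chain.isAlternating _).eq_of_forall_cons φ.isAlternating hux fun y hy => ?_
    by_cases huy : M.apex (M.piece (Set.range x)) ∈ Set.range y
    · rw [Chain.cons_eq_zero _ huy, Chain.cons_eq_zero _ huy]
    · obtain ⟨hyc, hyp⟩ := M.cell_of_insert (hy ▸ hx) (by rwa [hy])
      rw [hy] at hyp
      rw [← hyp] at hapex hφx huy ⊢
      exact M.boundary_cone_cons_apex hφ hyc hφx hapex huy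
  · exact M.boundary_cone_of_notMem hx hφx hapex hux

theorem SupportedFrom.sub_boundary_cone {N : ℕ} {φ : K.Chain k (m + 1)}
    (hφN : M.SupportedFrom N φ) (hφ : boundary m φ = 0)
    (hfree : ∀ x : Fin (m + 1) → P, K.Cell (Set.range x) →
      (M.free (M.piece (Set.range x))).Nonempty) :
    M.SupportedFrom (N + 1) (φ - boundary (m + 1) (M.cone φ)) := by
  intro x hx
  by_contra! hlt
  have hcell := Chain.cell _ hx
  rcases (Nat.lt_succ_iff.1 hlt).eq_or_lt with rfl | hlt
  · exact hx (sub_eq_zero.2 (M.boundary_cone hφ hcell hφN (hfree x hcell)).symm)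
  · have hzero {n : ℕ} {ψ : K.Chain k n} (hψ : M.SupportedFrom N ψ) {y : Fin n → P}
        (hxy : Set.range x ⊆ Set.range y) : ψ y = 0 := by
      by_contra hy
      exact ((hψ y hy).trans (M.rank_antitone hcell (ψ.cell hy) hxy)).not_gt hlt
    refine hx (sub_eq_zero.2 ?_)
    rw [hzero hφN le_rfl, boundary_apply _ hcell]
    exact (finsum_eq_zero_of_forall_eq_zero fun v =>
      hzero hφN.cone (Fin.range_cons v x ▸ Set.subset_insert _ _)).symm

end Cone

/-- A sum of chains supported in higher and higher intervals is finite on each cell. -/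
def glue (ψ : ℕ → K.Chain k m) : K.Chain k m :=
  ⟨fun y => ∑ N ∈ Finset.range (M.rank (M.piece (Set.range y)) + 1), ψ N y,
    fun x σ => by
      simp only [σ.surjective.range_comp, Finset.smul_sum, (ψ _).isAlternating x σ],
    fun x hx => by
      obtain ⟨N, -, hN⟩ := Finset.exists_ne_zero_of_sum_ne_zero hx
      exact ⟨(ψ N).injective hN, (ψ N).cell hN⟩⟩

theorem boundary_glue {ψ : ℕ → K.Chain k (m + 1)} (hψ : ∀ N, M.SupportedFrom N (ψ N))
    {x : Fin m → P} (hx : K.Cell (Set.range x)) : boundary m (M.glue ψ) x =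
      ∑ N ∈ Finset.range (M.rank (M.piece (Set.range x)) + 1), boundary m (ψ N) x := by
  rw [← Chain.sum_apply, ← map_sum, boundary_apply _ hx, boundary_apply _ hx]
  refine finsum_congr fun v => ?_
  rw [Chain.sum_apply]
  by_cases hc : K.Cell (Set.range (Fin.cons v x : Fin (m + 1) → P))
  · have hr := M.rank_antitone hx hc (Fin.range_cons v x ▸ Set.subset_insert _ _)
    refine Finset.sum_subset (Finset.range_mono (Nat.succ_le_succ hr)) fun N _ hN => ?_
    by_contra hne
    exact hN (Finset.mem_range_succ_iff.2 (hψ N _ hne))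
  · rw [Chain.apply_eq_zero _ hc, Finset.sum_eq_zero fun N _ => Chain.apply_eq_zero _ hc]

theorem exists_boundary_eq [CharZero k] {φ : K.Chain k (m + 1)} (hφ : boundary m φ = 0)
    (hfree : ∀ x : Fin (m + 1) → P, K.Cell (Set.range x) →
      (M.free (M.piece (Set.range x))).Nonempty) :
    ∃ ψ : K.Chain k (m + 2), boundary (m + 1) ψ = φ := by
  rcases isEmpty_or_nonempty P with hP | hP
  · exact ⟨0, by ext x; exact hP.elim (x 0)⟩
  let residue (N : ℕ) : K.Chain k (m + 1) := (fun χ => χ - boundary (m + 1) (M.cone χ))^[N] φ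
  have residue_succ (N : ℕ) :
      residue (N + 1) = residue N - boundary (m + 1) (M.cone (residue N)) :=
    Function.iterate_succ_apply' _ _ _
  have hresidue (N : ℕ) : boundary m (residue N) = 0 ∧ M.SupportedFrom N (residue N) := by
    induction N with
    | zero => exact ⟨hφ, fun _ _ => Nat.zero_le _⟩
    | succ N ih =>
      rw [residue_succ, map_sub, boundary_boundary, sub_zero]
      exact ⟨ih.1, ih.2.sub_boundary_cone M ih.1 hfree⟩
  refine ⟨M.glue fun N => M.cone (residue N), Chain.ext fun x => ?_⟩
  by_cases hx : K.Cell (Set.range x)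
  · have hterm (N : ℕ) :
        boundary (m + 1) (M.cone (residue N)) x = residue N x - residue (N + 1) x := by
      rw [residue_succ, Chain.sub_apply, sub_sub_cancel]
    rw [M.boundary_glue (fun N => (hresidue N).2.cone) hx]
    simp_rw [hterm]
    rw [Finset.sum_range_sub']
    refine sub_eq_self.2 (by_contra fun hne => ?_)
    exact ((hresidue _).2 x hne).not_gt (Nat.lt_succ_self _)
  · rw [Chain.apply_eq_zero _ hx, Chain.apply_eq_zero _ hx]

theorem eq_zero_of_boundary_eq_zero {φ : K.Chain k (m + 1)} (hφ : boundary m φ = 0)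
    (htop : ∀ x : Fin (m + 1) → P, Function.Injective x → K.Cell (Set.range x) →
      Set.range x = M.top (M.piece (Set.range x)))
    (hfree : ∀ x, M.free (M.piece (Set.range x)) = ∅ → φ x = 0) : φ = 0 := by
  suffices key : ∀ N x, M.rank (M.piece (Set.range x)) = N → φ x = 0 from
    Chain.ext fun x => key _ x rfl
  intro N
  induction N using Nat.strong_induction_on with
  | _ N ih =>
    intro x hxN
    by_contra hne
    obtain ⟨u, hu⟩ := Set.nonempty_iff_ne_empty.2 fun h => hne (hfree x h)
    have htopx := htop x (φ.injective hne) (φ.cell hne)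
    have hux : u ∈ Set.range x := htopx.symm.subset (M.free_subset _ hu)
    refine hne (φ.isAlternating.eq_of_forall_cons .zero hux fun y hy => ?_)
    obtain ⟨hyc, hyp⟩ := M.cell_of_insert (hy ▸ φ.cell hne) (hy ▸ hu)
    rw [hy] at hyp
    have hsum : ∑ᶠ v, φ (Fin.cons v y) = 0 := by
      rw [← boundary_apply φ hyc, hφ]
      rfl
    refine (finsum_eq_single _ u fun v hvu => ?_).symm.trans hsum
    by_contra hv
    have hvc := φ.cell hv
    have hsub : Set.range y ⊆ Set.range (Fin.cons v y : Fin (m + 1) → P) :=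
      Fin.range_cons v y ▸ Set.subset_insert _ _
    rcases (M.rank_antitone hyc hvc hsub).lt_or_eq with hlt | heq
    · exact hv (ih _ (hlt.trans_eq ((congrArg M.rank hyp).trans hxN)) _ rfl)
    · have htopv := htop _ (φ.injective hv) hvc
      rw [M.rank_injective heq, hyp, ← htopx, ← hy, Fin.range_cons] at htopv
      exact (htopv ▸ Set.mem_insert v _ : v ∈ insert u (Set.range y)).elim hvu
        (φ.notMem_of_cons hv)

end Shelling

open scoped Pointwise

/-- The cells of the family are permuted by the group `G`. -/
class IsInvariant {P : Type*} (K : CellFamily P) (G : Type*) [Group G] [MulAction G P] : Prop where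
  smul_cell : ∀ (g : G) {S : Set P}, K.Cell S → K.Cell (g • S)

section Rep

variable {k G P : Type*} [Field k] [Group G] [MulAction G P] {K : CellFamily P}
  [K.IsInvariant G] {m : ℕ}

theorem cell_smul_iff (g : G) {S : Set P} : K.Cell (g • S) ↔ K.Cell S :=
  ⟨fun h => inv_smul_smul g S ▸ IsInvariant.smul_cell g⁻¹ h, IsInvariant.smul_cell g⟩

theorem cell_range_smul_iff (g : G) {x : Fin m → P} :
    K.Cell (Set.range (g • x)) ↔ K.Cell (Set.range x) := by
  rw [← cell_smul_iff g (S := Set.range x)]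
  exact iff_of_eq (congrArg K.Cell (Set.range_smul g x))

/-- The action of `G` on chains, twisted by the character `χ`. -/
def chainRep (χ : G →* k) (m : ℕ) : Representation k G (K.Chain k m) where
  toFun g :=
    { toFun := fun φ => ⟨fun x => χ g * φ (g⁻¹ • x), by
        refine ⟨fun x σ => ?_, fun x hx => ?_⟩
        · have : g⁻¹ • (x ∘ σ) = (g⁻¹ • x) ∘ σ := rfl
          simp only [this, φ.isAlternating (g⁻¹ • x), mul_smul_comm]
        · have h := right_ne_zero_of_mul hx
          exact ⟨fun i j hij => φ.injective h (by simp [hij]),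
            (cell_range_smul_iff g⁻¹).1 (φ.cell h)⟩⟩
      map_add' := fun φ ψ => by ext x; simp [mul_add]
      map_smul' := fun c φ => by ext x; simp [mul_left_comm] }
  map_one' := by ext φ x; simp
  map_mul' g h := by ext φ x; simp [mul_smul, mul_assoc]

variable (χ : G →* k)

theorem chainRep_apply (g : G) (φ : K.Chain k m) (x : Fin m → P) :
    chainRep χ m g φ x = χ g * φ (g⁻¹ • x) := rfl

theorem boundary_chainRep (g : G) (φ : K.Chain k (m + 1)) :
    boundary m (chainRep χ (m + 1) g φ) = chainRep χ m g (boundary m φ) := by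
  ext x
  rw [chainRep_apply]
  by_cases hx : K.Cell (Set.range x)
  · have hgx : K.Cell (Set.range (g⁻¹ • x)) := (cell_range_smul_iff g⁻¹).2 hx
    rw [boundary_apply _ hx, boundary_apply _ hgx, mul_finsum]
    refine Eq.trans (finsum_congr fun v => ?_)
      (finsum_comp_equiv (MulAction.toPerm g⁻¹) (f := fun v => χ g * φ (Fin.cons v (g⁻¹ • x))))
    refine congrArg (fun y => χ g * φ y) (funext fun i => ?_)
    refine Fin.cases ?_ (fun j => ?_) i <;> simp
  · have hgx : ¬ K.Cell (Set.range (g⁻¹ • x)) := (cell_range_smul_iff g⁻¹).not.2 hx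
    rw [Chain.apply_eq_zero _ hx, Chain.apply_eq_zero _ hgx, mul_zero]

/-- The boundary as a map of representations. -/
def boundaryHom (m : ℕ) : (chainRep (K := K) χ (m + 1)).IntertwiningMap
    (chainRep (K := K) χ m) where
  toLinearMap := boundary m
  isIntertwining' g := LinearMap.ext (boundary_chainRep χ g)

variable {χ}

theorem boundary_mem_invariants {φ : K.Chain k (m + 1)}
    (hφ : φ ∈ (chainRep χ (m + 1)).invariants) :
    boundary m φ ∈ (chainRep (K := K) χ m).invariants :=
  fun g => (boundary_chainRep χ g φ).symm.trans (congrArg (boundary m) (hφ g))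

theorem Chain.antisymmetrize_mem_invariants [CharZero k] {θ : P → (Fin m → P) → k}
    (hθ : ∀ u x, θ u x ≠ 0 → K.Cell (insert u (Set.range x)))
    (hθχ : ∀ (g : G) u x, χ g * θ (g⁻¹ • u) (g⁻¹ • x) = θ u x) :
    Chain.antisymmetrize θ hθ ∈ (chainRep χ (m + 1)).invariants := by
  refine fun g => Chain.ext fun y => ?_
  refine (mul_left_comm _ _ _).trans (congrArg _ ((Finset.mul_sum _ _ _).trans ?_))
  refine Finset.sum_congr rfl fun σ _ => ?_
  rw [mul_smul_comm]
  exact congrArg _ (hθχ g (y (σ 0)) fun i => y (σ i.succ))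

/-- The pointwise fixator of the cell `x` does not lie in the kernel of `χ`, so that invariant
chains vanish on `x`. -/
def IsFlipped (χ : G →* k) (x : Fin m → P) : Prop := ∃ g : G, g • x = x ∧ χ g = -1

theorem IsFlipped.apply_eq_zero [CharZero k] {x : Fin m → P} (hx : IsFlipped χ x)
    {φ : K.Chain k m} (hφ : φ ∈ (chainRep χ m).invariants) : φ x = 0 := by
  obtain ⟨g, hgx, hχ⟩ := hx
  have h : χ g * φ (g⁻¹ • x) = φ x := congrArg (fun ψ : K.Chain k m => ψ x) (hφ g)
  rw [inv_smul_eq_iff.2 hgx.symm, hχ, neg_one_mul] at h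
  exact self_eq_neg.1 h.symm

end Rep

section Average

variable {k G P : Type*} [Field k] [CharZero k] {K : CellFamily P} {m : ℕ}

/-- The mean of the values at `x` of the chains `F γ`, over the elements `γ` of a set `A S` that
depends only on the set `S` of vertices of `x`. It is `0` where `A S` is infinite. -/
def average (A : Set P → Set G) : (G → K.Chain k m) →ₗ[k] K.Chain k m where
  toFun F := ⟨fun x => ((A (Set.range x)).ncard : k)⁻¹ * ∑ᶠ γ ∈ A (Set.range x), F γ x, by
    refine ⟨fun x σ => ?_, fun x hx => ?_⟩
    · simp only [σ.surjective.range_comp, (F _).isAlternating x σ, Units.smul_def, zsmul_eq_mul,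
        ← mul_finsum_mem, mul_left_comm]
    · obtain ⟨γ, -, hγ⟩ := exists_ne_zero_of_finsum_mem_ne_zero (right_ne_zero_of_mul hx)
      exact ⟨(F γ).injective hγ, (F γ).cell hγ⟩⟩
  map_add' F F' := by
    ext x
    by_cases h : (A (Set.range x)).Finite
    · simp [finsum_mem_add_distrib h, mul_add]
    · simp [Set.Infinite.ncard h]
  map_smul' c F := by
    ext x
    simp [mul_finsum_mem, mul_left_comm c]

variable {A : Set P → Set G}

theorem average_apply (F : G → K.Chain k m) (x : Fin m → P) :
    average A F x = ((A (Set.range x)).ncard : k)⁻¹ * ∑ᶠ γ ∈ A (Set.range x), F γ x := rfl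

theorem average_apply_eq_of_forall {F : G → K.Chain k m} {x : Fin m → P} {c : k}
    (hfin : (A (Set.range x)).Finite) (hne : (A (Set.range x)).Nonempty)
    (hF : ∀ γ ∈ A (Set.range x), F γ x = c) : average A F x = c := by
  rw [average_apply, finsum_mem_congr rfl hF, finsum_mem_eq_finite_toFinset_sum _ hfin,
    Finset.sum_const, ← Set.ncard_eq_toFinset_card _ hfin, nsmul_eq_mul,
    inv_mul_cancel_left₀ (Nat.cast_ne_zero.2 ((Set.ncard_pos hfin).2 hne).ne')]

theorem boundary_average_apply (F : G → K.Chain k (m + 1)) {x : Fin m → P}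
    (hx : K.Cell (Set.range x)) (hfin : (A (Set.range x)).Finite)
    (hA : ∀ v, K.Cell (insert v (Set.range x)) → A (insert v (Set.range x)) = A (Set.range x)) :
    boundary m (average A F) x = average A (fun γ => boundary m (F γ)) x := by
  have hterm : ∀ v ∈ (K.finite_link hx).toFinset, average A F (Fin.cons v x) =
      ((A (Set.range x)).ncard : k)⁻¹ * ∑ γ ∈ hfin.toFinset, F γ (Fin.cons v x) := fun v hv => by
    rw [average_apply, Fin.range_cons, hA v (by simpa using hv),
      finsum_mem_eq_finite_toFinset_sum _ hfin]
  rw [boundary_apply_of_subset _ hx le_rfl, Finset.sum_congr rfl hterm, ← Finset.mul_sum,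
    Finset.sum_comm, average_apply, finsum_mem_eq_finite_toFinset_sum _ hfin]
  simp only [boundary_apply_of_subset _ hx le_rfl]

variable [Group G] [MulAction G P] [K.IsInvariant G] {χ : G →* k}

theorem chainRep_average (hA : ∀ (g γ : G) S, g * γ ∈ A (g • S) ↔ γ ∈ A S) (h : G)
    (F : G → K.Chain k m) :
    chainRep χ m h (average A F) = average A fun γ => chainRep χ m h (F (h⁻¹ * γ)) := by
  ext x
  have himage : A (Set.range x) = (h * ·) '' A (h⁻¹ • Set.range x) := by
    ext γ
    simpa using (hA h⁻¹ γ (Set.range x)).symm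
  have hrange : Set.range (h⁻¹ • x) = h⁻¹ • Set.range x := Set.range_smul _ _
  rw [chainRep_apply, average_apply, average_apply, hrange, himage,
    finsum_mem_image (mul_right_injective h).injOn,
    Set.ncard_image_of_injective _ (mul_right_injective h), mul_left_comm, mul_finsum_mem]
  simp [chainRep_apply]

theorem subsingleton_groupCohomology_chainRep {k G P : Type u} [Field k] [CharZero k] [Group G]
    [MulAction G P] {K : CellFamily P} [K.IsInvariant G] (χ : G →* k)
    (hK : ∀ S, K.Cell S → Finite (MulAction.stabilizer G S)) (m n : ℕ) :
    Subsingleton (groupCohomology (Rep.of (chainRep (K := K) χ m)) (n + 1)) := by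
  let rep (S : Set P) : Set P := (Quotient.mk (MulAction.orbitRel G (Set P)) S).out
  have hrep (g : G) (S : Set P) : rep (g • S) = rep S :=
    congrArg Quotient.out (Quotient.sound ⟨g, rfl⟩)
  let A (S : Set P) : Set G := {γ | γ • rep S = S}
  have hA (g γ : G) (S : Set P) : g * γ ∈ A (g • S) ↔ γ ∈ A S := by
    simp [A, hrep, mul_smul]
  have hne (S : Set P) : (A S).Nonempty :=
    (MulAction.orbitRel G (Set P)).symm (Quotient.mk_out (s := MulAction.orbitRel G (Set P)) S)
  have hfin {S : Set P} (hS : K.Cell S) : (A S).Finite := by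
    obtain ⟨γ₀, hγ₀⟩ := hne S
    have := hK S hS
    refine ((Set.toFinite (MulAction.stabilizer G S : Set G)).preimage
      (mul_left_injective γ₀⁻¹).injOn).subset fun γ hγ => ?_
    exact (mul_smul γ γ₀⁻¹ S).trans ((congrArg (γ • ·) (inv_smul_eq_iff.2 hγ₀.symm)).trans hγ)
  let r : (G → K.Chain k m) →ₗ[k] K.Chain k m :=
    average A ∘ₗ LinearMap.pi fun γ => chainRep χ m γ ∘ₗ LinearMap.proj γ⁻¹
  refine subsingleton_groupCohomology_succ_of_retract _ r (fun φ => ?_) (fun h F => ?_) n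
  · ext x
    by_cases hx : K.Cell (Set.range x)
    · exact average_apply_eq_of_forall (hfin hx) (hne _) fun γ _ => by simp
    · rw [Chain.apply_eq_zero _ hx, Chain.apply_eq_zero _ hx]
  · refine Eq.trans (congrArg (average A) (funext fun γ => ?_)) (chainRep_average hA h _).symm
    simp [← Module.End.mul_apply, ← map_mul]

theorem exists_mem_invariants_boundary_eq_of_mem_orbit {c : P} [Finite (MulAction.stabilizer G c)]
    (hc : ∀ S, K.Cell S → (MulAction.orbit G c ∩ S).Subsingleton) (φ : K.Chain k (m + 1))
    (hφ : boundary m φ ∈ (chainRep χ m).invariants) :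
    ∃ ψ : K.Chain k (m + 1), ψ ∈ (chainRep χ (m + 1)).invariants ∧ ∀ x : Fin m → P,
      (MulAction.orbit G c ∩ Set.range x).Nonempty → boundary m ψ x = boundary m φ x := by
  let A (S : Set P) : Set G := {γ | γ • c ∈ S}
  have hA (g γ : G) (S : Set P) : g * γ ∈ A (g • S) ↔ γ ∈ A S := by
    simp [A, mul_smul]
  refine ⟨average A fun γ => chainRep χ (m + 1) γ φ, fun g => ?_, ?_⟩
  · rw [chainRep_average hA]
    simp [← Module.End.mul_apply, ← map_mul]
  rintro x ⟨_, ⟨γ₀, rfl⟩, hγ₀⟩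
  by_cases hx : K.Cell (Set.range x)
  · have hfin : (A (Set.range x)).Finite := by
      refine ((Set.toFinite (MulAction.stabilizer G c : Set G)).preimage
        (mul_right_injective γ₀⁻¹).injOn).subset fun γ hγ => ?_
      simpa [mul_smul, inv_smul_eq_iff] using hc _ hx ⟨⟨γ, rfl⟩, hγ⟩ ⟨⟨γ₀, rfl⟩, hγ₀⟩
    rw [boundary_average_apply _ hx hfin fun v hv => ?_]
    · refine average_apply_eq_of_forall hfin ⟨γ₀, hγ₀⟩ fun γ _ => ?_
      rw [boundary_chainRep, hφ γ]
    · refine Set.Subset.antisymm (fun γ hγ => ?_) fun γ hγ => Set.mem_insert_of_mem _ hγ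
      have heq : γ • c = γ₀ • c :=
        hc _ hv ⟨⟨γ, rfl⟩, hγ⟩ ⟨⟨γ₀, rfl⟩, Set.mem_insert_of_mem _ hγ₀⟩
      exact (heq ▸ hγ₀ : γ • c ∈ Set.range x)
  · rw [Chain.apply_eq_zero _ hx, Chain.apply_eq_zero _ hx]

end Average

section LinkCone

variable {k G P : Type*} [Field k] {K : CellFamily P} {C : Set P} {m : ℕ}

/-- The points outside `C` that extend the cell `S` properly. -/
def outerLink (K : CellFamily P) (C S : Set P) : Set P := {v | v ∉ C ∧ v ∉ S ∧ K.Cell (insert v S)}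

/-- The cone over the chain `φ` whose apex over each cell is the mean of the points of its outer
link, as a function of the apex and of the ordered cell. -/
def linkCone (C : Set P) (φ : K.Chain k m) (u : P) (x : Fin m → P) : k :=
  (K.outerLink C (Set.range x)).indicator
    (fun _ => ((K.outerLink C (Set.range x)).ncard : k)⁻¹ * φ x) u

theorem linkCone_isAlternating (φ : K.Chain k m) (u : P) : IsAlternating (linkCone C φ u) := by
  intro x σ
  simp only [linkCone, σ.surjective.range_comp, φ.isAlternating x σ, mul_smul_comm]
  exact Set.indicator_const_smul_apply _ _ _ _

theorem mem_outerLink_of_linkCone_ne_zero {φ : K.Chain k m} {u : P} {x : Fin m → P}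
    (h : linkCone C φ u x ≠ 0) : u ∈ K.outerLink C (Set.range x) :=
  Set.mem_of_indicator_ne_zero h

theorem apply_ne_zero_of_linkCone_ne_zero {φ : K.Chain k m} {u : P} {x : Fin m → P}
    (h : linkCone C φ u x ≠ 0) : φ x ≠ 0 := by
  rw [linkCone, Set.indicator_of_mem (mem_outerLink_of_linkCone_ne_zero h)] at h
  exact right_ne_zero_of_mul h

theorem finsum_linkCone [CharZero k] (φ : K.Chain k m) {x : Fin m → P}
    (hx : K.Cell (Set.range x)) (hne : (K.outerLink C (Set.range x)).Nonempty) :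
    ∑ᶠ u, linkCone C φ u x = φ x := by
  have hfin : (K.outerLink C (Set.range x)).Finite :=
    (K.finite_link hx).subset fun v hv => hv.2.2
  simp only [linkCone]
  rw [← finsum_mem_def, finsum_mem_eq_finite_toFinset_sum _ hfin, Finset.sum_const,
    ← Set.ncard_eq_toFinset_card _ hfin, nsmul_eq_mul,
    mul_inv_cancel_left₀ (Nat.cast_ne_zero.2 ((Set.ncard_pos hfin).2 hne).ne')]

theorem mem_outerLink_of_mem_outerLink_update {x : Fin m → P} {j : Fin m} {v : P} (hv : v ∉ C)
    (hinj : Function.Injective (Function.update x j v))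
    (h : x j ∈ K.outerLink C (Set.range (Function.update x j v))) :
    v ∈ K.outerLink C (Set.range x) := by
  refine ⟨hv, ?_, ?_⟩
  · rintro ⟨i, rfl⟩
    rcases eq_or_ne i j with rfl | hij
    · exact h.2.1 ⟨i, by simp⟩
    · exact hij (hinj (by simp [hij]))
  · have hset : insert v (Set.range x) = insert (x j) (Set.range (Function.update x j v)) := by
      rw [← Fin.range_cons, ← Fin.range_cons, ← (Equiv.swap 0 j.succ).surjective.range_comp]
      refine congrArg Set.range (funext (Fin.cases (by simp) fun i => ?_))
      rcases eq_or_ne i j with rfl | hij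
      · simp
      · simp [hij, Equiv.swap_apply_of_ne_of_ne]
    exact hset ▸ h.2.2

variable [Group G] [MulAction G P] [K.IsInvariant G]

theorem outerLink_smul (hC : ∀ g : G, g • C = C) (g : G) (S : Set P) :
    K.outerLink C (g • S) = g • K.outerLink C S := by
  have hCmem (v : P) : g⁻¹ • v ∈ C ↔ v ∈ C := by rw [← Set.mem_smul_set_iff_inv_smul_mem, hC]
  ext v
  rw [Set.mem_smul_set_iff_inv_smul_mem]
  simp only [outerLink, Set.mem_ofPred_eq, hCmem, Set.mem_smul_set_iff_inv_smul_mem]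
  rw [← cell_smul_iff (K := K) g (S := insert (g⁻¹ • v) S), Set.smul_set_insert, smul_inv_smul]

variable {χ : G →* k}

theorem linkCone_smul (hC : ∀ g : G, g • C = C) {φ : K.Chain k m}
    (hφ : φ ∈ (chainRep χ m).invariants) (g : G) (u : P) (x : Fin m → P) :
    χ g * linkCone C φ (g⁻¹ • u) (g⁻¹ • x) = linkCone C φ u x := by
  have hr : Set.range (g⁻¹ • x) = g⁻¹ • Set.range x := Set.range_smul _ _
  have h : χ g * φ (g⁻¹ • x) = φ x := congrArg (fun ψ : K.Chain k m => ψ x) (hφ g)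
  by_cases hu : u ∈ K.outerLink C (Set.range x)
  · simp [linkCone, hr, outerLink_smul hC, Set.ncard_smul_set, hu, mul_left_comm, h]
  · simp [linkCone, hr, outerLink_smul hC, hu]

theorem linkCone_update_eq_zero [CharZero k] {φ : K.Chain k m}
    (hφ : φ ∈ (chainRep χ m).invariants) (hφC : ∀ x, ¬ Disjoint C (Set.range x) → φ x = 0)
    {x : Fin m → P} (hx : ∀ u ∈ K.outerLink C (Set.range x), ∀ j,
      K.Cell (Set.range (Function.update x j u)) → IsFlipped χ (Function.update x j u))
    (v : P) (j : Fin m) : linkCone C φ (x j) (Function.update x j v) = 0 := by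
  by_contra h
  have hne := apply_ne_zero_of_linkCone_ne_zero h
  have hv : v ∉ C := fun hv =>
    hne (hφC _ (Set.not_disjoint_iff.2 ⟨v, hv, j, Function.update_self j v x⟩))
  have hvx := mem_outerLink_of_mem_outerLink_update hv (φ.injective hne)
    (mem_outerLink_of_linkCone_ne_zero h)
  exact hne ((hx v hvx j (φ.cell hne)).apply_eq_zero hφ)

/-- Coning off `φ` works except for the correction terms of the antisymmetrization, which are
supported on cells obtained by exchanging a vertex. The last hypothesis kills them. -/
theorem exists_mem_invariants_boundary_eq_of_disjoint [CharZero k] (hC : ∀ g : G, g • C = C)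
    (hlink : ∀ S, K.Cell S → Disjoint C S → S.ncard = m → (K.outerLink C S).Nonempty)
    (hflip : ∀ x : Fin m → P, Function.Injective x → K.Cell (Set.range x) →
      Disjoint C (Set.range x) → IsFlipped χ x ∨ ∀ u ∈ K.outerLink C (Set.range x), ∀ j,
        K.Cell (Set.range (Function.update x j u)) → IsFlipped χ (Function.update x j u))
    {φ : K.Chain k m} (hφ : φ ∈ (chainRep χ m).invariants)
    (hφC : ∀ x, ¬ Disjoint C (Set.range x) → φ x = 0) :
    ∃ ψ : K.Chain k (m + 1), ψ ∈ (chainRep χ (m + 1)).invariants ∧ boundary m ψ = φ := by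
  let ψ : K.Chain k (m + 1) := Chain.antisymmetrize (linkCone C φ) fun u x h =>
    (mem_outerLink_of_linkCone_ne_zero h).2.2
  have hψ : ψ ∈ (chainRep χ (m + 1)).invariants :=
    Chain.antisymmetrize_mem_invariants _ (linkCone_smul hC hφ)
  have hcons (v : P) (x : Fin m → P) : ψ (Fin.cons v x) =
      linkCone C φ v x - ∑ j, linkCone C φ (x j) (Function.update x j v) :=
    antisymmetrize_cons (linkCone_isAlternating φ) v x
  refine ⟨ψ, hψ, Chain.ext fun x => ?_⟩
  by_cases hx : Function.Injective x ∧ K.Cell (Set.range x)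
  swap
  · rw [not_imp_comm.1 (fun h => ⟨φ.injective h, φ.cell h⟩) hx,
      not_imp_comm.1 (fun h => ⟨(boundary m ψ).injective h, (boundary m ψ).cell h⟩) hx]
  obtain ⟨hinj, hcell⟩ := hx
  by_cases hdisj : Disjoint C (Set.range x)
  · obtain hf | hf := hflip x hinj hcell hdisj
    · rw [hf.apply_eq_zero hφ, hf.apply_eq_zero (boundary_mem_invariants hψ)]
    · simp only [boundary_apply ψ hcell, hcons, linkCone_update_eq_zero hφ hφC hf,
        Finset.sum_const_zero, sub_zero]
      refine finsum_linkCone φ hcell (hlink _ hcell hdisj ?_)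
      rw [← Nat.card_coe_set_eq, Nat.card_range_of_injective hinj, Nat.card_fin]
  · rw [boundary_apply ψ hcell, hφC x hdisj]
    refine finsum_eq_zero_of_forall_eq_zero fun v => ?_
    have hv : linkCone C φ v x = 0 :=
      by_contra fun h => apply_ne_zero_of_linkCone_ne_zero h (hφC x hdisj)
    obtain ⟨_, hc, i, rfl⟩ := Set.not_disjoint_iff.1 hdisj
    have hsum (j : Fin m) : linkCone C φ (x j) (Function.update x j v) = 0 := by
      by_contra h
      have hij : i ≠ j := by
        rintro rfl
        exact (mem_outerLink_of_linkCone_ne_zero h).1 hc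
      exact apply_ne_zero_of_linkCone_ne_zero h
        (hφC _ (Set.not_disjoint_iff.2 ⟨x i, hc, i, Function.update_of_ne hij _ _⟩))
    simp [hcons, hv, hsum]

theorem exists_mem_invariants_boundary_eq [CharZero k] {c : P}
    [Finite (MulAction.stabilizer G c)]
    (hc : ∀ S, K.Cell S → (MulAction.orbit G c ∩ S).Subsingleton)
    (hlink : ∀ S, K.Cell S → Disjoint (MulAction.orbit G c) S → S.ncard = m →
      (K.outerLink (MulAction.orbit G c) S).Nonempty)
    (hflip : ∀ x : Fin m → P, Function.Injective x → K.Cell (Set.range x) →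
      Disjoint (MulAction.orbit G c) (Set.range x) → IsFlipped χ x ∨
        ∀ u ∈ K.outerLink (MulAction.orbit G c) (Set.range x), ∀ j,
          K.Cell (Set.range (Function.update x j u)) → IsFlipped χ (Function.update x j u))
    (φ : K.Chain k (m + 1)) (hφ : boundary m φ ∈ (chainRep χ m).invariants) :
    ∃ ψ : K.Chain k (m + 1), ψ ∈ (chainRep χ (m + 1)).invariants ∧
      boundary m ψ = boundary m φ := by
  obtain ⟨ψ, hψ, hψφ⟩ := exists_mem_invariants_boundary_eq_of_mem_orbit hc φ hφ
  obtain ⟨ψ', hψ', hψφ'⟩ := exists_mem_invariants_boundary_eq_of_disjoint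
    (fun g => MulAction.smul_orbit g c) hlink hflip
    (sub_mem hφ (boundary_mem_invariants hψ)) fun x hx => by
      rw [Chain.sub_apply, hψφ x (Set.not_disjoint_iff_nonempty_inter.1 hx), sub_self]
  exact ⟨ψ + ψ', add_mem hψ hψ', by rw [map_add, hψφ', add_sub_cancel]⟩

end LinkCone

section Resolution

variable {k G P : Type u} [Field k] [CharZero k] [Group G] [MulAction G P] {K : CellFamily P}
  [K.IsInvariant G] {χ : G →* k} {q : ℕ}

variable (χ) in
/-- The representation of `G` on the cycles among the chains with `m + 1` vertices. -/
abbrev cycleRep (m : ℕ) : Rep.{u} k G :=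
  Rep.of (X := (boundaryHom (K := K) χ m).ker.toSubmodule) (boundaryHom χ m).ker.toRepresentation

theorem range_boundaryHom_eq_ker {m : ℕ}
    (h : ∀ φ : K.Chain k (m + 1), boundary m φ = 0 → ∃ ψ, boundary (m + 1) ψ = φ) :
    (boundaryHom (K := K) χ (m + 1)).range = (boundaryHom χ m).ker :=
  SetLike.ext fun φ => ⟨by rintro ⟨ψ, rfl⟩; exact boundary_boundary ψ, h φ⟩

theorem subsingleton_groupCohomology_ker_boundaryHom {n : ℕ}
    (hK : ∀ S, K.Cell S → Finite (MulAction.stabilizer G S))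
    (hlift : ∀ φ : K.Chain k (q + 1), boundary q φ ∈ (chainRep χ q).invariants →
      ∃ ψ : K.Chain k (q + 1), ψ ∈ (chainRep χ (q + 1)).invariants ∧ boundary q ψ = boundary q φ)
    (hexact : ∀ m, q ≤ m → m < q + n → ∀ φ : K.Chain k (m + 1),
      boundary m φ = 0 → ∃ ψ, boundary (m + 1) ψ = φ) :
    Subsingleton (groupCohomology (cycleRep (K := K) χ (q + n)) (n + 1)) := by
  induction n with
  | zero =>
    exact subsingleton_groupCohomology_ker_one _
      (subsingleton_groupCohomology_chainRep χ hK _ _) hlift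
  | succ n ih =>
    refine subsingleton_groupCohomology_ker_succ _ _
      (subsingleton_groupCohomology_chainRep χ hK _ _) ?_
    have hrange : (boundaryHom (K := K) χ (q + (n + 1))).range = (boundaryHom χ (q + n)).ker :=
      range_boundaryHom_eq_ker (hexact (q + n) (by lia) (by lia))
    rw [hrange]
    exact ih fun m hm hmn => hexact m hm (by lia)

theorem subsingleton_groupCohomology_trivial {n : ℕ}
    (hK : ∀ S, K.Cell S → Finite (MulAction.stabilizer G S))
    (hlift : ∀ φ : K.Chain k (q + 1), boundary q φ ∈ (chainRep χ q).invariants →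
      ∃ ψ : K.Chain k (q + 1), ψ ∈ (chainRep χ (q + 1)).invariants ∧ boundary q ψ = boundary q φ)
    (hexact : ∀ m, q ≤ m → m < q + n → ∀ φ : K.Chain k (m + 1),
      boundary m φ = 0 → ∃ ψ, boundary (m + 1) ψ = φ)
    {ε : K.Chain k (q + n + 1)} (hε : ε ∈ (chainRep χ (q + n + 1)).invariants) (hε₀ : ε ≠ 0)
    (hker : LinearMap.ker (boundary (q + n)) = Submodule.span k {ε}) :
    Subsingleton (groupCohomology (Rep.trivial k G k) (n + 1)) := by
  let e : (Representation.trivial k G k).Equiv (boundaryHom χ (q + n)).ker.toRepresentation :=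
    .mk ((LinearEquiv.toSpanNonzeroSingleton k _ ε hε₀).trans (.ofEq _ _ hker.symm)) fun g => by
      refine LinearMap.ext fun c => Subtype.ext ?_
      exact ((map_smul (chainRep χ _ g) c ε).trans (congrArg (c • ·) (hε g))).symm
  have : Subsingleton ((groupCohomology.functor k G (n + 1)).obj (cycleRep (K := K) χ (q + n))) :=
    subsingleton_groupCohomology_ker_boundaryHom hK hlift hexact
  let i : Rep.trivial k G k ≅ cycleRep (K := K) χ (q + n) := Rep.mkIso e
  exact ((groupCohomology.functor k G (n + 1)).mapIso i).toLinearEquiv.toEquiv.subsingleton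

end Resolution

end CellFamily

namespace Voronoi

/-! ### Integral symmetric matrices and quadratic forms -/

section Pairing

variable {n R : Type*} [Fintype n] [CommRing R]

/-- The trace pairing `tr (q Y)` of a quadratic form `q` on a module with a symmetric matrix `Y`,
which is a quadratic form on the dual module. -/
def pair (q Y : Matrix n n R) : R := (q * Y).trace

/-- The value of a quadratic form, given by its matrix, on a vector. -/
def ev (Y : Matrix n n R) (v : n → R) : R := v ⬝ᵥ Y *ᵥ v

theorem pair_comm (q Y : Matrix n n R) : pair q Y = pair Y q := Matrix.trace_mul_comm _ _

theorem pair_add (q Y Y' : Matrix n n R) : pair q (Y + Y') = pair q Y + pair q Y' := by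
  simp [pair, mul_add]

theorem pair_sub_left (q q' Y : Matrix n n R) : pair (q - q') Y = pair q Y - pair q' Y := by
  simp [pair, sub_mul]

theorem pair_smul (q Y : Matrix n n R) (c : R) : pair q (c • Y) = c * pair q Y := by
  simp [pair]

theorem pair_sum {ι : Type*} (s : Finset ι) (q : Matrix n n R) (Y : ι → Matrix n n R) :
    pair q (∑ i ∈ s, Y i) = ∑ i ∈ s, pair q (Y i) := by
  simp [pair, Finset.mul_sum, trace_sum]

theorem pair_eq_sum (q Y : Matrix n n R) : pair q Y = ∑ a, ∑ b, q b a * Y a b := by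
  rw [pair_comm]
  simp [pair, trace, mul_apply, mul_comm]

theorem pair_vecMulVec (q : Matrix n n R) (v : n → R) : pair q (vecMulVec v v) = ev q v := by
  rw [pair, ev, mul_vecMulVec, trace_vecMulVec, dotProduct_comm]

theorem pair_transpose_mul_mul (A q Y : Matrix n n R) :
    pair (Aᵀ * q * A) Y = pair q (A * Y * Aᵀ) := by
  rw [pair, pair, mul_assoc, mul_assoc, Matrix.trace_mul_comm]
  simp only [mul_assoc]

theorem mul_vecMulVec_mul_transpose (A : Matrix n n R) (v : n → R) :
    A * vecMulVec v v * Aᵀ = vecMulVec (A *ᵥ v) (A *ᵥ v) := by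
  rw [mul_vecMulVec, vecMulVec_mul, vecMul_transpose]

theorem ev_mul_mul_transpose (A Y : Matrix n n R) (v : n → R) :
    ev (A * Y * Aᵀ) v = ev Y (Aᵀ *ᵥ v) := by
  rw [← pair_vecMulVec, ← pair_vecMulVec, ← mul_vecMulVec_mul_transpose, ← pair_transpose_mul_mul,
    transpose_transpose]

theorem ev_smul (c : R) (Y : Matrix n n R) (v : n → R) : ev (c • Y) v = c * ev Y v := by
  simp [ev, smul_mulVec]

theorem ev_sum {ι : Type*} (s : Finset ι) (Y : ι → Matrix n n R) (v : n → R) :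
    ev (∑ i ∈ s, Y i) v = ∑ i ∈ s, ev (Y i) v := by
  simp [ev, Matrix.sum_mulVec, dotProduct_sum]

theorem ev_vecMulVec (u v : n → R) : ev (vecMulVec u u) v = (u ⬝ᵥ v) ^ 2 := by
  rw [ev, vecMulVec_mulVec]
  simp [dotProduct_smul, dotProduct_comm v u, sq]

theorem sum_mul_pair_smul {κ : Type*} [Fintype κ] [DecidableEq n] {c : κ → R} {r : R}
    {D P : κ → Matrix n n R}
    (h : ∀ a b, ∑ k, (c k * D k b a) • P k = r • (single a b 1 + single b a 1))
    (Y : Matrix n n R) : ∑ k, (c k * pair (D k) Y) • P k = r • (Y + Yᵀ) := by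
  have hpair : ∀ k, (c k * pair (D k) Y) • P k = ∑ a, ∑ b, Y a b • (c k * D k b a) • P k := by
    intro k
    simp only [pair_eq_sum, Finset.mul_sum, Finset.sum_smul, smul_smul]
    refine Finset.sum_congr rfl fun a _ => Finset.sum_congr rfl fun b _ => ?_
    congr 1
    ring
  have hY : Y + Yᵀ = ∑ a, ∑ b, Y a b • (single a b 1 + single b a 1) := by
    conv_lhs => rw [matrix_eq_sum_single Y]
    simp [transpose_sum, transpose_single, ← Finset.sum_add_distrib, smul_add, smul_single]
  simp only [hpair]
  rw [Finset.sum_comm, hY, Finset.smul_sum]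
  refine Finset.sum_congr rfl fun a _ => ?_
  rw [Finset.sum_comm, Finset.smul_sum]
  refine Finset.sum_congr rfl fun b _ => ?_
  rw [← Finset.smul_sum, h, smul_comm]

end Pairing

section Real

variable {n : Type*}

/-- The real matrix underlying an integral one. -/
abbrev toReal (X : Matrix n n ℤ) : Matrix n n ℝ := X.map (Int.castRingHom ℝ)

/-- The real vector underlying an integral one. -/
abbrev vecReal (v : n → ℤ) : n → ℝ := fun j => (v j : ℝ)

theorem toReal_sub (X Y : Matrix n n ℤ) : toReal (X - Y) = toReal X - toReal Y :=
  Matrix.map_sub _ (map_sub _) _ _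

theorem toReal_vecMulVec (w : n → ℤ) :
    toReal (vecMulVec w w) = vecMulVec (vecReal w) (vecReal w) := by
  ext a b
  simp [vecMulVec_apply]

variable [Fintype n]

theorem toReal_mul (X Y : Matrix n n ℤ) : toReal (X * Y) = toReal X * toReal Y :=
  Matrix.map_mul

theorem pair_toReal (q X : Matrix n n ℤ) :
    pair (toReal q) (toReal X) = ((pair q X : ℤ) : ℝ) := by
  rw [pair, ← toReal_mul, pair, ← eq_intCast (Int.castRingHom ℝ), AddMonoidHom.map_trace]

theorem ev_toReal (Y : Matrix n n ℤ) (v : n → ℤ) :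
    ev (toReal Y) (vecReal v) = ((ev Y v : ℤ) : ℝ) := by
  rw [← pair_vecMulVec, ← pair_vecMulVec, ← toReal_vecMulVec, pair_toReal]

end Real

section Action

variable {n : Type*}

/-- Integral matrices with the congruence action `X ↦ g X gᵀ` of `GL(n,ℤ)`, in which the vertices
of the cells live; a structure, so that this action does not clash with left multiplication. -/
@[ext]
structure Point (n : Type*) where
  /-- The underlying matrix. -/
  mat : Matrix n n ℤ

/-- The symmetric matrix `v vᵀ` of rank one, that is, the square of the linear form `v`. -/
def square (v : n → ℤ) : Point n := ⟨vecMulVec v v⟩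

variable [Fintype n]

theorem pair_square (q : Matrix n n ℤ) (v : n → ℤ) : pair q (square v).mat = ev q v :=
  pair_vecMulVec q v

variable [DecidableEq n]

/-- The action of `GL(n,ℤ)` on the quadratic forms on `ℤⁿ`. -/
def act (g : GL n ℤ) (q : Matrix n n ℤ) : Matrix n n ℤ := (g⁻¹).1ᵀ * q * (g⁻¹).1

instance : MulAction (GL n ℤ) (Point n) where
  smul g X := ⟨g.1 * X.mat * g.1ᵀ⟩
  one_smul X := by
    ext1
    change (1 : Matrix n n ℤ) * X.mat * 1ᵀ = X.mat
    simp
  mul_smul g h X := by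
    ext1
    change g.1 * h.1 * X.mat * (g.1 * h.1)ᵀ = g.1 * (h.1 * X.mat * h.1ᵀ) * g.1ᵀ
    simp only [transpose_mul, mul_assoc]

theorem Point.mat_smul (g : GL n ℤ) (X : Point n) : (g • X).mat = g.1 * X.mat * g.1ᵀ := rfl

theorem Point.toReal_mat_smul (g : GL n ℤ) (X : Point n) :
    toReal (g • X).mat = toReal g.1 * toReal X.mat * (toReal g.1)ᵀ := by
  rw [Point.mat_smul, toReal_mul, toReal_mul]
  rfl

theorem smul_square (g : GL n ℤ) (v : n → ℤ) : g • square v = square (g.1 *ᵥ v) :=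
  Point.ext (mul_vecMulVec_mul_transpose _ _)

theorem act_mul (g h : GL n ℤ) (q : Matrix n n ℤ) : act (g * h) q = act g (act h q) := by
  simp only [act, _root_.mul_inv_rev, Units.val_mul, transpose_mul, mul_assoc]

theorem act_sub (g : GL n ℤ) (q q' : Matrix n n ℤ) : act g (q - q') = act g q - act g q' := by
  simp only [act, mul_sub, sub_mul]

theorem act_vecMulVec (g : GL n ℤ) (w : n → ℤ) :
    act g (vecMulVec w w) = vecMulVec ((g⁻¹).1ᵀ *ᵥ w) ((g⁻¹).1ᵀ *ᵥ w) := by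
  rw [← mul_vecMulVec_mul_transpose, transpose_transpose, act]

theorem pair_act (g : GL n ℤ) (q : Matrix n n ℤ) (X : Point n) :
    pair (act g q) X.mat = pair q (g⁻¹ • X).mat :=
  pair_transpose_mul_mul _ _ _

theorem pair_act_smul (g : GL n ℤ) (q : Matrix n n ℤ) (X : Point n) :
    pair (act g q) (g • X).mat = pair q X.mat := by
  rw [pair_act, inv_smul_smul]

theorem pair_toReal_act (g : GL n ℤ) (q : Matrix n n ℤ) (Y : Matrix n n ℝ) :
    pair (toReal (act g q)) Y = pair (toReal q) (toReal (g⁻¹).1 * Y * (toReal (g⁻¹).1)ᵀ) := by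
  rw [act, toReal_mul, toReal_mul, ← pair_transpose_mul_mul]
  rfl

theorem toReal_mul_toReal_inv (g : GL n ℤ) : toReal g.1 * toReal (g⁻¹).1 = 1 := by
  rw [← toReal_mul, Units.mul_inv]
  exact Matrix.map_one _ (map_zero _) (map_one _)

theorem mulVec_injective (g : GL n ℤ) : Function.Injective (g.1 *ᵥ ·) :=
  mulVec_injective_of_det_ne_zero g.det.ne_zero

end Action

open scoped Pointwise

/-! ### The standard top cells -/

/-- Representatives of the forms supporting the top cells. -/
def stdForm : Fin 3 → Matrix (Fin 4) (Fin 4) ℤ :=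
  ![!![12, 6, 6, 6; 6, 12, 6, 6; 6, 6, 12, 6; 6, 6, 6, 12],
    !![12, 2, 8, 8; 2, 12, 8, 8; 8, 8, 16, 8; 8, 8, 8, 16],
    !![12, 0, 6, 8; 0, 12, 6, 6; 6, 6, 12, 6; 8, 6, 6, 16]]

/-- The minimal vectors of the standard forms, padded by zero. -/
def stdVec : Fin 3 → Fin 10 → Fin 4 → ℤ :=
  ![![![0, 0, 0, 1], ![0, 0, 1, -1], ![0, 0, 1, 0], ![0, 1, -1, 0],
      ![0, 1, 0, -1], ![0, 1, 0, 0], ![1, -1, 0, 0], ![1, 0, -1, 0],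
      ![1, 0, 0, -1], ![1, 0, 0, 0]],
    ![![0, 1, -1, 0], ![0, 1, 0, -1], ![0, 1, 0, 0], ![1, 0, -1, 0],
      ![1, 0, 0, -1], ![1, 0, 0, 0], ![1, 1, -1, -1], ![1, 1, -1, 0],
      ![1, 1, 0, -1], ![0, 0, 0, 0]],
    ![![0, 0, 1, 0], ![0, 1, -1, 0], ![0, 1, 0, 0], ![1, 0, -1, 0],
      ![1, 0, 0, -1], ![1, 0, 0, 0], ![1, 1, -1, -1], ![1, 1, -1, 0],
      ![1, 1, 0, -1], ![0, 0, 0, 0]]]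

/-- The centre of the cone over the squares of the minimal vectors of `D₄`, namely two thirds of
the sum of these squares. -/
def center : Point (Fin 4) := ⟨!![4, 2, -2, -2; 2, 4, -2, -2; -2, -2, 4, 0; -2, -2, 0, 4]⟩

/-- The minimal vectors of `D₄`. -/
def rootD : Fin 12 → Fin 4 → ℤ :=
  ![![0, 0, 0, 1], ![0, 0, 1, -1], ![0, 0, 1, 0], ![0, 1, -1, 0],
    ![0, 1, 0, -1], ![0, 1, 0, 0], ![1, 0, -1, 0], ![1, 0, 0, -1],
    ![1, 0, 0, 0], ![1, 1, -1, -1], ![1, 1, -1, 0], ![1, 1, 0, -1]]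

/-- The types of the neighbours of the standard top cells. -/
def nbType : Fin 3 → Fin 10 → Fin 3 :=
  ![![2, 2, 2, 2, 2, 2, 2, 2, 2, 2],
    ![2, 2, 2, 2, 2, 2, 2, 2, 2, 1],
    ![1, 1, 1, 2, 2, 2, 2, 2, 2, 0]]

/-- Base changes from the standard forms to the neighbours of the standard top cells. -/
def nbMat : Fin 3 → Fin 10 → Matrix (Fin 4) (Fin 4) ℤ :=
  ![![!![1, 1, 1, 2; 0, 0, 1, 1; -1, 0, -1, -1; 0, 0, 0, -1],
      !![0, 0, 1, -1; 0, 1, 1, 0; 1, 0, 0, 1; 0, 0, -1, 0],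
      !![1, 1, 2, 1; 0, 0, 1, 1; -1, 0, -1, -1; 0, 0, -1, 0],
      !![0, 1, -1, 0; 0, 0, -1, -1; 1, 0, 1, 1; 0, 0, 1, 0],
      !![0, 1, 0, -1; 0, 0, -1, -1; 1, 0, 1, 1; 0, 0, 0, 1],
      !![1, 2, 1, 1; 0, 1, 0, 1; -1, -1, 0, -1; 0, -1, 0, 0],
      !![1, -1, 0, 0; 0, -1, 0, -1; -1, 0, -1, 0; 0, 1, 0, 0],
      !![1, 0, -1, 0; 0, 0, -1, -1; -1, -1, 0, 0; 0, 0, 1, 0],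
      !![1, 0, 0, -1; 0, 0, -1, -1; -1, -1, 0, 0; 0, 0, 0, 1],
      !![2, 1, 1, 1; 1, 0, 0, 1; -1, -1, 0, -1; -1, 0, 0, 0]],
    ![!![1, 0, 0, 0; 0, 1, 0, 0; -1, -1, -1, -1; 0, 0, 1, 0],
      !![1, 0, 0, 0; 0, 1, 0, 0; -1, -1, -1, -1; 0, 0, 0, 1],
      !![1, 0, 0, 0; 0, 0, 0, -1; -1, 0, -1, 0; 0, 1, 1, 1],
      !![0, 1, 0, 0; 0, 0, 0, -1; 1, 0, 1, 1; 0, -1, -1, 0],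
      !![0, 1, 0, 0; 0, 0, -1, 0; 1, 0, 1, 1; 0, -1, 0, -1],
      !![0, 1, 0, 0; 0, 0, 0, -1; 0, -1, -1, 0; 1, 0, 1, 1],
      !![1, -1, 0, 0; 0, -1, 0, -1; -1, 0, -1, 0; 0, 1, 1, 1],
      !![1, -1, 0, 0; 0, -1, 0, 0; -1, 0, -1, -1; 0, 1, 0, 1],
      !![1, -1, 0, 0; 0, -1, 0, 0; -1, 0, -1, -1; 0, 1, 1, 0],
      !![0, 0, 1, -1; 1, 1, 2, 1; -1, 0, -1, 0; 0, -1, -1, 0]],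
    ![!![0, 1, 0, 0; 1, 0, 0, 0; -1, -1, -1, -1; 0, 0, 1, 0],
      !![0, 1, 1, 1; 1, 1, 1, 1; -1, 0, -1, -1; 0, -1, -1, 0],
      !![0, 0, 1, 0; 1, 0, 1, 0; -1, 0, -1, -1; 0, 1, 0, 1],
      !![1, 1, 1, 1; 0, 1, 0, 0; -1, 0, 0, 0; 0, -1, -1, 0],
      !![0, 1, 0, 0; 0, 0, -1, 0; 1, 0, 1, 1; 0, -1, 0, -1],
      !![0, 0, 1, 0; 0, 1, 1, 0; 0, -1, -1, -1; 1, 0, 0, 1],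
      !![1, 0, 1, 0; 0, 1, 1, 0; -1, -1, -1, -1; 0, 0, 0, 1],
      !![1, -1, 0, 0; 0, -1, 0, 0; -1, 0, -1, -1; 0, 1, 0, 1],
      !![0, 1, 1, 1; 0, 0, 1, 0; 1, 0, 0, 0; 0, -1, -1, 0],
      !![0, 0, 0, 1; 0, 1, 1, 0; 0, -1, 0, -1; 1, 0, 0, 1]]]

/-- The increase of a neighbouring form on the vertex that is lost. -/
def nbGap : Fin 3 → Fin 10 → ℤ :=
  ![![8, 8, 8, 8, 8, 8, 8, 8, 8, 8],
    ![4, 4, 4, 4, 4, 4, 4, 4, 4, 8],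
    ![4, 4, 4, 4, 4, 4, 4, 4, 4, 16]]

/-- The vertices of the standard top cells. -/
def stdPt (i : Fin 3) (k : Fin 10) : Point (Fin 4) :=
  if i ≠ 0 ∧ k = 9 then center else square (stdVec i k)

/-- The forms of the neighbours of the standard top cells. -/
def nbForm (i : Fin 3) (k : Fin 10) : Matrix (Fin 4) (Fin 4) ℤ :=
  (nbMat i k)ᵀ * stdForm (nbType i k) * nbMat i k

theorem isUnit_det_nbMat : ∀ i k, IsUnit (nbMat i k).det := by
  simp only [Int.isUnit_iff]
  decide +kernel

theorem pair_nbForm_sub : ∀ i k l, pair (nbForm i k - stdForm i) (stdPt i l).mat =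
    if k = l then nbGap i k else 0 := by
  decide +kernel

theorem nbGap_pos : ∀ i k, 0 < nbGap i k := by decide +kernel

theorem nbGap_dvd : ∀ i k, nbGap i k ∣ 16 := by decide +kernel

theorem stdForm_transpose : ∀ i, (stdForm i)ᵀ = stdForm i := by decide +kernel

theorem sum_nbForm_sub_smul_stdPt : ∀ i a b,
    ∑ k, (16 / nbGap i k * (nbForm i k - stdForm i) b a) • (stdPt i k).mat =
      (8 : ℤ) • (single a b 1 + single b a 1) := by
  decide +kernel

/-- The vertices of the cell structure, with the value that supporting forms take on them: the
squares of nonzero vectors, with value `12`, and the translates of `center`, with value `104`. -/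
def IsVertex (X : Point (Fin 4)) (l : ℤ) : Prop :=
  (l = 12 ∧ ∃ v : Fin 4 → ℤ, v ≠ 0 ∧ X = square v) ∨
    (l = 104 ∧ X ∈ MulAction.orbit (GL (Fin 4) ℤ) center)

/-- The forms that support the top cells. -/
def IsTopForm (q : Matrix (Fin 4) (Fin 4) ℤ) : Prop := ∃ g i, q = act g (stdForm i)

/-- The vertices of the top cell supported by a form. -/
def vertexSet (q : Matrix (Fin 4) (Fin 4) ℤ) : Set (Point (Fin 4)) :=
  {X | IsVertex X (pair q X.mat)}

/-! ### Short vectors of the standard forms -/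

/-- A basis of linear forms whose squares are dominated by the standard forms. -/
def domForm (i : Fin 3) : Matrix (Fin 4) (Fin 4) ℤ :=
  if i = 0 then 1 else !![1, 1, 1, 1; 1, -1, 0, 0; 0, 0, 1, 0; 0, 0, 0, 1]

/-- The coefficients of the remainder of the standard forms. -/
def restCoeff : Fin 3 → Fin 5 → ℕ := ![![1, 1, 1, 1, 6], ![1, 1, 1, 0, 0], ![1, 1, 1, 0, 0]]

/-- The linear forms in the remainder of the standard forms. -/
def restForm : Fin 3 → Fin 5 → Fin 4 → ℤ :=
  ![![![1, 0, 0, 0], ![0, 1, 0, 0], ![0, 0, 1, 0], ![0, 0, 0, 1], ![1, 1, 1, 1]],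
    ![![1, 1, 1, 2], ![0, 0, 1, -1], ![1, 1, 2, 1], 0, 0],
    ![![1, 1, 1, 2], ![0, 0, 1, -1], ![1, -1, 0, 1], 0, 0]]

theorem stdForm_eq_sum : ∀ i, stdForm i = ∑ r, (5 : ℤ) • vecMulVec (domForm i r) (domForm i r) +
    ∑ s, (restCoeff i s : ℤ) • vecMulVec (restForm i s) (restForm i s) := by
  decide +kernel

theorem five_mul_le_ev_stdForm (i : Fin 3) (v : Fin 4 → ℤ) :
    5 * ∑ r, (domForm i r ⬝ᵥ v) ^ 2 ≤ ev (stdForm i) v := by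
  rw [← pair_vecMulVec, stdForm_eq_sum, pair_comm, pair_add, pair_sum, pair_sum]
  simp only [pair_smul, pair_vecMulVec, ev_vecMulVec, Finset.mul_sum]
  have : 0 ≤ ∑ s, (restCoeff i s : ℤ) * (v ⬝ᵥ restForm i s) ^ 2 := by positivity
  simp only [dotProduct_comm v] at this ⊢
  linarith

theorem abs_domForm_dotProduct_le {i : Fin 3} {v : Fin 4 → ℤ} (h : ev (stdForm i) v < 20)
    (r : Fin 4) : |domForm i r ⬝ᵥ v| ≤ 1 := by
  have hle : (domForm i r ⬝ᵥ v) ^ 2 ≤ ∑ r, (domForm i r ⬝ᵥ v) ^ 2 :=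
    Finset.single_le_sum (f := fun r => (domForm i r ⬝ᵥ v) ^ 2) (fun _ _ => sq_nonneg _)
      (Finset.mem_univ r)
  have hlt : (domForm i r ⬝ᵥ v) ^ 2 < 2 ^ 2 := by linarith [five_mul_le_ev_stdForm i v]
  exact Int.lt_add_one_iff.1 (abs_lt_of_sq_lt_sq hlt zero_le_two)

theorem abs_apply_le_two {i : Fin 3} {v : Fin 4 → ℤ} (h : ev (stdForm i) v < 20) (j : Fin 4) :
    |v j| ≤ 2 := by
  have hr := fun r => abs_le.1 (abs_domForm_dotProduct_le h r)
  have h₀ := hr 0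
  have h₁ := hr 1
  have h₂ := hr 2
  have h₃ := hr 3
  rw [abs_le]
  by_cases hi : i = 0 <;>
    simp [domForm, hi, dotProduct, Fin.sum_univ_four] at h₀ h₁ h₂ h₃ <;>
    fin_cases j <;> simp <;> omega

/-- The vectors of value less than `20` for the standard forms, up to sign and padded by zero. -/
def shortVec (i : Fin 3) (m : Fin 12) : Fin 4 → ℤ :=
  if i = 0 then (if h : m.1 < 10 then stdVec 0 ⟨m.1, h⟩ else 0) else rootD m

/-- The defects `20 - q` of the vectors `shortVec`, with value `0` at the padding. -/
def defect (i : Fin 3) (m : Fin 12) : ℤ :=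
  if shortVec i m = 0 then 0 else 20 - ev (stdForm i) (shortVec i m)

theorem shortVec_box : ∀ (i : Fin 3) (a b c d : Fin 5),
    (fun v : Fin 4 → ℤ => v ≠ 0 → 12 ≤ ev (stdForm i) v ∧
      (ev (stdForm i) v = 12 → ∃ k, (square v).mat = (stdPt i k).mat) ∧
      20 - ev (stdForm i) v ≤
        ∑ m, if (square v).mat = (square (shortVec i m)).mat then defect i m else 0)
      ![(a : ℤ) - 2, (b : ℤ) - 2, (c : ℤ) - 2, (d : ℤ) - 2] := by
  decide +kernel

theorem defect_nonneg : ∀ i m, 0 ≤ defect i m := by decide +kernel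

section Matching

variable {κ μ : Type*} [Fintype κ] {r : κ → μ → Prop} [∀ k m, Decidable (r k m)]
  {f : μ → ℤ}

theorem sum_ite_eq_card_mul (r : κ → μ → Prop) [∀ k m, Decidable (r k m)] (f : μ → ℤ) (m : μ) :
    ∑ k, (if r k m then f m else 0) = (Finset.univ.filter (r · m)).card * f m := by
  rw [← Finset.sum_filter, Finset.sum_const, nsmul_eq_mul]

theorem sum_ite_le (hr : ∀ m k l, r k m → r l m → k = l) (hf : ∀ m, 0 ≤ f m) (m : μ) :
    ∑ k, (if r k m then f m else 0) ≤ f m := by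
  have hcard : (Finset.univ.filter (r · m)).card ≤ 1 :=
    Finset.card_le_one.2 fun k hk l hl => hr m k l (Finset.mem_filter.1 hk).2
      (Finset.mem_filter.1 hl).2
  rw [sum_ite_eq_card_mul]
  exact mul_le_of_le_one_left (hf m) (by exact_mod_cast hcard)

variable [Fintype μ]

theorem sum_sum_ite_le (hr : ∀ m k l, r k m → r l m → k = l) (hf : ∀ m, 0 ≤ f m) :
    ∑ k, ∑ m, (if r k m then f m else 0) ≤ ∑ m, f m := by
  rw [Finset.sum_comm]
  exact Finset.sum_le_sum fun m _ => sum_ite_le hr hf m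

theorem exists_of_sum_le_sum_sum_ite (hr : ∀ m k l, r k m → r l m → k = l) (hf : ∀ m, 0 < f m)
    (h : ∑ m, f m ≤ ∑ k, ∑ m, (if r k m then f m else 0)) (m : μ) : ∃ k, r k m := by
  by_contra! hm
  rw [Finset.sum_comm] at h
  refine h.not_gt (Finset.sum_lt_sum (fun m _ => sum_ite_le hr (fun m => (hf m).le) m)
    ⟨m, Finset.mem_univ m, ?_⟩)
  simpa [hm] using hf m

end Matching

theorem shortVec_bound (i : Fin 3) {v : Fin 4 → ℤ} (hv : v ≠ 0) :
    12 ≤ ev (stdForm i) v ∧ (ev (stdForm i) v = 12 → ∃ k, (square v).mat = (stdPt i k).mat) ∧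
      20 - ev (stdForm i) v ≤
        ∑ m, if (square v).mat = (square (shortVec i m)).mat then defect i m else 0 := by
  by_cases h : ev (stdForm i) v < 20
  · have hbox : ∀ j, ∃ a : Fin 5, v j = (a : ℤ) - 2 := fun j => by
      have := abs_le.1 (abs_apply_le_two h j)
      exact ⟨⟨(v j + 2).toNat, by omega⟩, by simp; omega⟩
    choose a ha using hbox
    have hv' : v = ![(a 0 : ℤ) - 2, (a 1 : ℤ) - 2, (a 2 : ℤ) - 2, (a 3 : ℤ) - 2] := by
      ext j
      fin_cases j <;> simp [ha]
    have hshort := shortVec_box i (a 0) (a 1) (a 2) (a 3)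
    rw [← hv'] at hshort
    exact hshort hv
  · refine ⟨by omega, by omega, le_trans (b := 0) (by omega) (Finset.sum_nonneg fun m _ => ?_)⟩
    split_ifs
    exacts [defect_nonneg i m, le_rfl]

theorem sum_defect_zero : ∑ m, defect 0 m = 80 := by decide +kernel

theorem sum_defect : ∀ i, i ≠ 0 → ∑ m, defect i m = 84 := by decide +kernel

theorem defect_pos : ∀ i, i ≠ 0 → ∀ m, 0 < defect i m := by decide +kernel

theorem shortVec_of_ne {i : Fin 3} (hi : i ≠ 0) : shortVec i = rootD :=
  funext fun _ => if_neg hi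

theorem square_rootD_injective : Function.Injective fun m => square (rootD m) := by
  have h : ∀ m m', (square (rootD m)).mat = (square (rootD m')).mat → m = m' := by
    decide +kernel
  exact fun m m' hm => h m m' (congrArg Point.mat hm)

theorem rootD_ne_zero : ∀ m, rootD m ≠ 0 := by decide +kernel

theorem three_smul_center :
    (3 : ℤ) • center.mat = (2 : ℤ) • ∑ m, (square (rootD m)).mat := by
  decide +kernel

section TwelveVectors

variable (i : Fin 3) {u : Fin 12 → Fin 4 → ℤ}

theorem sum_ev_stdForm_ge_sub (hu : ∀ k, u k ≠ 0) : 240 - ∑ k, ev (stdForm i) (u k) ≤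
    ∑ k, ∑ m, if (square (u k)).mat = (square (shortVec i m)).mat then defect i m else 0 := by
  have h := Finset.sum_le_sum fun k (_ : k ∈ Finset.univ) => (shortVec_bound i (hu k)).2.2
  rw [Finset.sum_sub_distrib] at h
  simpa using h

theorem le_sum_ev_stdForm (hu : ∀ k, u k ≠ 0)
    (hinj : Function.Injective fun k => square (u k)) :
    240 - ∑ m, defect i m ≤ ∑ k, ev (stdForm i) (u k) := by
  have h := sum_ev_stdForm_ge_sub i hu
  have h' := sum_sum_ite_le (r := fun k m => (square (u k)).mat = (square (shortVec i m)).mat)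
    (fun m k l hk hl => hinj (Point.ext (hk.trans hl.symm))) (defect_nonneg i)
  linarith

theorem sum_square_eq_of_sum_ev_stdForm_le (hu : ∀ k, u k ≠ 0)
    (hinj : Function.Injective fun k => square (u k)) {i : Fin 3} (hi : i ≠ 0)
    (h : ∑ k, ev (stdForm i) (u k) ≤ 156) :
    ∑ k, (square (u k)).mat = ∑ m, (square (rootD m)).mat := by
  have hmatch := exists_of_sum_le_sum_sum_ite
    (r := fun k m => (square (u k)).mat = (square (shortVec i m)).mat)
    (fun m k l hk hl => hinj (Point.ext (hk.trans hl.symm))) (defect_pos i hi)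
    (by linarith [sum_ev_stdForm_ge_sub i hu, sum_defect i hi])
  rw [shortVec_of_ne hi] at hmatch
  choose σ hσ using hmatch
  have hσ_inj : Function.Injective σ := fun m m' hm =>
    square_rootD_injective (Point.ext ((hσ m).symm.trans (hm ▸ hσ m')))
  rw [← (Finite.injective_iff_bijective.1 hσ_inj).sum_comp fun k => (square (u k)).mat]
  exact Finset.sum_congr rfl fun m _ => hσ m

end TwelveVectors

/-! ### Vertices of top cells -/

theorem three_smul_smul_center (g : GL (Fin 4) ℤ) : (3 : ℤ) • (g • center).mat =
    (2 : ℤ) • ∑ m, (square (g.1 *ᵥ rootD m)).mat := by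
  simp only [← smul_square]
  simp only [Point.mat_smul]
  rw [← Matrix.smul_mul, ← Matrix.mul_smul, three_smul_center, Matrix.mul_smul, Matrix.smul_mul,
    Finset.mul_sum, Finset.sum_mul]

theorem le_pair_stdForm_smul_center (i : Fin 3) (g : GL (Fin 4) ℤ) :
    104 ≤ pair (stdForm i) (g • center).mat ∧
      (pair (stdForm i) (g • center).mat = 104 → i ≠ 0 ∧ g • center = center) := by
  have hpair : 3 * pair (stdForm i) (g • center).mat =
      2 * ∑ m, ev (stdForm i) (g.1 *ᵥ rootD m) := by
    rw [← pair_smul, three_smul_smul_center, pair_smul, pair_sum]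
    simp only [pair_square]
  have hne : ∀ k, g.1 *ᵥ rootD k ≠ 0 := fun k h =>
    rootD_ne_zero k (mulVec_injective g (h.trans (mulVec_zero _).symm))
  have hinj : Function.Injective fun k => square (g.1 *ᵥ rootD k) := by
    simp only [← smul_square]
    exact (MulAction.injective g).comp square_rootD_injective
  have hle := le_sum_ev_stdForm i hne hinj
  rcases eq_or_ne i 0 with rfl | hi
  · rw [sum_defect_zero] at hle
    exact ⟨by omega, by omega⟩
  · rw [sum_defect i hi] at hle
    refine ⟨by omega, fun h => ⟨hi, Point.ext ?_⟩⟩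
    have hsum := sum_square_eq_of_sum_ev_stdForm_le hne hinj hi (by omega)
    refine smul_right_injective (Matrix (Fin 4) (Fin 4) ℤ) (three_ne_zero (α := ℤ)) ?_
    exact (three_smul_smul_center g).trans (by rw [hsum, ← three_smul_center])

theorem le_pair_stdForm (i : Fin 3) {X : Point (Fin 4)} {l : ℤ} (hX : IsVertex X l) :
    l ≤ pair (stdForm i) X.mat ∧ (pair (stdForm i) X.mat = l → X ∈ Set.range (stdPt i)) := by
  rcases hX with ⟨rfl, v, hv, rfl⟩ | ⟨rfl, g, rfl⟩
  · rw [pair_square]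
    obtain ⟨hle, heq, -⟩ := shortVec_bound i hv
    exact ⟨hle, fun h => (heq h).imp fun k hk => Point.ext hk.symm⟩
  · obtain ⟨hle, heq⟩ := le_pair_stdForm_smul_center i g
    refine ⟨hle, fun h => ⟨9, ?_⟩⟩
    obtain ⟨hi, hg⟩ := heq h
    exact (if_pos ⟨hi, rfl⟩).trans hg.symm

theorem stdVec_ne_zero : ∀ i k, (i = 0 ∨ k ≠ 9) → stdVec i k ≠ 0 := by decide +kernel

theorem ev_stdForm_stdVec : ∀ i k, (i = 0 ∨ k ≠ 9) → ev (stdForm i) (stdVec i k) = 12 := by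
  decide +kernel

theorem pair_stdForm_center : ∀ i, i ≠ 0 → pair (stdForm i) center.mat = 104 := by
  decide +kernel

theorem stdPt_of_ne {i : Fin 3} {k : Fin 10} (h : i = 0 ∨ k ≠ 9) :
    stdPt i k = square (stdVec i k) := by
  rw [stdPt, if_neg]
  tauto

theorem isVertex_square {v : Fin 4 → ℤ} (hv : v ≠ 0) : IsVertex (square v) 12 :=
  .inl ⟨rfl, v, hv, rfl⟩

theorem mem_vertexSet {q : Matrix (Fin 4) (Fin 4) ℤ} {X : Point (Fin 4)} :
    X ∈ vertexSet q ↔ IsVertex X (pair q X.mat) :=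
  Iff.rfl

theorem vertexSet_stdForm (i : Fin 3) : vertexSet (stdForm i) = Set.range (stdPt i) := by
  refine Set.Subset.antisymm (fun X hX => (le_pair_stdForm i hX).2 rfl) ?_
  rintro _ ⟨k, rfl⟩
  rw [mem_vertexSet]
  by_cases h : i = 0 ∨ k ≠ 9
  · rw [stdPt_of_ne h, pair_square, ev_stdForm_stdVec i k h]
    exact isVertex_square (stdVec_ne_zero i k h)
  · push Not at h
    rw [stdPt, if_pos h, pair_stdForm_center i h.1]
    exact .inr ⟨rfl, MulAction.mem_orbit_self _⟩

theorem IsVertex.smul (g : GL (Fin 4) ℤ) {X : Point (Fin 4)} {l : ℤ} (hX : IsVertex X l) :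
    IsVertex (g • X) l := by
  rcases hX with ⟨rfl, v, hv, rfl⟩ | ⟨rfl, h, rfl⟩
  · rw [smul_square]
    exact isVertex_square fun h => hv (mulVec_injective g (h.trans (mulVec_zero _).symm))
  · exact .inr ⟨rfl, g * h, mul_smul g h _⟩

theorem isVertex_smul_iff (g : GL (Fin 4) ℤ) {X : Point (Fin 4)} {l : ℤ} :
    IsVertex (g • X) l ↔ IsVertex X l :=
  ⟨fun h => inv_smul_smul g X ▸ h.smul g⁻¹, .smul g⟩

theorem IsVertex.transpose_mat {X : Point (Fin 4)} {l : ℤ} (hX : IsVertex X l) :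
    X.matᵀ = X.mat := by
  rcases hX with ⟨rfl, v, -, rfl⟩ | ⟨rfl, g, rfl⟩
  · exact transpose_vecMulVec v v
  · have h : center.matᵀ = center.mat := by decide +kernel
    simp only [Point.mat_smul, transpose_mul, transpose_transpose, h, mul_assoc]

theorem IsVertex.ev_nonneg {X : Point (Fin 4)} {l : ℤ} (hX : IsVertex X l) (v : Fin 4 → ℤ) :
    0 ≤ ev X.mat v := by
  rcases hX with ⟨rfl, u, -, rfl⟩ | ⟨rfl, g, rfl⟩
  · rw [square, ev_vecMulVec]
    positivity
  · have h := congrArg (ev · v) (three_smul_smul_center g)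
    simp only [ev_smul, ev_sum, square, ev_vecMulVec] at h
    have : 0 ≤ ∑ m, ((g.1 *ᵥ rootD m) ⬝ᵥ v) ^ 2 := by positivity
    dsimp only
    omega

theorem vertexSet_act (g : GL (Fin 4) ℤ) (q : Matrix (Fin 4) (Fin 4) ℤ) :
    vertexSet (act g q) = g • vertexSet q := by
  ext X
  rw [Set.mem_smul_set_iff_inv_smul_mem, mem_vertexSet, pair_act,
    ← isVertex_smul_iff g⁻¹]
  rfl

section TopForm

variable {q q' : Matrix (Fin 4) (Fin 4) ℤ} {X : Point (Fin 4)}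

theorem IsTopForm.act (g : GL (Fin 4) ℤ) (hq : IsTopForm q) : IsTopForm (act g q) := by
  obtain ⟨h, i, rfl⟩ := hq
  exact ⟨g * h, i, (act_mul _ _ _).symm⟩

theorem IsTopForm.transpose_eq (hq : IsTopForm q) : qᵀ = q := by
  obtain ⟨g, i, rfl⟩ := hq
  simp only [Voronoi.act, transpose_mul, transpose_transpose, stdForm_transpose, mul_assoc]

theorem IsTopForm.le_pair (hq : IsTopForm q) {l : ℤ} (hX : IsVertex X l) :
    l ≤ pair q X.mat := by
  obtain ⟨g, i, rfl⟩ := hq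
  rw [pair_act]
  exact (le_pair_stdForm i (hX.smul g⁻¹)).1

theorem IsTopForm.pair_le (hq : IsTopForm q) (hX : X ∈ vertexSet q') :
    pair q' X.mat ≤ pair q X.mat :=
  hq.le_pair hX

theorem mem_vertexSet_of_pair_eq (hX : X ∈ vertexSet q') (h : pair q X.mat = pair q' X.mat) :
    X ∈ vertexSet q := by
  rw [mem_vertexSet, h]
  exact hX

theorem IsTopForm.pair_eq (hq : IsTopForm q) (hq' : IsTopForm q') (hX : X ∈ vertexSet q)
    (hX' : X ∈ vertexSet q') : pair q X.mat = pair q' X.mat :=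
  (hq'.pair_le hX).antisymm (hq.pair_le hX')

end TopForm

/-! ### Top cells and their neighbours -/

/-- The vertices and neighbours of the top cell of a form. -/
structure TopData (q : Matrix (Fin 4) (Fin 4) ℤ) where
  /-- The vertices. -/
  pt : Fin 10 → Point (Fin 4)
  /-- The neighbour across the facet opposite to a vertex. -/
  nb : Fin 10 → Matrix (Fin 4) (Fin 4) ℤ
  /-- The increase of the neighbouring form at the opposite vertex. -/
  gap : Fin 10 → ℤ
  vertexSet_eq : vertexSet q = Set.range pt
  isTopForm_nb : ∀ k, IsTopForm (nb k)
  gap_pos : ∀ k, 0 < gap k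
  pair_sub_pt : ∀ k l, pair (nb k - q) (pt l).mat = if k = l then gap k else 0
  eq_sum : ∀ Y : Matrix (Fin 4) (Fin 4) ℝ, Yᵀ = Y →
    Y = ∑ k, (pair (toReal (nb k - q)) Y / gap k) • toReal (pt k).mat

theorem sum_toReal_nbForm_sub_smul_stdPt (i : Fin 3) (a b : Fin 4) :
    ∑ k, (16 / (nbGap i k : ℝ) * toReal (nbForm i k - stdForm i) b a) • toReal (stdPt i k).mat =
      (8 : ℝ) • (single a b 1 + single b a 1) := by
  have h := congrArg toReal (sum_nbForm_sub_smul_stdPt i a b)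
  ext c d
  have hcd := congrFun (congrFun h c) d
  simp only [map_apply, Matrix.sum_apply, Matrix.smul_apply, Matrix.add_apply, smul_eq_mul,
    single_apply, eq_intCast] at hcd ⊢
  push_cast [Int.cast_div (nbGap_dvd i _) (Int.cast_ne_zero.2 (nbGap_pos i _).ne')] at hcd
  exact hcd

theorem stdForm_eq_sum_pair (i : Fin 3) (Y : Matrix (Fin 4) (Fin 4) ℝ) (hY : Yᵀ = Y) :
    Y = ∑ k, (pair (toReal (nbForm i k - stdForm i)) Y / nbGap i k) • toReal (stdPt i k).mat := by
  have h := sum_mul_pair_smul (sum_toReal_nbForm_sub_smul_stdPt i) Y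
  rw [hY, ← two_smul ℝ Y, smul_smul, show (8 : ℝ) * 2 = 16 by norm_num] at h
  refine smul_right_injective _ (show (16 : ℝ) ≠ 0 by norm_num) (h.symm.trans ?_)
  simp only [Finset.smul_sum, smul_smul]
  refine Finset.sum_congr rfl fun k _ => ?_
  congr 1
  ring

/-- The base changes from the neighbours of the standard top cells to the standard forms. -/
def nbUnit (i : Fin 3) (k : Fin 10) : GL (Fin 4) ℤ :=
  (GeneralLinearGroup.mk'' (nbMat i k) (isUnit_det_nbMat i k))⁻¹

theorem act_nbUnit (i : Fin 3) (k : Fin 10) :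
    act (nbUnit i k) (stdForm (nbType i k)) = nbForm i k := by
  rw [act, nbUnit, inv_inv]
  rfl

/-- The vertices and neighbours of the standard top cells. -/
def stdData (i : Fin 3) : TopData (stdForm i) where
  pt := stdPt i
  nb := nbForm i
  gap := nbGap i
  vertexSet_eq := vertexSet_stdForm i
  isTopForm_nb k := ⟨nbUnit i k, nbType i k, (act_nbUnit i k).symm⟩
  gap_pos := nbGap_pos i
  pair_sub_pt := pair_nbForm_sub i
  eq_sum := stdForm_eq_sum_pair i

namespace TopData

variable {q : Matrix (Fin 4) (Fin 4) ℤ}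

theorem act_eq_sum (g : GL (Fin 4) ℤ) (d : TopData q) (Y : Matrix (Fin 4) (Fin 4) ℝ)
    (hY : Yᵀ = Y) : Y = ∑ k, (pair (toReal (Voronoi.act g (d.nb k) - Voronoi.act g q)) Y /
      d.gap k) • toReal (g • d.pt k).mat := by
  set A := toReal g.1
  set B := toReal (g⁻¹).1
  have hAB : A * B = 1 := toReal_mul_toReal_inv g
  have hZ : (B * Y * Bᵀ)ᵀ = B * Y * Bᵀ := by
    simp only [transpose_mul, transpose_transpose, hY, mul_assoc]
  have hY' : Y = A * (B * Y * Bᵀ) * Aᵀ :=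
    calc Y = (A * B) * Y * (A * B)ᵀ := by rw [hAB, transpose_one, one_mul, mul_one]
      _ = A * (B * Y * Bᵀ) * Aᵀ := by simp only [transpose_mul, mul_assoc]
  have h := hY'.trans (congrArg (A * · * Aᵀ) (d.eq_sum _ hZ))
  simp only [← act_sub, pair_toReal_act, Point.toReal_mat_smul]
  refine h.trans ?_
  simp only [Finset.mul_sum, Finset.sum_mul, Matrix.mul_smul, Matrix.smul_mul]
  rfl

/-- Transport of the data of a top cell. -/
def act (g : GL (Fin 4) ℤ) (d : TopData q) : TopData (act g q) where
  pt k := g • d.pt k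
  nb k := Voronoi.act g (d.nb k)
  gap := d.gap
  vertexSet_eq := by
    rw [vertexSet_act, d.vertexSet_eq, ← Set.image_smul, ← Set.range_comp]
    rfl
  isTopForm_nb k := (d.isTopForm_nb k).act g
  gap_pos := d.gap_pos
  pair_sub_pt k l := by rw [← act_sub, pair_act_smul, d.pair_sub_pt]
  eq_sum := d.act_eq_sum g

theorem nonempty (hq : IsTopForm q) : Nonempty (TopData q) := by
  obtain ⟨g, i, rfl⟩ := hq
  exact ⟨(stdData i).act g⟩

variable (d : TopData q)

theorem pt_injective : Function.Injective d.pt := fun k l h => by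
  by_contra hkl
  have hkk := d.pair_sub_pt k l
  rw [← h, d.pair_sub_pt, if_pos rfl, if_neg hkl] at hkk
  exact (d.gap_pos k).ne' hkk

theorem pair_nb (k l : Fin 10) :
    pair (d.nb k) (d.pt l).mat = pair q (d.pt l).mat + if k = l then d.gap k else 0 := by
  rw [← d.pair_sub_pt, pair_sub_left, add_sub_cancel]

theorem pt_mem (k : Fin 10) : d.pt k ∈ vertexSet q := by
  rw [d.vertexSet_eq]
  exact ⟨k, rfl⟩

theorem pt_mem_nb {k l : Fin 10} (h : k ≠ l) : d.pt l ∈ vertexSet (d.nb k) :=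
  mem_vertexSet_of_pair_eq (d.pt_mem l) (by rw [d.pair_nb, if_neg h, add_zero])

theorem pt_notMem_nb (hq : IsTopForm q) (k : Fin 10) : d.pt k ∉ vertexSet (d.nb k) := fun h => by
  have hk := hq.pair_eq (d.isTopForm_nb k) (d.pt_mem k) h
  rw [d.pair_nb, if_pos rfl] at hk
  exact (d.gap_pos k).ne' (left_eq_add.1 hk)

theorem nb_ne (k : Fin 10) : d.nb k ≠ q := fun h => by
  have hk := d.pair_nb k k
  rw [h, if_pos rfl] at hk
  exact (d.gap_pos k).ne' (left_eq_add.1 hk)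

end TopData

/-! ### Finiteness -/

section Bounds

variable {n : Type*} [Fintype n]

theorem dotProduct_self_nonneg_cast (v : n → ℤ) : (0 : ℝ) ≤ ((v ⬝ᵥ v : ℤ) : ℝ) := by
  exact_mod_cast Finset.sum_nonneg fun j _ => mul_self_nonneg (v j)

theorem ev_nonneg_of_dotProduct_self_le {Y : Matrix n n ℝ} {c : ℝ} (hc : 0 ≤ c) {v : n → ℤ}
    (hv : ((v ⬝ᵥ v : ℤ) : ℝ) ≤ c * ev Y (vecReal v)) : 0 ≤ ev Y (vecReal v) := by
  by_contra! hneg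
  have h : ((v ⬝ᵥ v : ℤ) : ℝ) ≤ 0 := hv.trans (mul_nonpos_of_nonneg_of_nonpos hc hneg.le)
  have hv0 : v = 0 :=
    dotProduct_self_eq_zero.1 (by exact_mod_cast h.antisymm (dotProduct_self_nonneg_cast v))
  subst hv0
  simp [ev, vecReal, dotProduct] at hneg

theorem finite_dotProduct_self_le (t : ℝ) : {v : n → ℤ | ((v ⬝ᵥ v : ℤ) : ℝ) ≤ t}.Finite := by
  classical
  obtain ⟨T, hT⟩ := exists_nat_ge t
  refine (Set.finite_Icc (fun _ => -(T : ℤ)) (fun _ => (T : ℤ))).subset fun v hv => ?_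
  have hT' : v ⬝ᵥ v ≤ (T : ℤ) := by exact_mod_cast le_trans hv hT
  have hj (j : n) : |v j| ≤ (T : ℤ) :=
    calc |v j| ≤ |v j| ^ 2 := Int.le_self_sq _
      _ = v j * v j := by rw [sq_abs, sq]
      _ ≤ v ⬝ᵥ v := Finset.single_le_sum (f := fun j => v j * v j)
          (fun _ _ => mul_self_nonneg _) (Finset.mem_univ j)
      _ ≤ T := hT'
  exact ⟨fun j => (abs_le.1 (hj j)).1, fun j => (abs_le.1 (hj j)).2⟩

end Bounds

theorem det_domForm_ne_zero : ∀ i, (domForm i).det ≠ 0 := by decide +kernel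

theorem transpose_inv_mulVec_domForm_injective (i : Fin 3) :
    Function.Injective fun (g : GL (Fin 4) ℤ) r => (g⁻¹).1ᵀ *ᵥ domForm i r := fun g h hgh => by
  have hmul : (g⁻¹).1ᵀ * (domForm i)ᵀ = (h⁻¹).1ᵀ * (domForm i)ᵀ :=
    ext fun a r => congrFun (congrFun hgh r) a
  have hdet : ((domForm i)ᵀ).det ≠ 0 := by
    rw [det_transpose]
    exact det_domForm_ne_zero i
  have hsmul := congrArg (· * ((domForm i)ᵀ).adjugate) hmul
  simp only [mul_assoc, mul_adjugate, Matrix.mul_smul, mul_one] at hsmul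
  exact inv_injective (Units.ext (transpose_injective (smul_right_injective _ hdet hsmul)))

theorem pair_toReal_act_stdForm (g : GL (Fin 4) ℤ) (i : Fin 3) (Y : Matrix (Fin 4) (Fin 4) ℝ) :
    pair (toReal (act g (stdForm i))) Y =
      5 * ∑ r, ev Y (vecReal ((g⁻¹).1ᵀ *ᵥ domForm i r)) +
      ∑ s, (restCoeff i s : ℝ) * ev Y (vecReal ((g⁻¹).1ᵀ *ᵥ restForm i s)) := by
  have hact : act g (stdForm i) =
      ∑ r, (5 : ℤ) • act g (vecMulVec (domForm i r) (domForm i r)) +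
      ∑ s, (restCoeff i s : ℤ) • act g (vecMulVec (restForm i s) (restForm i s)) := by
    conv_lhs => rw [stdForm_eq_sum]
    simp only [act, mul_add, add_mul, Finset.mul_sum, Finset.sum_mul, Matrix.mul_smul,
      Matrix.smul_mul]
  have hreal : toReal (act g (stdForm i)) =
      ∑ r, (5 : ℝ) • toReal (act g (vecMulVec (domForm i r) (domForm i r))) +
      ∑ s, (restCoeff i s : ℝ) • toReal (act g (vecMulVec (restForm i s) (restForm i s))) := by
    rw [hact]
    ext a b
    simp only [map_apply, Matrix.add_apply, Matrix.sum_apply, Matrix.smul_apply, smul_eq_mul,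
      eq_intCast]
    push_cast
    rfl
  rw [hreal, pair_comm, pair_add, pair_sum, pair_sum]
  simp only [act_vecMulVec, toReal_vecMulVec, pair_smul, pair_vecMulVec, Finset.mul_sum]

section Finite

variable {Y : Matrix (Fin 4) (Fin 4) ℝ} {c : ℝ}

theorem dotProduct_self_mulVec_domForm_le (hc : 0 ≤ c)
    (hY : ∀ v : Fin 4 → ℤ, ((v ⬝ᵥ v : ℤ) : ℝ) ≤ c * ev Y (vecReal v)) (g : GL (Fin 4) ℤ)
    (i : Fin 3) (r : Fin 4) :
    ((((g⁻¹).1ᵀ *ᵥ domForm i r) ⬝ᵥ ((g⁻¹).1ᵀ *ᵥ domForm i r) : ℤ) : ℝ) ≤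
      c * pair (toReal (act g (stdForm i))) Y := by
  have hpos (v : Fin 4 → ℤ) : 0 ≤ ev Y (vecReal v) := ev_nonneg_of_dotProduct_self_le hc (hY v)
  have hsingle := Finset.single_le_sum
    (f := fun r => ev Y (vecReal ((g⁻¹).1ᵀ *ᵥ domForm i r))) (fun _ _ => hpos _)
    (Finset.mem_univ r)
  have hrest : 0 ≤ ∑ s, (restCoeff i s : ℝ) * ev Y (vecReal ((g⁻¹).1ᵀ *ᵥ restForm i s)) :=
    Finset.sum_nonneg fun s _ => mul_nonneg (Nat.cast_nonneg _) (hpos _)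
  refine (hY _).trans (mul_le_mul_of_nonneg_left ?_ hc)
  rw [pair_toReal_act_stdForm]
  linarith [hpos ((g⁻¹).1ᵀ *ᵥ domForm i r)]

theorem finite_pair_act_le (hc : 0 ≤ c)
    (hY : ∀ v : Fin 4 → ℤ, ((v ⬝ᵥ v : ℤ) : ℝ) ≤ c * ev Y (vecReal v)) (t : ℝ) :
    {g : GL (Fin 4) ℤ | ∃ i, pair (toReal (act g (stdForm i))) Y ≤ t}.Finite := by
  refine (Set.finite_iUnion fun i : Fin 3 =>
    Set.Finite.of_finite_image (s := {g | pair (toReal (act g (stdForm i))) Y ≤ t})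
      ((Set.Finite.pi' fun _ : Fin 4 => finite_dotProduct_self_le (c * t)).subset ?_)
      (transpose_inv_mulVec_domForm_injective i).injOn).subset fun g hg => Set.mem_iUnion.2 hg
  rintro _ ⟨g, hg, rfl⟩ r
  exact (dotProduct_self_mulVec_domForm_le hc hY g i r).trans (mul_le_mul_of_nonneg_left hg hc)

theorem finite_isTopForm_of_finite_act {p : Matrix (Fin 4) (Fin 4) ℤ → Prop}
    (h : {g | ∃ i, p (act g (stdForm i))}.Finite) : {q | IsTopForm q ∧ p q}.Finite := by
  refine ((h.prod (Set.finite_univ (α := Fin 3))).image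
    fun x => act x.1 (stdForm x.2)).subset ?_
  rintro _ ⟨⟨g, i, rfl⟩, hp⟩
  exact ⟨(g, i), ⟨⟨i, hp⟩, trivial⟩, rfl⟩

end Finite

/-! ### The height of a top cell -/

section Generic

theorem exists_linearIndependent_between {κ : Type*} [Finite κ] {a : κ → ℝ}
    (ha : ∀ k, 0 ≤ a k) : ∃ y : κ → ℝ, LinearIndependent ℚ y ∧ ∀ k, a k < y k ∧ y k < a k + 1 := by
  obtain ⟨x, hx⟩ : ∃ x : Fin (Nat.card κ) → ℝ, LinearIndependent ℚ x := by
    rw [← Module.le_rank_iff, Real.rank_rat_real]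
    exact Cardinal.natCast_le_aleph0.trans Cardinal.aleph0_le_continuum
  replace hx := hx.comp _ (Finite.equivFin κ).injective
  set x := x ∘ Finite.equivFin κ
  have hc (k : κ) : ∃ c : ℚ, a k < c * x k ∧ c * x k < a k + 1 := by
    rcases lt_or_gt_of_ne (hx.ne_zero k) with h | h
    · obtain ⟨c, h₁, h₂⟩ := exists_rat_btwn ((div_lt_div_right_of_neg h).2 (lt_add_one (a k)))
      exact ⟨c, (lt_div_iff_of_neg h).1 h₂, (div_lt_iff_of_neg h).1 h₁⟩
    · obtain ⟨c, h₁, h₂⟩ := exists_rat_btwn ((div_lt_div_iff_of_pos_right h).2 (lt_add_one (a k)))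
      exact ⟨c, (div_lt_iff₀ h).1 h₁, (lt_div_iff₀ h).1 h₂⟩
  choose c hc using hc
  have hc₀ (k : κ) : c k ≠ 0 := fun h => by
    have hk := (hc k).1
    rw [h, Rat.cast_zero, zero_mul] at hk
    exact hk.not_ge (ha k)
  refine ⟨fun k => c k * x k, ?_, hc⟩
  convert hx.units_smul fun k => Units.mk0 (c k) (hc₀ k) using 1
  ext k
  exact (Rat.smul_def (c k) (x k)).symm

variable {n : Type*} [Fintype n]

theorem dotProduct_self_le_ev_of_abs_sub_le [DecidableEq n] {B : Matrix n n ℝ}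
    (hB : ∀ a b, |B a b - if a = b then (Fintype.card n + 1 : ℝ) else 0| ≤ 1) (v : n → ℝ) :
    v ⬝ᵥ v ≤ ev B v := by
  set N : ℝ := (Fintype.card n : ℝ)
  have hterm (a b : n) :
      (if a = b then (N + 1) * (v a * v b) else 0) - |v a| * |v b| ≤ v a * (B a b * v b) := by
    have h := (neg_abs_le ((B a b - if a = b then N + 1 else 0) * (v a * v b)))
    rw [abs_mul, abs_mul] at h
    have h' := mul_le_mul_of_nonneg_right (hB a b)
      (mul_nonneg (abs_nonneg (v a)) (abs_nonneg (v b)))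
    split_ifs at h h' ⊢ <;> linarith
  have hsq : (∑ a, |v a|) ^ 2 ≤ N * (v ⬝ᵥ v) := by
    refine sq_sum_le_card_mul_sum_sq.trans ?_
    simp only [sq_abs, dotProduct, ← sq, N, Finset.card_univ, le_refl]
  have hsum : (N + 1) * (v ⬝ᵥ v) - (∑ a, |v a|) ^ 2 ≤ ev B v :=
    calc (N + 1) * (v ⬝ᵥ v) - (∑ a, |v a|) ^ 2
        = ∑ a, ∑ b, ((if a = b then (N + 1) * (v a * v b) else 0) - |v a| * |v b|) := by
          rw [sq, Finset.sum_mul_sum]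
          simp [Finset.sum_sub_distrib, dotProduct, Finset.mul_sum]
      _ ≤ ∑ a, ∑ b, v a * (B a b * v b) :=
          Finset.sum_le_sum fun a _ => Finset.sum_le_sum fun b _ => hterm a b
      _ = ev B v := by simp only [ev, dotProduct, mulVec, Finset.mul_sum]
  linarith

/-- The pairing with the matrix of `y` has coefficient `2 N a b` (or `N a a`) at `s(a, b)`. -/
theorem eq_zero_of_pair_sym2_eq_zero {y : Sym2 n → ℝ} (hy : LinearIndependent ℚ y)
    {N : Matrix n n ℤ} (hN : Nᵀ = N) (h : pair (toReal N) (of fun a b => y s(a, b)) = 0) :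
    N = 0 := by
  classical
  have hsum : ∑ z : Sym2 n, (∑ p : n × n with s(p.1, p.2) = z, (N p.2 p.1 : ℚ)) • y z = 0 := by
    rw [← h, pair_eq_sum, ← Fintype.sum_prod_type',
      ← Finset.sum_fiberwise _ fun p : n × n => s(p.1, p.2)]
    refine Finset.sum_congr rfl fun z _ => ?_
    rw [Finset.sum_smul]
    refine Finset.sum_congr rfl fun p hp => ?_
    rw [← (Finset.mem_filter.1 hp).2, Rat.smul_def]
    simp
  ext a b
  have hab := Fintype.linearIndependent_iff.1 hy _ hsum s(a, b)
  have hfib : ∀ p ∈ Finset.univ.filter fun p : n × n => s(p.1, p.2) = s(a, b),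
      (N p.2 p.1 : ℚ) = N a b := fun p hp => by
    rcases Sym2.eq_iff.1 (Finset.mem_filter.1 hp).2 with ⟨h₁, h₂⟩ | ⟨h₁, h₂⟩
    · rw [h₁, h₂, ← transpose_apply N, hN]
    · rw [h₁, h₂]
  rw [Finset.sum_congr rfl hfib, Finset.sum_const, nsmul_eq_mul, mul_eq_zero] at hab
  have hmem : (a, b) ∈ Finset.univ.filter fun p : n × n => s(p.1, p.2) = s(a, b) :=
    Finset.mem_filter.2 ⟨Finset.mem_univ _, rfl⟩
  simpa using hab.resolve_left (Nat.cast_ne_zero.2 (Finset.card_ne_zero_of_mem hmem))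

theorem exists_generic (n : Type*) [Fintype n] : ∃ B : Matrix n n ℝ, Bᵀ = B ∧
    (∀ v : n → ℤ, ((v ⬝ᵥ v : ℤ) : ℝ) ≤ ev B (vecReal v)) ∧
    ∀ N : Matrix n n ℤ, Nᵀ = N → pair (toReal N) B = 0 → N = 0 := by
  classical
  obtain ⟨y, hy, hb⟩ := exists_linearIndependent_between (κ := Sym2 n)
    (a := fun z => if z.IsDiag then (Fintype.card n + 1 : ℝ) else 0)
    fun z => by split_ifs <;> positivity
  refine ⟨of fun a b => y s(a, b), ext fun a b => congrArg y Sym2.eq_swap, fun v => ?_,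
    fun N hN h => eq_zero_of_pair_sym2_eq_zero hy hN h⟩
  convert dotProduct_self_le_ev_of_abs_sub_le (fun a b => ?_) (vecReal v)
  · simp [dotProduct]
  · have hab := hb s(a, b)
    simp only [Sym2.mk_isDiag_iff] at hab
    rw [of_apply, abs_le]
    constructor <;> linarith

end Generic

/-- A positive definite matrix on which no nonzero integral form vanishes. -/
def generic : Matrix (Fin 4) (Fin 4) ℝ := (exists_generic (Fin 4)).choose

theorem generic_transpose : genericᵀ = generic := (exists_generic (Fin 4)).choose_spec.1

theorem dotProduct_self_le_ev_generic (v : Fin 4 → ℤ) :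
    ((v ⬝ᵥ v : ℤ) : ℝ) ≤ ev generic (vecReal v) :=
  (exists_generic (Fin 4)).choose_spec.2.1 v

/-- The value of a form on the generic matrix, which orders the top cells linearly. -/
def height (q : Matrix (Fin 4) (Fin 4) ℤ) : ℝ := pair (toReal q) generic

theorem pair_generic_sub (q q' : Matrix (Fin 4) (Fin 4) ℤ) :
    pair (toReal (q - q')) generic = height q - height q' := by
  rw [toReal_sub, pair_sub_left, height, height]

theorem eq_of_height_eq {q q' : Matrix (Fin 4) (Fin 4) ℤ} (hq : IsTopForm q) (hq' : IsTopForm q')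
    (h : height q = height q') : q = q' :=
  sub_eq_zero.1 ((exists_generic (Fin 4)).choose_spec.2.2 _
    (by rw [transpose_sub, hq.transpose_eq, hq'.transpose_eq])
    ((pair_generic_sub q q').trans (sub_eq_zero.2 h)))

theorem finite_height_le (t : ℝ) : {q | IsTopForm q ∧ height q ≤ t}.Finite :=
  finite_isTopForm_of_finite_act <| finite_pair_act_le zero_le_one
    (fun v => by simpa using dotProduct_self_le_ev_generic v) t

/-! ### Cells -/

/-- The sets of points with a finite subset whose sum is positive definite, uniformly on integral
vectors. -/
def IsInner (S : Set (Point (Fin 4))) : Prop := ∃ (c : ℕ) (F : Finset (Point (Fin 4))), ↑F ⊆ S ∧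
  ∀ v : Fin 4 → ℤ, v ⬝ᵥ v ≤ c * ∑ u ∈ F, ev u.mat v

namespace IsInner

variable {S T : Set (Point (Fin 4))}

theorem mono (hS : IsInner S) (h : S ⊆ T) : IsInner T := by
  obtain ⟨c, F, hF, hv⟩ := hS
  exact ⟨c, F, hF.trans h, hv⟩

theorem finite_act (hS : IsInner S) :
    {g : GL (Fin 4) ℤ | ∃ i, S ⊆ vertexSet (act g (stdForm i))}.Finite := by
  rcases Set.eq_empty_or_nonempty {g : GL (Fin 4) ℤ | ∃ i, S ⊆ vertexSet (act g (stdForm i))}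
    with h | ⟨g₀, i₀, h₀⟩
  · exact h ▸ Set.finite_empty
  obtain ⟨c, F, hF, hv⟩ := hS
  refine (finite_pair_act_le (Y := ∑ u ∈ F, toReal u.mat) c.cast_nonneg (fun v => ?_)
    (pair (toReal (act g₀ (stdForm i₀))) (∑ u ∈ F, toReal u.mat))).subset ?_
  · simp only [ev_sum, ev_toReal]
    exact_mod_cast hv v
  · rintro g ⟨i, hi⟩
    refine ⟨i, le_of_eq ?_⟩
    simp only [pair_sum, pair_toReal]
    refine Finset.sum_congr rfl fun u hu => ?_
    rw [IsTopForm.pair_eq ⟨g, i, rfl⟩ ⟨g₀, i₀, rfl⟩ (hi (hF hu)) (h₀ (hF hu))]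

theorem finite_isTopForm (hS : IsInner S) : {q | IsTopForm q ∧ S ⊆ vertexSet q}.Finite :=
  finite_isTopForm_of_finite_act hS.finite_act

end IsInner

theorem IsTopForm.finite_vertexSet {q : Matrix (Fin 4) (Fin 4) ℤ} (hq : IsTopForm q) :
    (vertexSet q).Finite := by
  obtain ⟨d⟩ := TopData.nonempty hq
  rw [d.vertexSet_eq]
  exact Set.finite_range _

/-- The sets of vertices of a top cell with positive definite sum. -/
def cells : CellFamily (Point (Fin 4)) where
  Cell S := IsInner S ∧ ∃ q, IsTopForm q ∧ S ⊆ vertexSet q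
  convex hS h₁ h₂ hT := by
    obtain ⟨q, hq, hsub⟩ := hT.2
    exact ⟨hS.1.mono h₁, q, hq, h₂.trans hsub⟩
  finite_link {S} hS := by
    refine (hS.1.finite_isTopForm.biUnion fun q hq => hq.1.finite_vertexSet).subset ?_
    rintro v ⟨-, q, hq, hv⟩
    exact Set.mem_biUnion (show q ∈ {q | IsTopForm q ∧ S ⊆ vertexSet q} from
      ⟨hq, (Set.subset_insert _ _).trans hv⟩) (hv (Set.mem_insert _ _))

/-! ### The shelling by heights -/

/-- The forms of the top cells. -/
abbrev TopForm : Type := {q : Matrix (Fin 4) (Fin 4) ℤ // IsTopForm q}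

/-- Chosen data of a top cell. -/
def topData (q : TopForm) : TopData q.1 := Classical.choice (TopData.nonempty q.2)

/-- The vertices opposite to the facets through which the height decreases. -/
def downSet (q : TopForm) : Set (Point (Fin 4)) :=
  {X | ∃ k, X = (topData q).pt k ∧ height ((topData q).nb k) < height q.1}

/-- The coordinates of the generic matrix in the vertices of a top cell. -/
def TopData.coord {q : Matrix (Fin 4) (Fin 4) ℤ} (d : TopData q) (k : Fin 10) : ℝ :=
  (height (d.nb k) - height q) / d.gap k

theorem TopData.generic_eq_sum {q : Matrix (Fin 4) (Fin 4) ℤ} (d : TopData q) :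
    generic = ∑ k, d.coord k • toReal (d.pt k).mat := by
  conv_lhs => rw [d.eq_sum generic generic_transpose]
  simp only [pair_generic_sub, coord]

theorem coord_neg_of_mem_downSet {q : TopForm} {k : Fin 10}
    (h : (topData q).pt k ∈ downSet q) : (topData q).coord k < 0 := by
  obtain ⟨l, hl, hlt⟩ := h
  obtain rfl := (topData q).pt_injective hl
  exact div_neg_of_neg_of_pos (sub_neg.2 hlt) (Int.cast_pos.2 ((topData q).gap_pos k))

theorem isInner_of_diff_subset_downSet {q : TopForm} {S : Set (Point (Fin 4))}
    (hS : vertexSet q.1 \ S ⊆ downSet q) : IsInner S := by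
  classical
  set d := topData q
  obtain ⟨c, hc⟩ := exists_nat_ge (∑ k, |d.coord k|)
  refine ⟨c, ({k | d.pt k ∈ S} : Finset (Fin 10)).image d.pt, fun X hX => ?_, fun v => ?_⟩
  · obtain ⟨k, hk, rfl⟩ := Finset.mem_image.1 hX
    exact (Finset.mem_filter.1 hk).2
  have hterm (k : Fin 10) : d.coord k * (ev (d.pt k).mat v : ℤ) ≤
      c * ((if d.pt k ∈ S then ev (d.pt k).mat v else 0 : ℤ) : ℝ) := by
    have hev : (0 : ℝ) ≤ (ev (d.pt k).mat v : ℤ) :=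
      Int.cast_nonneg (IsVertex.ev_nonneg (d.pt_mem k) v)
    split_ifs with hk
    · refine mul_le_mul_of_nonneg_right ((le_abs_self _).trans (le_trans ?_ hc)) hev
      exact Finset.single_le_sum (f := fun k => |d.coord k|) (fun _ _ => abs_nonneg _)
        (Finset.mem_univ k)
    · have hneg := coord_neg_of_mem_downSet (hS ⟨d.pt_mem k, hk⟩)
      simpa using mul_nonpos_of_nonpos_of_nonneg hneg.le hev
  have hle := dotProduct_self_le_ev_generic v
  rw [d.generic_eq_sum, ev_sum] at hle
  simp only [ev_smul, ev_toReal] at hle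
  rw [Finset.sum_image d.pt_injective.injOn, Finset.sum_filter]
  have hle' := hle.trans (Finset.sum_le_sum fun k _ => hterm k)
  rw [← Finset.mul_sum] at hle'
  exact_mod_cast hle'

theorem height_le_of_diff_subset_downSet {q q' : TopForm} {S : Set (Point (Fin 4))}
    (hS : S ⊆ vertexSet q.1) (hD : vertexSet q.1 \ S ⊆ downSet q) (hS' : S ⊆ vertexSet q'.1) :
    height q'.1 ≤ height q.1 := by
  rw [← sub_nonpos, ← pair_generic_sub, (topData q).generic_eq_sum, pair_sum]
  refine Finset.sum_nonpos fun k _ => ?_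
  rw [pair_smul, pair_toReal, pair_sub_left]
  by_cases hk : (topData q).pt k ∈ S
  · rw [q'.2.pair_eq q.2 (hS' hk) (hS hk), sub_self, Int.cast_zero, mul_zero]
  · refine mul_nonpos_of_nonpos_of_nonneg
      (coord_neg_of_mem_downSet (hD ⟨(topData q).pt_mem k, hk⟩)).le ?_
    exact Int.cast_nonneg (sub_nonneg.2 (q'.2.pair_le ((topData q).pt_mem k)))

theorem exists_highest {S : Set (Point (Fin 4))} (hS : cells.Cell S) :
    ∃ q : TopForm, S ⊆ vertexSet q.1 ∧
      ∀ q' : TopForm, S ⊆ vertexSet q'.1 → height q'.1 ≤ height q.1 := by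
  obtain ⟨q, hq, hmax⟩ := Set.exists_max_image _ height hS.1.finite_isTopForm hS.2
  exact ⟨⟨q, hq.1⟩, hq.2, fun q' h => hmax q'.1 ⟨q'.2, h⟩⟩

theorem isTopForm_stdForm (i : Fin 3) : IsTopForm (stdForm i) := ⟨1, i, by simp [act]⟩

open Classical in
/-- The highest top cell that contains a cell, with a junk value at other sets. -/
def highest (S : Set (Point (Fin 4))) : TopForm :=
  if hS : cells.Cell S then (exists_highest hS).choose else ⟨stdForm 0, isTopForm_stdForm 0⟩

theorem subset_highest {S : Set (Point (Fin 4))} (hS : cells.Cell S) :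
    S ⊆ vertexSet (highest S).1 := by
  rw [highest, dif_pos hS]
  exact (exists_highest hS).choose_spec.1

theorem height_le_highest {S : Set (Point (Fin 4))} (hS : cells.Cell S) {q : TopForm}
    (h : S ⊆ vertexSet q.1) : height q.1 ≤ height (highest S).1 := by
  rw [highest, dif_pos hS]
  exact (exists_highest hS).choose_spec.2 q h

theorem vertexSet_highest_diff_subset {S : Set (Point (Fin 4))} (hS : cells.Cell S) :
    vertexSet (highest S).1 \ S ⊆ downSet (highest S) := by
  rintro X ⟨hX, hXS⟩
  set d := topData (highest S)
  rw [d.vertexSet_eq] at hX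
  obtain ⟨k, rfl⟩ := hX
  refine ⟨k, rfl, lt_of_le_of_ne ?_ fun h => ?_⟩
  · refine height_le_highest hS (q := ⟨d.nb k, d.isTopForm_nb k⟩) fun Y hY => ?_
    have hY' := subset_highest hS hY
    rw [d.vertexSet_eq] at hY'
    obtain ⟨l, rfl⟩ := hY'
    exact d.pt_mem_nb fun hkl => hXS (hkl ▸ hY)
  · exact d.nb_ne k (eq_of_height_eq (d.isTopForm_nb k) (highest S).2 h)

/-- The position of a top cell in the order by heights. -/
def lowerCard (q : TopForm) : ℕ := {q' | IsTopForm q' ∧ height q' < height q.1}.ncard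

theorem finite_height_lt (t : ℝ) : {q | IsTopForm q ∧ height q < t}.Finite :=
  (finite_height_le t).subset fun _ h => ⟨h.1, h.2.le⟩

theorem lowerCard_le {q q' : TopForm} (h : height q.1 ≤ height q'.1) :
    lowerCard q ≤ lowerCard q' :=
  Set.ncard_le_ncard (fun _ hx => ⟨hx.1, hx.2.trans_le h⟩) (finite_height_lt _)

theorem lowerCard_lt {q q' : TopForm} (h : height q.1 < height q'.1) :
    lowerCard q < lowerCard q' := by
  refine Set.ncard_lt_ncard ⟨fun _ hx => ⟨hx.1, hx.2.trans h⟩, fun hsub => ?_⟩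
    (finite_height_lt _)
  exact lt_irrefl _ (hsub (show q.1 ∈ {x | IsTopForm x ∧ height x < height q'.1} from ⟨q.2, h⟩)).2

theorem lowerCard_injective : Function.Injective lowerCard := fun q q' h => by
  rcases lt_trichotomy (height q.1) (height q'.1) with hlt | heq | hlt
  · exact absurd h (lowerCard_lt hlt).ne
  · exact Subtype.ext (eq_of_height_eq q.2 q'.2 heq)
  · exact absurd h (lowerCard_lt hlt).ne'

/-- The shelling of the cells by the height: a cell belongs to the highest top cell that
contains it. -/
def shelling : cells.Shelling TopForm where
  top q := vertexSet q.1
  free := downSet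
  piece := highest
  rank := lowerCard
  rank_injective := lowerCard_injective
  free_subset q := by
    rintro X ⟨k, rfl, -⟩
    exact (topData q).pt_mem k
  subset_top hS := subset_highest hS
  diff_subset_free hS := vertexSet_highest_diff_subset hS
  cell_and_piece_eq {S τ} hS hD := by
    have hc : cells.Cell S := ⟨isInner_of_diff_subset_downSet hD, τ.1, τ.2, hS⟩
    refine ⟨hc, Subtype.ext (eq_of_height_eq (highest S).2 τ.2 (le_antisymm ?_ ?_))⟩
    · exact height_le_of_diff_subset_downSet hS hD (subset_highest hc)
    · exact height_le_highest hc hS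
  rank_antitone hS hT h := lowerCard_le (height_le_highest hS (h.trans (subset_highest hT)))

theorem ncard_vertexSet {q : Matrix (Fin 4) (Fin 4) ℤ} (hq : IsTopForm q) :
    (vertexSet q).ncard = 10 := by
  obtain ⟨d⟩ := TopData.nonempty hq
  rw [d.vertexSet_eq, Set.ncard_range_of_injective d.pt_injective, Nat.card_fin]

theorem ncard_range_le {P : Type*} {m : ℕ} (x : Fin m → P) : (Set.range x).ncard ≤ m := by
  rw [← Set.image_univ]
  exact (Set.ncard_image_le Set.finite_univ).trans_eq (by rw [Set.ncard_univ, Nat.card_fin])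

theorem exists_boundary_eq {k : Type*} [Field k] [CharZero k] {m : ℕ} (hm : m < 9)
    {φ : cells.Chain k (m + 1)} (hφ : CellFamily.boundary m φ = 0) :
    ∃ ψ, CellFamily.boundary (m + 1) ψ = φ := by
  refine shelling.exists_boundary_eq hφ fun x hx => ?_
  have hlt : (Set.range x).ncard < (vertexSet (highest (Set.range x)).1).ncard := by
    rw [ncard_vertexSet (highest _).2]
    exact (ncard_range_le x).trans_lt (by omega)
  obtain ⟨X, hX, hXS⟩ := Set.exists_mem_notMem_of_ncard_lt_ncard hlt
  exact ⟨X, vertexSet_highest_diff_subset hx ⟨hX, hXS⟩⟩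

/-! ### Invariance of the cells -/

theorem dotProduct_mulVec_self_le {n : Type*} [Fintype n] (A : Matrix n n ℤ) (w : n → ℤ) :
    (A *ᵥ w) ⬝ᵥ (A *ᵥ w) ≤ (∑ a, ∑ b, A a b ^ 2) * (w ⬝ᵥ w) := by
  rw [dotProduct, Finset.sum_mul]
  refine Finset.sum_le_sum fun a _ => ?_
  have h := Finset.sum_mul_sq_le_sq_mul_sq Finset.univ (A a) w
  simp only [dotProduct, mulVec, ← sq] at h ⊢
  exact h

theorem IsInner.smul (g : GL (Fin 4) ℤ) {S : Set (Point (Fin 4))} (hS : IsInner S) :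
    IsInner (g • S) := by
  classical
  obtain ⟨c, F, hF, hv⟩ := hS
  set A : Matrix (Fin 4) (Fin 4) ℤ := (g⁻¹).1ᵀ
  refine ⟨(∑ a, ∑ b, A a b ^ 2).toNat * c, F.image (g • ·), ?_, fun v => ?_⟩
  · rw [Finset.coe_image]
    exact Set.image_mono hF
  · have hA : 0 ≤ ∑ a, ∑ b, A a b ^ 2 := by positivity
    rw [Finset.sum_image (MulAction.injective g).injOn]
    simp only [Point.mat_smul, ev_mul_mul_transpose]
    have hvA : A *ᵥ (g.1ᵀ *ᵥ v) = v := by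
      rw [mulVec_mulVec, ← transpose_mul, Units.mul_inv, transpose_one, one_mulVec]
    have hle := dotProduct_mulVec_self_le A (g.1ᵀ *ᵥ v)
    rw [hvA] at hle
    push_cast
    rw [Int.toNat_of_nonneg hA, mul_assoc]
    exact hle.trans (mul_le_mul_of_nonneg_left (hv _) hA)

instance : cells.IsInvariant (GL (Fin 4) ℤ) where
  smul_cell g S hS := by
    obtain ⟨hinner, q, hq, hsub⟩ := hS
    refine ⟨hinner.smul g, act g q, hq.act g, ?_⟩
    rw [vertexSet_act]
    exact Set.smul_set_mono hsub

/-! ### The orientation character -/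

section Congruence

variable {n R : Type*} [CommRing R]

variable (n R) in
/-- The module of symmetric matrices. -/
def symSubmodule : Submodule R (Matrix n n R) where
  carrier := {Y | Yᵀ = Y}
  zero_mem' := isSymm_zero
  add_mem' := IsSymm.add
  smul_mem' c _ h := IsSymm.smul h c

variable [Fintype n] [DecidableEq n]

/-- The congruence action `Y ↦ A Y Aᵀ` of matrices on symmetric matrices. -/
def congrHom : Matrix n n R →* Module.End R (symSubmodule n R) where
  toFun A :=
    { toFun := fun Y => ⟨A * Y.1 * Aᵀ, by
        change (A * Y.1 * Aᵀ)ᵀ = A * Y.1 * Aᵀ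
        rw [transpose_mul, transpose_mul, transpose_transpose, show Y.1ᵀ = Y.1 from Y.2, mul_assoc]⟩
      map_add' := fun Y Z => Subtype.ext <| by simp [mul_add, add_mul]
      map_smul' := fun c Y => Subtype.ext <| by simp }
  map_one' := LinearMap.ext fun Y => Subtype.ext <| by simp
  map_mul' A C := LinearMap.ext fun Y => Subtype.ext <| by simp [transpose_mul, mul_assoc]

theorem coe_congrHom_apply (A : Matrix n n R) (Y : symSubmodule n R) :
    (congrHom A Y : Matrix n n R) = A * Y * Aᵀ := rfl

end Congruence

section Sign

variable {k : Type*} [Ring k]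

variable (k) in
/-- The sign of a real number, as an element of `k`. -/
def sgn : ℝ →*₀ k := (SignType.castHom : SignType →*₀ k).comp signHom

theorem sgn_of_neg {x : ℝ} (h : x < 0) : sgn k x = -1 := by
  simp [sgn, h]

theorem sgn_unit (u : ℤˣ) : sgn k ((u : ℤ) : ℝ) = ((u : ℤ) : k) := by
  rcases Int.units_eq_one_or u with rfl | rfl <;> simp [sgn]

end Sign

section Orient

variable {n k : Type*} [Fintype n] [DecidableEq n] [CommRing k]

variable (k) in
/-- The sign of the determinant of the congruence action of a real matrix on symmetric matrices. -/
def symSign : Matrix n n ℝ →* k := (sgn k : ℝ →* k).comp (LinearMap.det.comp congrHom)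

variable (n k) in
/-- The character of `GL(n,ℤ)` on the orientations of the space of symmetric matrices. -/
def orient : GL n ℤ →* k :=
  (symSign k).comp
    (((Int.castRingHom ℝ).mapMatrix : Matrix n n ℤ →+* _).toMonoidHom.comp (Units.coeHom _))

theorem orient_apply (g : GL n ℤ) : orient n k g = symSign k (toReal g.1) := rfl

end Orient

/-- The symmetric part of a point. -/
def symPt {n : Type*} (X : Point n) : symSubmodule n ℝ :=
  ⟨(2⁻¹ : ℝ) • (toReal X.mat + (toReal X.mat)ᵀ), IsSymm.smul (isSymm_add_transpose_self _) _⟩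

theorem symPt_smul {n : Type*} [Fintype n] [DecidableEq n] (g : GL n ℤ) (X : Point n) :
    symPt (g • X) = congrHom (toReal g.1) (symPt X) := by
  refine Subtype.ext ?_
  simp only [coe_congrHom_apply, symPt, Point.toReal_mat_smul, transpose_mul, transpose_transpose,
    Matrix.mul_smul, Matrix.smul_mul, mul_add, add_mul, mul_assoc]

variable {q : Matrix (Fin 4) (Fin 4) ℤ}

theorem toReal_transpose_of_mem {X : Point (Fin 4)} (hX : X ∈ vertexSet q) :
    (toReal X.mat)ᵀ = toReal X.mat :=
  congrArg toReal (IsVertex.transpose_mat hX)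

theorem coe_symPt {X : Point (Fin 4)} (hX : X ∈ vertexSet q) :
    (symPt X : Matrix (Fin 4) (Fin 4) ℝ) = toReal X.mat := by
  change (2⁻¹ : ℝ) • (toReal X.mat + (toReal X.mat)ᵀ) = toReal X.mat
  rw [toReal_transpose_of_mem hX, ← two_smul ℝ, inv_smul_smul₀ two_ne_zero]

namespace TopData

variable (d : TopData q)

theorem linearIndependent : LinearIndependent ℝ fun k => symPt (d.pt k) := by
  refine Fintype.linearIndependent_iff.2 fun c hc k => ?_
  have hsum : ∑ l, c l • toReal (d.pt l).mat = 0 := by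
    simpa only [Submodule.coe_sum, Submodule.coe_smul, coe_symPt (d.pt_mem _),
      Submodule.coe_zero] using congrArg Subtype.val hc
  have hpair := congrArg (pair (toReal (d.nb k - q))) hsum
  simp only [pair_sum, pair_smul, pair_toReal, d.pair_sub_pt] at hpair
  simpa [pair, (d.gap_pos k).ne'] using hpair

theorem eq_sum_symPt (Y : symSubmodule (Fin 4) ℝ) :
    Y = ∑ k, (pair (toReal (d.nb k - q)) Y.1 / d.gap k) • symPt (d.pt k) := by
  refine Subtype.ext ?_
  simp only [Submodule.coe_sum, Submodule.coe_smul, coe_symPt (d.pt_mem _)]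
  exact d.eq_sum Y.1 Y.2

/-- The basis of the symmetric matrices given by the vertices of a top cell. -/
def basis : Module.Basis (Fin 10) ℝ (symSubmodule (Fin 4) ℝ) :=
  Module.Basis.mk d.linearIndependent fun Y _ => by
    rw [d.eq_sum_symPt Y]
    exact Submodule.sum_mem _ fun k _ => Submodule.smul_mem _ _ (Submodule.subset_span ⟨k, rfl⟩)

theorem coe_basis : ⇑d.basis = symPt ∘ d.pt := Module.Basis.coe_mk _ _

theorem exists_perm {x : Fin 10 → Point (Fin 4)} (hx : Function.Injective x)
    (hr : Set.range x = vertexSet q) : ∃ σ : Equiv.Perm (Fin 10), x = d.pt ∘ σ := by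
  rw [d.vertexSet_eq] at hr
  choose f hf using fun i => show x i ∈ Set.range d.pt from hr ▸ ⟨i, rfl⟩
  have hinj : Function.Injective f := fun i j hij => hx (by rw [← hf, ← hf, hij])
  exact ⟨Equiv.ofBijective f (Finite.injective_iff_bijective.1 hinj), funext fun i => (hf i).symm⟩

end TopData

/-- The oriented volume of the parallelepiped spanned by ten points. -/
def vol (x : Fin 10 → Point (Fin 4)) : ℝ := (stdData 0).basis.det (symPt ∘ x)

theorem vol_smul (g : GL (Fin 4) ℤ) (x : Fin 10 → Point (Fin 4)) :
    vol (g • x) = LinearMap.det (congrHom (toReal g.1)) * vol x := by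
  rw [vol, vol, ← Module.Basis.det_comp]
  exact congrArg _ (funext fun j => symPt_smul g (x j))

theorem vol_comp_perm (x : Fin 10 → Point (Fin 4)) (σ : Equiv.Perm (Fin 10)) :
    vol (x ∘ σ) = ((Equiv.Perm.sign σ : ℤ) : ℝ) * vol x := by
  rw [vol, vol, ← Function.comp_assoc, AlternatingMap.map_perm, Units.smul_def, zsmul_eq_mul]

theorem TopData.vol_pt_ne_zero (d : TopData q) : vol d.pt ≠ 0 := by
  rw [vol, ← d.coe_basis]
  exact ((stdData 0).basis.isUnit_det d.basis).ne_zero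

theorem IsTopForm.vol_ne_zero (hq : IsTopForm q) {x : Fin 10 → Point (Fin 4)}
    (hx : Function.Injective x) (hr : Set.range x = vertexSet q) : vol x ≠ 0 := by
  obtain ⟨d⟩ := TopData.nonempty hq
  obtain ⟨σ, rfl⟩ := d.exists_perm hx hr
  rw [vol_comp_perm]
  exact mul_ne_zero (Int.cast_ne_zero.2 (Equiv.Perm.sign σ).ne_zero) d.vol_pt_ne_zero

section OrientValues

variable (k : Type*) [Field k]

theorem sgn_vol_smul (g : GL (Fin 4) ℤ) (x : Fin 10 → Point (Fin 4)) :
    sgn k (vol (g • x)) = orient (Fin 4) k g * sgn k (vol x) := by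
  rw [vol_smul, map_mul]
  rfl

/-- The matrix exchanging the first two coordinates. -/
def swapMat : Matrix (Fin 4) (Fin 4) ℤ := !![0, 1, 0, 0; 1, 0, 0, 0; 0, 0, 1, 0; 0, 0, 0, 1]

/-- The permutation of the vertices of the first standard top cell under `swapMat`. -/
def swapPerm : Equiv.Perm (Fin 10) := Equiv.swap 9 5 * Equiv.swap 7 3 * Equiv.swap 8 4

theorem swapMat_mul_stdPt :
    ∀ j, swapMat * (stdPt 0 j).mat * swapMatᵀ = (stdPt 0 (swapPerm j)).mat := by
  decide +kernel

theorem symSign_swapMat : symSign k (toReal swapMat) = -1 := by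
  have hswap : swapMat * swapMat = 1 := by decide +kernel
  let g : GL (Fin 4) ℤ := ⟨swapMat, swapMat, hswap, hswap⟩
  have hg : g • (stdData 0).pt = (stdData 0).pt ∘ swapPerm :=
    funext fun j => Point.ext (swapMat_mul_stdPt j)
  have hsign : Equiv.Perm.sign swapPerm = -1 := by decide +kernel
  have hvol := sgn_vol_smul k g (stdData 0).pt
  rw [hg, vol_comp_perm, map_mul, sgn_unit, hsign] at hvol
  have hne : sgn k (vol (stdData 0).pt) ≠ 0 := (map_ne_zero _).2 (stdData 0).vol_pt_ne_zero
  exact ((orient_apply g).symm.trans (mul_right_cancel₀ hne hvol).symm).trans (by simp)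

/-- Over the reals the reflection is conjugate to an automorphism of the first standard top cell
that acts on the vertices by an odd permutation. -/
theorem symSign_diagonal :
    symSign k (diagonal ![-1, 1, 1, 1] : Matrix (Fin 4) (Fin 4) ℝ) = -1 := by
  let P : Matrix (Fin 4) (Fin 4) ℝ := !![1, -1, 0, 0; 1, 1, 0, 0; 0, 0, 1, 0; 0, 0, 0, 1]
  have hP : P.det = 2 := by
    simp [P, det_succ_row_zero, Fin.sum_univ_succ, Fin.succAbove]
    norm_num
  have hunit : IsUnit P := (isUnit_iff_isUnit_det P).2 (hP ▸ (two_ne_zero (α := ℝ)).isUnit)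
  have hconj : diagonal ![-1, 1, 1, 1] * P = P * toReal swapMat := by
    ext a b
    fin_cases a <;> fin_cases b <;> simp [P, swapMat, mul_apply, Fin.sum_univ_four, diagonal]
  have h := congrArg (symSign k) hconj
  rw [map_mul, map_mul, symSign_swapMat, mul_comm] at h
  exact (hunit.map (symSign k)).mul_left_cancel h

end OrientValues

/-! ### Adjacent top cells and the fundamental cycle -/

variable {q q' : Matrix (Fin 4) (Fin 4) ℤ} {X u : Point (Fin 4)}

namespace IsTopForm

theorem exists_mem_notMem (hq : IsTopForm q) (hq' : IsTopForm q') (hX : X ∈ vertexSet q)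
    (hX' : X ∉ vertexSet q') : ∃ u ∈ vertexSet q', u ∉ vertexSet q := by
  by_contra! hsub
  refine hX' ?_
  rwa [Set.eq_of_subset_of_ncard_le hsub (by rw [ncard_vertexSet hq, ncard_vertexSet hq'])
    hq.finite_vertexSet]

theorem pair_sub_neg (hq : IsTopForm q) (hu : u ∈ vertexSet q') (hu' : u ∉ vertexSet q) :
    pair (q' - q) u.mat < 0 := by
  rw [pair_sub_left, sub_neg]
  exact (hq.pair_le hu).lt_of_ne fun h => hu' (mem_vertexSet_of_pair_eq hu h.symm)

/-- At a vertex `u` of `q₂` outside `q`, the form `q₂ - q` is negative and at most `q₁ - q`. -/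
theorem le_one_of_pair_sub_eq {q₁ q₂ : Matrix (Fin 4) (Fin 4) ℤ} (hq : IsTopForm q)
    (hq₁ : IsTopForm q₁) (hq₂ : IsTopForm q₂) {c : ℝ}
    (hc : ∀ Y, Yᵀ = Y → pair (toReal (q₁ - q)) Y = c * pair (toReal (q₂ - q)) Y)
    (hX : X ∈ vertexSet q) (hX' : X ∉ vertexSet q₂) : c ≤ 1 := by
  obtain ⟨u, hu, hu'⟩ := hq.exists_mem_notMem hq₂ hX hX'
  have hneg : ((pair (q₂ - q) u.mat : ℤ) : ℝ) < 0 := Int.cast_lt_zero.2 (hq.pair_sub_neg hu hu')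
  have hle : ((pair (q₂ - q) u.mat : ℤ) : ℝ) ≤ (pair (q₁ - q) u.mat : ℤ) := by
    rw [pair_sub_left, pair_sub_left]
    exact_mod_cast sub_le_sub_right (hq₁.pair_le hu) _
  have hcu := hc _ (toReal_transpose_of_mem hu)
  rw [pair_toReal, pair_toReal] at hcu
  rw [hcu] at hle
  exact (mul_le_mul_right_of_neg hneg).1 (by rwa [one_mul])

end IsTopForm

namespace TopData

variable (d : TopData q) {k : Fin 10}

theorem pair_sub_eq_mul_pair_nb_sub (hq : IsTopForm q) (hq' : IsTopForm q')
    (hk : ∀ l, l ≠ k → d.pt l ∈ vertexSet q') (Y : Matrix (Fin 4) (Fin 4) ℝ) (hY : Yᵀ = Y) :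
    pair (toReal (q' - q)) Y =
      pair (q' - q) (d.pt k).mat / d.gap k * pair (toReal (d.nb k - q)) Y := by
  conv_lhs => rw [d.eq_sum Y hY, pair_sum]
  rw [Finset.sum_eq_single k]
  · rw [pair_smul, pair_toReal]
    ring
  · intro l _ hl
    rw [pair_smul, pair_toReal, pair_sub_left, hq'.pair_eq hq (hk l hl) (d.pt_mem l), sub_self,
      Int.cast_zero, mul_zero]
  · simp

theorem eq_or_eq_nb (hq : IsTopForm q) (hq' : IsTopForm q')
    (hk : ∀ l, l ≠ k → d.pt l ∈ vertexSet q') : q' = q ∨ q' = d.nb k := by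
  set c : ℝ := pair (q' - q) (d.pt k).mat / d.gap k with hc
  have hpair := d.pair_sub_eq_mul_pair_nb_sub hq hq' hk
  rw [← hc] at hpair
  have hgap : (0 : ℝ) < d.gap k := Int.cast_pos.2 (d.gap_pos k)
  have hc₀ : 0 ≤ c := by
    rw [hc, pair_sub_left]
    exact div_nonneg (Int.cast_nonneg (sub_nonneg.2 (hq'.pair_le (d.pt_mem k)))) hgap.le
  have hheight := hpair generic generic_transpose
  rw [pair_generic_sub, pair_generic_sub] at hheight
  rcases hc₀.eq_or_lt with h₀ | hpos
  · refine .inl (eq_of_height_eq hq' hq (sub_eq_zero.1 ?_))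
    rw [hheight, ← h₀, zero_mul]
  have hk' : d.pt k ∉ vertexSet q' := fun h => hpos.ne' <| by
    rw [hc, pair_sub_left, hq'.pair_eq hq h (d.pt_mem k), sub_self, Int.cast_zero, zero_div]
  have hle : c ≤ 1 :=
    hq.le_one_of_pair_sub_eq hq' (d.isTopForm_nb k) hpair (d.pt_mem k) (d.pt_notMem_nb hq k)
  have hge : c⁻¹ ≤ 1 :=
    hq.le_one_of_pair_sub_eq (d.isTopForm_nb k) hq'
      (fun Y hY => by rw [hpair Y hY, inv_mul_cancel_left₀ hpos.ne']) (d.pt_mem k) hk'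
  refine .inr (eq_of_height_eq hq' (d.isTopForm_nb k) (sub_left_injective (b := height q) ?_))
  simpa [le_antisymm hle ((inv_le_one₀ hpos).1 hge)] using hheight

theorem exists_opposite (hq : IsTopForm q) (k : Fin 10) :
    ∃ u ∉ vertexSet q, vertexSet (d.nb k) = insert u (vertexSet q \ {d.pt k}) := by
  obtain ⟨u, hu, hu'⟩ := hq.exists_mem_notMem (d.isTopForm_nb k) (d.pt_mem k) (d.pt_notMem_nb hq k)
  refine ⟨u, hu', (Set.eq_of_subset_of_ncard_le ?_ ?_ (d.isTopForm_nb k).finite_vertexSet).symm⟩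
  · refine Set.insert_subset hu ?_
    rintro X ⟨hX, hXk⟩
    rw [d.vertexSet_eq] at hX
    obtain ⟨l, rfl⟩ := hX
    exact d.pt_mem_nb fun h => hXk (by rw [h]; rfl)
  · rw [Set.ncard_insert_of_notMem (fun h => hu' h.1) (hq.finite_vertexSet.subset Set.sdiff_subset),
      Set.ncard_sdiff_singleton_of_mem (d.pt_mem k), ncard_vertexSet hq,
      ncard_vertexSet (d.isTopForm_nb k)]

theorem exists_range_eq_diff (hq : IsTopForm q) {x : Fin 9 → Point (Fin 4)}
    (hx : Function.Injective x) (hsub : Set.range x ⊆ vertexSet q) :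
    ∃ k, Set.range x = vertexSet q \ {d.pt k} := by
  have hcard : (vertexSet q \ Set.range x).ncard = 1 := by
    rw [Set.ncard_sdiff hsub (Set.finite_range x), ncard_vertexSet hq,
      Set.ncard_range_of_injective hx, Nat.card_fin]
  obtain ⟨X, hX⟩ := Set.ncard_eq_one.1 hcard
  have hXq : X ∈ vertexSet q \ Set.range x := hX ▸ rfl
  obtain ⟨k, rfl⟩ := d.vertexSet_eq ▸ hXq.1
  exact ⟨k, by rw [← hX, Set.sdiff_sdiff_cancel_left hsub]⟩

theorem vol_cons {x : Fin 9 → Point (Fin 4)} (hx : ∀ l, l ≠ k → d.pt l ∈ Set.range x)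
    (hu : u ∈ vertexSet q') :
    vol (Fin.cons u x) =
      (pair (d.nb k - q) u.mat / d.gap k : ℝ) * vol (Fin.cons (d.pt k) x) := by
  let z : Fin 10 → symSubmodule (Fin 4) ℝ := Fin.cons 0 (symPt ∘ x)
  let L : symSubmodule (Fin 4) ℝ →ₗ[ℝ] ℝ :=
    (stdData 0).basis.det.toMultilinearMap.toLinearMap z 0
  have hL (v : Point (Fin 4)) : vol (Fin.cons v x) = L (symPt v) := by
    refine congrArg (stdData 0).basis.det ?_
    rw [Fin.update_cons_zero]
    exact Fin.comp_cons symPt v x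
  rw [hL, hL]
  conv_lhs => rw [d.eq_sum_symPt (symPt u), map_sum]
  rw [Finset.sum_eq_single k]
  · rw [map_smul, coe_symPt hu, pair_toReal, smul_eq_mul]
  · intro l _ hl
    obtain ⟨j, hj⟩ := hx l hl
    rw [map_smul, ← hL, vol, AlternatingMap.map_eq_zero_of_eq _ _
      (i := 0) (j := j.succ) (by simp [hj]) (Fin.succ_ne_zero j).symm, smul_zero]
  · simp

end TopData

section FundamentalCycle

variable (k : Type*) [Field k]

open Classical in
/-- The fundamental cycle: the sum of the oriented top cells. -/
def fundCycle : cells.Chain k 10 :=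
  ⟨fun x => if Function.Injective x ∧ ∃ q, IsTopForm q ∧ Set.range x = vertexSet q then
    sgn k (vol x) else 0, by
    refine ⟨fun x σ => ?_, fun x hx => ?_⟩
    · beta_reduce
      simp only [σ.surjective.range_comp, Function.Injective.of_comp_iff' x σ.bijective,
        vol_comp_perm, map_mul, sgn_unit]
      split_ifs <;> simp [Units.smul_def]
    · obtain ⟨hinj, q, hq, hr⟩ := (ite_ne_right_iff.1 hx).1
      refine ⟨hinj, (shelling.cell_and_piece_eq (τ := ⟨q, hq⟩) hr.subset ?_).1⟩
      exact (Set.sdiff_eq_empty.2 hr.ge).trans_subset (Set.empty_subset _)⟩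

variable {k} {x : Fin 10 → Point (Fin 4)}

theorem fundCycle_apply (hx : Function.Injective x) (hq : IsTopForm q)
    (hr : Set.range x = vertexSet q) : fundCycle k x = sgn k (vol x) := by
  classical exact if_pos ⟨hx, q, hq, hr⟩

theorem fundCycle_ne_zero_iff : fundCycle k x ≠ 0 ↔
    Function.Injective x ∧ ∃ q, IsTopForm q ∧ Set.range x = vertexSet q := by
  classical
  refine ⟨fun h => (ite_ne_right_iff.1 h).1, fun ⟨hx, q, hq, hr⟩ => ?_⟩
  rw [fundCycle_apply hx hq hr]
  exact (map_ne_zero _).2 (hq.vol_ne_zero hx hr)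

theorem fundCycle_ne_zero : fundCycle k ≠ 0 := fun h =>
  fundCycle_ne_zero_iff.2 ⟨(stdData 0).pt_injective, _, isTopForm_stdForm 0,
    (stdData 0).vertexSet_eq.symm⟩ (congrArg (fun φ : cells.Chain k 10 => φ (stdData 0).pt) h)

theorem fundCycle_smul_ne_zero (g : GL (Fin 4) ℤ) (h : fundCycle k x ≠ 0) :
    fundCycle k (g • x) ≠ 0 := by
  obtain ⟨hx, q, hq, hr⟩ := fundCycle_ne_zero_iff.1 h
  refine fundCycle_ne_zero_iff.2 ⟨(MulAction.injective g).comp hx, act g q, hq.act g, ?_⟩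
  rw [vertexSet_act, ← hr, Set.smul_set_range]
  rfl

theorem fundCycle_mem_invariants :
    fundCycle k ∈ (CellFamily.chainRep (K := cells) (orient (Fin 4) k) 10).invariants := by
  refine fun g => CellFamily.Chain.ext fun x => ?_
  rw [CellFamily.chainRep_apply]
  by_cases hx : fundCycle k x = 0
  · rw [hx, mul_eq_zero]
    refine .inr (not_imp_comm.1 (fundCycle_smul_ne_zero g) ?_)
    rwa [smul_inv_smul, not_not]
  · obtain ⟨hinj, q, hq, hr⟩ := fundCycle_ne_zero_iff.1 hx
    obtain ⟨hinj', q', hq', hr'⟩ := fundCycle_ne_zero_iff.1 (fundCycle_smul_ne_zero g⁻¹ hx)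
    rw [fundCycle_apply hinj hq hr, fundCycle_apply hinj' hq' hr', ← sgn_vol_smul, smul_inv_smul]

theorem TopData.eq_or_eq_of_fundCycle_cons_ne_zero (d : TopData q) (hq : IsTopForm q)
    {x : Fin 9 → Point (Fin 4)} {j : Fin 10} (hr : Set.range x = vertexSet q \ {d.pt j})
    (hnb : vertexSet (d.nb j) = insert u (Set.range x)) {v : Point (Fin 4)}
    (hv : fundCycle k (Fin.cons v x) ≠ 0) : v = d.pt j ∨ v = u := by
  obtain ⟨hinj, q', hq', hr'⟩ := fundCycle_ne_zero_iff.1 hv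
  have hvx := (Fin.cons_injective_iff.1 hinj).1
  rw [Fin.range_cons] at hr'
  have hvq : v ∈ vertexSet q' := hr' ▸ Set.mem_insert _ _
  have hpt : ∀ l, l ≠ j → d.pt l ∈ vertexSet q' := fun l hl =>
    hr' ▸ Set.mem_insert_of_mem _ (hr ▸ ⟨d.pt_mem l, fun h => hl (d.pt_injective h)⟩)
  rcases d.eq_or_eq_nb hq hq' hpt with rfl | rfl
  · exact .inl (by_contra fun h => hvx (hr ▸ ⟨hvq, h⟩))
  · exact .inr ((hnb ▸ hvq).resolve_right hvx)

theorem TopData.finsum_fundCycle_cons (d : TopData q) (hq : IsTopForm q)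
    {x : Fin 9 → Point (Fin 4)} (hx : Function.Injective x) {j : Fin 10}
    (hr : Set.range x = vertexSet q \ {d.pt j}) :
    ∑ᶠ v, fundCycle k (Fin.cons v x) = 0 := by
  classical
  have hj : d.pt j ∉ Set.range x := fun h => (hr ▸ h).2 rfl
  have hpt : ∀ l, l ≠ j → d.pt l ∈ Set.range x := fun l hl =>
    hr ▸ ⟨d.pt_mem l, fun h => hl (d.pt_injective h)⟩
  obtain ⟨u, hu, hnb⟩ := d.exists_opposite hq j
  rw [← hr] at hnb
  have hu' : u ∈ vertexSet (d.nb j) := hnb ▸ Set.mem_insert _ _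
  have hne : d.pt j ≠ u := fun h => hu (h ▸ d.pt_mem j)
  have hux : u ∉ Set.range x := fun h => hu (hr ▸ h).1
  have hneg : (pair (d.nb j - q) u.mat / d.gap j : ℝ) < 0 :=
    div_neg_of_neg_of_pos (Int.cast_lt_zero.2 (hq.pair_sub_neg hu' hu))
      (Int.cast_pos.2 (d.gap_pos j))
  have hsupp : (Function.support fun v => fundCycle k (Fin.cons v x)) ⊆
      (({d.pt j, u} : Finset (Point (Fin 4))) : Set (Point (Fin 4))) := fun v hv => by
    rw [Finset.coe_pair]
    exact d.eq_or_eq_of_fundCycle_cons_ne_zero hq hr hnb hv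
  rw [finsum_eq_sum_of_support_subset _ hsupp, Finset.sum_pair hne,
    fundCycle_apply (Fin.cons_injective_iff.2 ⟨hj, hx⟩) hq,
    fundCycle_apply (Fin.cons_injective_iff.2 ⟨hux, hx⟩) (d.isTopForm_nb j),
    d.vol_cons hpt hu', map_mul, sgn_of_neg hneg, neg_one_mul, add_neg_cancel]
  · rw [Fin.range_cons, hnb]
  · rw [Fin.range_cons, hr, Set.insert_sdiff_singleton, Set.insert_eq_of_mem (d.pt_mem j)]

theorem boundary_fundCycle : CellFamily.boundary 9 (fundCycle k) = 0 := by
  refine CellFamily.Chain.ext fun x => ?_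
  by_cases hc : cells.Cell (Set.range x)
  swap
  · exact CellFamily.Chain.apply_eq_zero _ hc
  rw [CellFamily.boundary_apply _ hc]
  by_cases hx : Function.Injective x
  · obtain ⟨q, hq, hsub⟩ := hc.2
    obtain ⟨d⟩ := TopData.nonempty hq
    obtain ⟨j, hr⟩ := d.exists_range_eq_diff hq hx hsub
    exact d.finsum_fundCycle_cons hq hx hr
  · refine finsum_eq_zero_of_forall_eq_zero fun v => by_contra fun h => hx ?_
    exact (Fin.cons_injective_iff.1 ((fundCycle k).injective h)).2

theorem height_le_of_downSet_eq_empty {q : TopForm} (h : downSet q = ∅) (q' : TopForm) :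
    height q.1 ≤ height q'.1 := by
  rw [← sub_nonneg, ← pair_generic_sub, (topData q).generic_eq_sum, pair_sum]
  refine Finset.sum_nonneg fun l _ => ?_
  rw [pair_smul, pair_toReal, pair_sub_left]
  have hl : (topData q).pt l ∉ downSet q := h ▸ Set.notMem_empty _
  refine mul_nonneg (div_nonneg (sub_nonneg.2 (not_lt.1 fun hlt => hl ⟨l, rfl, hlt⟩)) ?_) ?_
  · exact Int.cast_nonneg ((topData q).gap_pos l).le
  · exact Int.cast_nonneg (sub_nonneg.2 (q'.2.pair_le ((topData q).pt_mem l)))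

theorem eq_of_downSet_eq_empty {q q' : TopForm} (h : downSet q = ∅) (h' : downSet q' = ∅) :
    q = q' :=
  Subtype.ext <| eq_of_height_eq q.2 q'.2 <|
    (height_le_of_downSet_eq_empty h q').antisymm (height_le_of_downSet_eq_empty h' q)

theorem exists_downSet_eq_empty : ∃ q : TopForm, downSet q = ∅ := by
  obtain ⟨q, hq, hmin⟩ := Set.exists_min_image _ height (finite_height_le (height (stdForm 0)))
    ⟨_, isTopForm_stdForm 0, le_rfl⟩
  refine ⟨⟨q, hq.1⟩, Set.eq_empty_of_forall_notMem ?_⟩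
  rintro _ ⟨l, -, hlt⟩
  exact hlt.not_ge (hmin _ ⟨(topData ⟨q, hq.1⟩).isTopForm_nb l, hlt.le.trans hq.2⟩)

theorem range_eq_vertexSet_highest (hx : Function.Injective x) (hc : cells.Cell (Set.range x)) :
    Set.range x = vertexSet (highest (Set.range x)).1 := by
  refine Set.eq_of_subset_of_ncard_le (subset_highest hc) ?_ (highest _).2.finite_vertexSet
  rw [ncard_vertexSet (highest _).2, Set.ncard_range_of_injective hx, Nat.card_fin]

theorem exists_smul_fundCycle_eq {φ : cells.Chain k 10} (hφ : CellFamily.boundary 9 φ = 0) :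
    ∃ c : k, c • fundCycle k = φ := by
  obtain ⟨q, hq⟩ := exists_downSet_eq_empty
  set d := topData q
  have hd : fundCycle k d.pt ≠ 0 :=
    fundCycle_ne_zero_iff.2 ⟨d.pt_injective, q.1, q.2, d.vertexSet_eq.symm⟩
  set ψ := φ - (φ d.pt / fundCycle k d.pt) • fundCycle k with hψ
  have hψ₀ : ψ d.pt = 0 := by
    rw [hψ, CellFamily.Chain.sub_apply, CellFamily.Chain.smul_apply, div_mul_cancel₀ _ hd, sub_self]
  have hψ_zero : ψ = 0 := by
    refine shelling.eq_zero_of_boundary_eq_zero ?_ (fun x => range_eq_vertexSet_highest)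
      fun x hx => by_contra fun hne => hne ?_
    · rw [hψ, map_sub, map_smul, boundary_fundCycle, hφ, smul_zero, sub_zero]
    · have hr := range_eq_vertexSet_highest (ψ.injective hne) (ψ.cell hne)
      rw [eq_of_downSet_eq_empty (q := highest (Set.range x)) hx hq] at hr
      obtain ⟨σ, rfl⟩ := d.exists_perm (ψ.injective hne) hr
      rw [ψ.isAlternating, hψ₀, smul_zero]
  exact ⟨_, (sub_eq_zero.1 hψ_zero).symm⟩

theorem ker_boundary_eq_span_fundCycle :
    LinearMap.ker (CellFamily.boundary (K := cells) (k := k) 9) =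
      Submodule.span k {fundCycle k} := by
  refine le_antisymm (fun φ hφ => ?_) ?_
  · exact Submodule.mem_span_singleton.2 (exists_smul_fundCycle_eq hφ)
  · exact (Submodule.span_singleton_le_iff_mem _ _).2 boundary_fundCycle

end FundamentalCycle

/-! ### Families of vectors with minors of absolute value at most one -/

section Minors

variable {ι n R : Type*} [Finite ι] [Fintype n] [DecidableEq n]

theorem exists_det_ne_zero [CommRing R] [LinearOrder R] [IsStrictOrderedRing R] {v : ι → n → R}
    (hv : ∀ w, (∀ j, v j ⬝ᵥ w = 0) → w = 0) : ∃ f : n → ι, (of (v ∘ f)).det ≠ 0 := by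
  cases nonempty_fintype ι
  classical
  by_contra! hdet
  -- By multilinearity, the Gram determinant is a combination of the maximal minors.
  have hgram : ((of v)ᵀ * of v).det = 0 := by
    have hrows : (of v)ᵀ * of v = of fun a => ∑ j, v j a • v j := by
      ext a b
      simp [mul_apply]
    rw [hrows]
    change detRowAlternating.toMultilinearMap (fun a => ∑ j, v j a • v j) = 0
    rw [MultilinearMap.map_sum]
    refine Finset.sum_eq_zero fun f _ => ?_
    rw [MultilinearMap.map_smul_univ]
    exact smul_eq_zero_of_right _ (hdet f)
  obtain ⟨w, hw, hw₀⟩ := exists_mulVec_eq_zero_iff.2 hgram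
  refine hw (hv w fun j => ?_)
  have hnorm : (of v *ᵥ w) ⬝ᵥ (of v *ᵥ w) = 0 := by
    rw [dotProduct_mulVec, vecMul_mulVec, ← dotProduct_mulVec, hw₀, dotProduct_zero]
  exact congrFun (dotProduct_self_eq_zero.1 hnorm) j

theorem exists_det_succAbove_ne_zero {m : ℕ} [CommRing R] {v : Fin (m + 1) → Fin m → R}
    {f : Fin m → Fin (m + 1)} (hf : (of (v ∘ f)).det ≠ 0) :
    ∃ j : Fin (m + 1), (of (v ∘ j.succAbove)).det ≠ 0 := by
  have hinj : Function.Injective f := fun a b hab => by_contra fun hne =>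
    hf (det_zero_of_row_eq hne (congrArg v hab))
  obtain ⟨j, hj⟩ : ∃ j, j ∉ Set.range f := by
    by_contra! h
    exact absurd (Fintype.card_le_of_surjective f h) (by simp)
  choose σ hσ using fun a => Fin.exists_succAbove_eq fun h : f a = j => hj ⟨a, h⟩
  have hσ_inj : Function.Injective σ := fun a b hab => hinj (by rw [← hσ, ← hσ, hab])
  have hperm : of (v ∘ f) = (of (v ∘ j.succAbove)).submatrix
      (Equiv.ofBijective σ (Finite.injective_iff_bijective.1 hσ_inj)) id := by
    ext a b
    simp [← hσ]
  refine ⟨j, fun h => hf ?_⟩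
  rw [hperm, det_permute, h, mul_zero]

theorem exists_eq_sum_smul [CommRing R] {e : n → n → R} (he : IsUnit (of e).det) (w : n → R) :
    ∃ c : n → R, w = ∑ a, c a • e a := by
  refine ⟨w ᵥ* (of e)⁻¹, ?_⟩
  have h := congrArg (w ᵥ* ·) (nonsing_inv_mul (of e) he)
  simp only [vecMul_one, ← vecMul_vecMul, vecMul_eq_sum (w ᵥ* (of e)⁻¹)] at h
  exact h.symm

theorem det_update_sum_smul [CommRing R] (e : n → n → R) (c : n → R) (a : n) :
    (of (Function.update e a (∑ b, c b • e b))).det = c a * (of e).det :=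
  det_updateRow_sum (of e) a c

end Minors

theorem exists_reflection (k : Type*) [Field k] {e : Fin 4 → Fin 4 → ℤ}
    (he : IsUnit (of e).det) (a : Fin 4) : ∃ g : GL (Fin 4) ℤ, orient (Fin 4) k g = -1 ∧
      g.1 *ᵥ e a = -e a ∧ ∀ b, b ≠ a → g.1 *ᵥ e b = e b := by
  set δ : Fin 4 → ℤ := ![-1, 1, 1, 1]
  have hδδ : diagonal δ * diagonal δ = 1 := by decide +kernel
  let D : GL (Fin 4) ℤ := ⟨diagonal δ, diagonal δ, hδδ, hδδ⟩
  have hD : orient (Fin 4) k D = -1 := by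
    rw [orient_apply, ← symSign_diagonal]
    refine congrArg _ ?_
    ext b c
    fin_cases b <;> fin_cases c <;> simp [D, δ]
  set σ := Equiv.swap 0 a
  have hunit : IsUnit (of (e ∘ σ)).det := by
    have hperm : of (e ∘ σ) = (of e).submatrix σ id := rfl
    rw [hperm, det_permute]
    exact (Equiv.Perm.sign σ).isUnit.mul he
  obtain ⟨U, hU⟩ := (isUnit_iff_isUnit_det (of (e ∘ σ))ᵀ).2 (by rwa [det_transpose])
  have hcol (b : Fin 4) : U.1 *ᵥ Pi.single b 1 = e (σ b) := by
    rw [hU, mulVec_single_one]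
    rfl
  have hinv (b : Fin 4) : (U⁻¹).1 *ᵥ e (σ b) = Pi.single b 1 := by
    rw [← hcol, mulVec_mulVec, Units.inv_mul, one_mulVec]
  have hg (b : Fin 4) : (U * D * U⁻¹).1 *ᵥ e (σ b) = δ b • e (σ b) := by
    rw [Units.val_mul, Units.val_mul, ← mulVec_mulVec, ← mulVec_mulVec, hinv,
      show D.1 = diagonal δ from rfl, diagonal_mulVec_single, mul_one, ← hcol, ← mulVec_smul,
      ← Pi.single_smul, smul_eq_mul, mul_one]
  refine ⟨U * D * U⁻¹, ?_, ?_, fun b hb => ?_⟩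
  · rw [map_mul, mul_comm, ← map_mul, inv_mul_cancel_left, hD]
  · simpa [σ, δ] using hg 0
  · have hb₀ : σ b ≠ 0 := fun h => hb (by simpa [σ, Equiv.swap_apply_eq_iff] using h)
    have hone : ∀ c : Fin 4, c ≠ 0 → δ c = 1 := by decide +kernel
    simpa [σ, hone _ hb₀] using hg (σ b)

/-- The vectors have a single relation; if its coefficient at a vector vanishes, the reflection in
that vector fixes all others. -/
theorem exists_reflection_or_circuit (k : Type*) [Field k] {v : Fin 5 → Fin 4 → ℤ}
    (hdet : ∀ f : Fin 4 → Fin 5, |(of (v ∘ f)).det| ≤ 1) {f : Fin 4 → Fin 5}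
    (hf : (of (v ∘ f)).det ≠ 0) :
    (∃ g : GL (Fin 4) ℤ, orient (Fin 4) k g = -1 ∧ ∀ j, g.1 *ᵥ v j = v j ∨ g.1 *ᵥ v j = -v j) ∨
      ∃ s : Fin 5 → ℤ, (∀ j, |s j| = 1) ∧ ∑ j, s j • v j = 0 := by
  obtain ⟨m, hm⟩ := exists_det_succAbove_ne_zero hf
  set e := v ∘ m.succAbove
  have hone : |(of e).det| = 1 := (hdet _).antisymm (Int.one_le_abs hm)
  have hunit : IsUnit (of e).det := Int.isUnit_iff_abs_eq.2 hone
  obtain ⟨c, hc⟩ := exists_eq_sum_smul hunit (v m)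
  have hc_le (a : Fin 4) : |c a| ≤ 1 := by
    have hupdate : v ∘ Function.update m.succAbove a m =
        Function.update e a (∑ b, c b • e b) := by
      rw [Function.comp_update, hc]
    have h := hdet (Function.update m.succAbove a m)
    rwa [hupdate, det_update_sum_smul, abs_mul, hone, mul_one] at h
  by_cases h₀ : ∃ a, c a = 0
  · obtain ⟨a, ha⟩ := h₀
    obtain ⟨g, hg, hga, hgb⟩ := exists_reflection k hunit a
    refine .inl ⟨g, hg, (Fin.forall_iff_succAbove m).2 ⟨.inl ?_, fun b => ?_⟩⟩
    · rw [hc, mulVec_sum]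
      refine Finset.sum_congr rfl fun b _ => ?_
      rcases eq_or_ne b a with rfl | hb
      · rw [ha, zero_smul, mulVec_zero]
      · rw [mulVec_smul, hgb b hb]
    · rcases eq_or_ne b a with rfl | hb
      exacts [.inr hga, .inl (hgb b hb)]
  · push Not at h₀
    refine .inr ⟨m.insertNth (-1) c, (Fin.forall_iff_succAbove m).2 ⟨by simp, fun a => ?_⟩, ?_⟩
    · rw [Fin.insertNth_apply_succAbove]
      exact (hc_le a).antisymm (Int.one_le_abs (h₀ a))
    · rw [Fin.sum_univ_succAbove _ m]
      simp only [Fin.insertNth_apply_same, Fin.insertNth_apply_succAbove, neg_one_smul]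
      exact neg_add_eq_zero.2 hc

theorem abs_det_stdVec_le_of_lt : ∀ i, ∀ a b : Fin 10, a < b → ∀ c, b < c → ∀ d, c < d →
    (i = 0 ∨ d ≠ 9) →
    |(of ![stdVec i a, stdVec i b, stdVec i c, stdVec i d]).det| ≤ 1 := by
  decide +kernel

theorem abs_det_stdVec_le (i : Fin 3) {f : Fin 4 → Fin 10} (hf : ∀ a, i = 0 ∨ f a ≠ 9) :
    |(of (stdVec i ∘ f)).det| ≤ 1 := by
  by_cases hinj : Function.Injective f
  · set σ := Tuple.sort f
    have hmono : StrictMono (f ∘ σ) :=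
      (Tuple.monotone_sort f).strictMono_of_injective (hinj.comp σ.injective)
    have h := abs_det_stdVec_le_of_lt i _ _ (hmono (show (0 : Fin 4) < 1 by decide)) _
      (hmono (show (1 : Fin 4) < 2 by decide)) _ (hmono (show (2 : Fin 4) < 3 by decide)) (hf _)
    have hsort : of ![stdVec i ((f ∘ σ) 0), stdVec i ((f ∘ σ) 1), stdVec i ((f ∘ σ) 2),
        stdVec i ((f ∘ σ) 3)] = (of (stdVec i ∘ f)).submatrix σ (Equiv.refl _) := by
      ext a b
      fin_cases a <;> rfl
    rwa [hsort, abs_det_submatrix_equiv_equiv] at h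
  · obtain ⟨a, b, hab, hne⟩ := Function.not_injective_iff.1 hinj
    rw [det_zero_of_row_eq hne (congrArg (stdVec i) hab), abs_zero]
    exact zero_le_one

/-! ### The orbit of the centre -/

theorem square_eq_square_iff {n : Type*} {v w : n → ℤ} :
    square v = square w ↔ v = w ∨ v = -w := by
  refine ⟨fun h => ?_, ?_⟩
  · have hmul (a b : n) : v a * v b = w a * w b :=
      congrFun (congrFun (congrArg Point.mat h) a) b
    by_cases hv : v = 0
    · refine .inl (hv.trans (funext fun a => ?_))
      simpa [hv, eq_comm] using hmul a a
    · obtain ⟨a, ha⟩ := Function.ne_iff.1 hv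
      refine (mul_self_eq_mul_self_iff.1 (hmul a a)).imp (fun hva => ?_) fun hva => ?_ <;>
        refine funext fun b => mul_left_cancel₀ ha ?_
      · rw [hmul, hva]
      · rw [hmul, hva, Pi.neg_apply, neg_mul_neg]
  · rintro (rfl | rfl)
    · rfl
    · exact Point.ext (by simp [square, vecMulVec_neg, neg_vecMulVec])

theorem det_center_ne_zero : center.mat.det ≠ 0 := by decide +kernel

theorem square_notMem_orbit_center (v : Fin 4 → ℤ) :
    square v ∉ MulAction.orbit (GL (Fin 4) ℤ) center := by
  rintro ⟨g, hg⟩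
  have hdet : (g • center).mat.det = 0 := by
    rw [show g • center = square v from hg]
    exact det_vecMulVec v v
  have hunit : g.1.det ≠ 0 := ((isUnit_iff_isUnit_det _).1 g.isUnit).ne_zero
  rw [Point.mat_smul, det_mul, det_mul, det_transpose] at hdet
  exact mul_ne_zero (mul_ne_zero hunit det_center_ne_zero) hunit hdet

theorem smul_stdPt_mem_orbit_center_iff {g : GL (Fin 4) ℤ} {i : Fin 3} {k : Fin 10} :
    g • stdPt i k ∈ MulAction.orbit (GL (Fin 4) ℤ) center ↔ i ≠ 0 ∧ k = 9 := by
  rw [← MulAction.orbit_eq_iff, MulAction.orbit_smul, MulAction.orbit_eq_iff]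
  refine ⟨fun h => ?_, fun h => ?_⟩
  · by_contra hik
    rw [stdPt, if_neg hik] at h
    exact square_notMem_orbit_center _ h
  · rw [stdPt, if_pos h]
    exact MulAction.mem_orbit_self _

theorem mem_vertexSet_act_stdForm {g : GL (Fin 4) ℤ} {i : Fin 3} {X : Point (Fin 4)} :
    X ∈ vertexSet (act g (stdForm i)) ↔ ∃ k, g • stdPt i k = X := by
  rw [vertexSet_act, vertexSet_stdForm, Set.mem_smul_set, Set.exists_range_iff]

theorem subsingleton_orbit_center_inter {S : Set (Point (Fin 4))} (hS : cells.Cell S) :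
    (MulAction.orbit (GL (Fin 4) ℤ) center ∩ S).Subsingleton := by
  obtain ⟨-, _, ⟨g, i, rfl⟩, hsub⟩ := hS
  rintro X ⟨hX, hXS⟩ Y ⟨hY, hYS⟩
  obtain ⟨k, rfl⟩ := mem_vertexSet_act_stdForm.1 (hsub hXS)
  obtain ⟨l, rfl⟩ := mem_vertexSet_act_stdForm.1 (hsub hYS)
  rw [smul_stdPt_mem_orbit_center_iff] at hX hY
  rw [hX.2, hY.2]

theorem isInner_center : IsInner {center} := by
  refine ⟨2, {center}, by simp, fun v => ?_⟩
  have hcenter : 3 * ev center.mat v = 2 * ∑ m, (rootD m ⬝ᵥ v) ^ 2 := by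
    simpa only [ev_smul, ev_sum, square, ev_vecMulVec] using congrArg (ev · v) three_smul_center
  have hunits : v ⬝ᵥ v = ∑ m ∈ {8, 5, 2, 0}, (rootD m ⬝ᵥ v) ^ 2 := by
    simp [rootD, dotProduct, Fin.sum_univ_four, sq, add_assoc]
  have hle : v ⬝ᵥ v ≤ ∑ m, (rootD m ⬝ᵥ v) ^ 2 := hunits.trans_le <|
    Finset.sum_le_sum_of_subset_of_nonneg (Finset.subset_univ _) fun m _ _ => sq_nonneg _
  have hnonneg : 0 ≤ ∑ m, (rootD m ⬝ᵥ v) ^ 2 := by positivity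
  rw [Finset.sum_singleton]
  push_cast
  linarith

/-! ### Stabilizers and links -/

instance finite_stabilizer_center : Finite (MulAction.stabilizer (GL (Fin 4) ℤ) center) := by
  refine (isInner_center.finite_act.subset fun g hg => ⟨1, ?_⟩).to_subtype
  rw [Set.singleton_subset_iff, mem_vertexSet_act_stdForm]
  exact ⟨9, hg⟩

theorem finite_stabilizer_cell {S : Set (Point (Fin 4))} (hS : cells.Cell S) :
    Finite (MulAction.stabilizer (GL (Fin 4) ℤ) S) := by
  obtain ⟨hinner, _, ⟨g₀, i, rfl⟩, hsub⟩ := hS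
  refine ((hinner.finite_act.preimage (mul_left_injective g₀).injOn).subset
    fun g hg => ⟨i, ?_⟩).to_subtype
  rw [act_mul, vertexSet_act, ← show g • S = S from hg]
  exact Set.smul_set_mono hsub

theorem outerLink_center_nonempty {S : Set (Point (Fin 4))} (hS : cells.Cell S)
    (hcard : S.ncard < 9) :
    (cells.outerLink (MulAction.orbit (GL (Fin 4) ℤ) center) S).Nonempty := by
  obtain ⟨hinner, _, ⟨g, i, rfl⟩, hsub⟩ := hS
  have hq : IsTopForm (act g (stdForm i)) := ⟨g, i, rfl⟩
  obtain ⟨k, hk, hkS⟩ : ∃ k : Fin 10, k ≠ 9 ∧ g • stdPt i k ∉ S := by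
    by_contra! h
    have hinj : Function.Injective fun k => g • stdPt i k :=
      (MulAction.injective g).comp (stdData i).pt_injective
    have himage : (fun k => g • stdPt i k) '' {9}ᶜ ⊆ S := Set.image_subset_iff.2 h
    have hle := Set.ncard_le_ncard himage (hq.finite_vertexSet.subset hsub)
    rw [Set.ncard_image_of_injective _ hinj, Set.ncard_compl, Set.ncard_singleton,
      Nat.card_eq_fintype_card, Fintype.card_fin] at hle
    omega
  refine ⟨g • stdPt i k, fun h => hk (smul_stdPt_mem_orbit_center_iff.1 h).2, hkS,
    hinner.mono (Set.subset_insert _ _), _, hq,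
    Set.insert_subset (mem_vertexSet_act_stdForm.2 ⟨k, rfl⟩) hsub⟩

/-! ### Flips -/

theorem exists_stdVec_of_notMem_orbit_center {g : GL (Fin 4) ℤ} {i : Fin 3} {X : Point (Fin 4)}
    (hX : X ∈ vertexSet (act g (stdForm i)))
    (hc : X ∉ MulAction.orbit (GL (Fin 4) ℤ) center) :
    ∃ l, (i = 0 ∨ l ≠ 9) ∧ X = square (g.1 *ᵥ stdVec i l) := by
  obtain ⟨l, rfl⟩ := mem_vertexSet_act_stdForm.1 hX
  rw [smul_stdPt_mem_orbit_center_iff, not_and_or, not_not] at hc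
  exact ⟨l, hc, by rw [stdPt_of_ne hc, smul_square]⟩

theorem IsInner.eq_zero_of_dotProduct_eq_zero {ι : Type*} {v : ι → Fin 4 → ℤ}
    (hv : IsInner (Set.range fun j => square (v j))) {w : Fin 4 → ℤ} (hw : ∀ j, v j ⬝ᵥ w = 0) :
    w = 0 := by
  obtain ⟨c, F, hF, hle⟩ := hv
  have hsum : ∑ u ∈ F, ev u.mat w = 0 := by
    refine Finset.sum_eq_zero fun u hu => ?_
    obtain ⟨j, rfl⟩ := hF hu
    simp [square, ev_vecMulVec, hw]
  have h := hle w
  rw [hsum, mul_zero] at h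
  exact dotProduct_self_eq_zero.1 (h.antisymm (Finset.sum_nonneg fun j _ => mul_self_nonneg (w j)))

theorem isFlipped_or_exists_circuit (k : Type*) [Field k] {x : Fin 5 → Point (Fin 4)}
    (hx : cells.Cell (Set.range x))
    (hc : Disjoint (MulAction.orbit (GL (Fin 4) ℤ) center) (Set.range x)) :
    CellFamily.IsFlipped (orient (Fin 4) k) x ∨
      ∃ v : Fin 5 → Fin 4 → ℤ, (∀ j, x j = square (v j)) ∧ ∑ j, v j = 0 := by
  obtain ⟨hinner, _, ⟨g, i, rfl⟩, hsub⟩ := hx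
  choose l hl hxl using fun j => exists_stdVec_of_notMem_orbit_center (hsub ⟨j, rfl⟩)
    (Set.disjoint_right.1 hc ⟨j, rfl⟩)
  set v : Fin 5 → Fin 4 → ℤ := fun j => g.1 *ᵥ stdVec i (l j) with hv
  have hdet (f : Fin 4 → Fin 5) : |(of (v ∘ f)).det| ≤ 1 := by
    have hmul : of (v ∘ f) = of (stdVec i ∘ (l ∘ f)) * g.1ᵀ := by
      ext a b
      simp [hv, mulVec, dotProduct, mul_apply, mul_comm]
    rw [hmul, det_mul, det_transpose, abs_mul,
      Int.isUnit_iff_abs_eq.1 ((isUnit_iff_isUnit_det _).1 g.isUnit), mul_one]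
    exact abs_det_stdVec_le i fun a => hl (f a)
  obtain rfl : x = fun j => square (v j) := funext hxl
  obtain ⟨f, hf⟩ := exists_det_ne_zero fun w => hinner.eq_zero_of_dotProduct_eq_zero
  rcases exists_reflection_or_circuit k hdet hf with ⟨h, horient, hfix⟩ | ⟨s, hs, hsum⟩
  · refine .inl ⟨h, funext fun j => ?_, horient⟩
    rw [Pi.smul_apply, smul_square]
    exact square_eq_square_iff.2 (hfix j)
  · refine .inr ⟨fun j => s j • v j, fun j => square_eq_square_iff.2 ?_, hsum⟩
    rcases (abs_eq zero_le_one).1 (hs j) with h | h <;> simp [h]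

theorem ev_add_add_ev_sub {n R : Type*} [Fintype n] [CommRing R] (q : Matrix n n R)
    (v w : n → R) : ev q (v + w) + ev q (v - w) = 2 * (ev q v + ev q w) := by
  simp only [ev, mulVec_add, mulVec_sub, add_dotProduct, sub_dotProduct, dotProduct_add,
    dotProduct_sub]
  ring

theorem ev_eq_twelve {q : Matrix (Fin 4) (Fin 4) ℤ} {v : Fin 4 → ℤ} (hv : square v ∈ vertexSet q) :
    ev q v = 12 := by
  rw [mem_vertexSet, pair_square] at hv
  exact hv.elim And.left fun h => absurd h.2 (square_notMem_orbit_center v)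

theorem IsTopForm.twelve_le_ev {q : Matrix (Fin 4) (Fin 4) ℤ} (hq : IsTopForm q) {v : Fin 4 → ℤ}
    (hv : v ≠ 0) : 12 ≤ ev q v := by
  rw [← pair_square]
  exact hq.le_pair (isVertex_square hv)

/-- Otherwise half the sum and half the difference of `v` and `w` would be nonzero, and their values
would add up to `12`. -/
theorem IsTopForm.square_eq_square {q : Matrix (Fin 4) (Fin 4) ℤ} (hq : IsTopForm q)
    {v w : Fin 4 → ℤ} (hv : square v ∈ vertexSet q) (hw : square w ∈ vertexSet q)
    (h : Even (v + w)) : square v = square w := by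
  obtain ⟨m, hm⟩ := h
  obtain ⟨n, rfl⟩ : ∃ n, v = m + n := ⟨v - m, by abel⟩
  obtain rfl : w = m - n := by
    rw [eq_sub_iff_add_eq]
    exact add_left_cancel (a := m) (by rw [← hm]; abel)
  by_contra hne
  rw [square_eq_square_iff, not_or] at hne
  have hm₀ : m ≠ 0 := by
    rintro rfl
    simp at hne
  have hn₀ : n ≠ 0 := by
    rintro rfl
    simp at hne
  have hsum := ev_add_add_ev_sub q m n
  rw [ev_eq_twelve hv, ev_eq_twelve hw] at hsum
  linarith [hq.twelve_le_ev hm₀, hq.twelve_le_ev hn₀]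

theorem even_add_of_sum_eq_zero {ι M : Type*} [Fintype ι] [AddCommGroup M] {v w : ι → M}
    (hv : ∑ i, v i = 0) (hw : ∑ i, w i = 0) {j : ι} (h : ∀ i, i ≠ j → v i = w i ∨ v i = -w i) :
    Even (v j + w j) := by
  classical
  have hsum : ∑ i, (v i + w i) = 0 := by rw [Finset.sum_add_distrib, hv, hw, add_zero]
  rw [← Finset.add_sum_erase _ _ (Finset.mem_univ j), add_eq_zero_iff_eq_neg] at hsum
  rw [hsum]
  refine (Finset.even_sum _ fun i hi => ?_).neg
  rcases h i (Finset.ne_of_mem_erase hi) with hi | hi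
  · exact ⟨w i, by rw [hi]⟩
  · exact ⟨0, by simp [hi]⟩

theorem isFlipped_or_isFlipped_update (k : Type*) [Field k] {x : Fin 5 → Point (Fin 4)}
    (hx : cells.Cell (Set.range x))
    (hc : Disjoint (MulAction.orbit (GL (Fin 4) ℤ) center) (Set.range x)) :
    CellFamily.IsFlipped (orient (Fin 4) k) x ∨
      ∀ u ∈ cells.outerLink (MulAction.orbit (GL (Fin 4) ℤ) center) (Set.range x), ∀ j,
        cells.Cell (Set.range (Function.update x j u)) →
          CellFamily.IsFlipped (orient (Fin 4) k) (Function.update x j u) := by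
  rcases isFlipped_or_exists_circuit k hx hc with hflip | ⟨v, hv, hsum⟩
  · exact .inl hflip
  refine .inr fun u hu j hcell => ?_
  obtain ⟨huc, hux, -, q, hq, hsub⟩ := hu
  have hcu : Disjoint (MulAction.orbit (GL (Fin 4) ℤ) center)
      (Set.range (Function.update x j u)) := by
    refine Set.disjoint_right.2 (Set.forall_mem_range.2 fun i => ?_)
    rcases eq_or_ne i j with rfl | hi
    · rwa [Function.update_self]
    · rw [Function.update_of_ne hi]
      exact Set.disjoint_right.1 hc ⟨i, rfl⟩
  refine (isFlipped_or_exists_circuit k hcell hcu).resolve_right ?_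
  rintro ⟨w, hw, hsum'⟩
  obtain rfl : u = square (w j) := by rw [← hw j, Function.update_self]
  have heven : Even (v j + w j) := even_add_of_sum_eq_zero hsum hsum' fun i hi => by
    rw [← square_eq_square_iff, ← hv, ← hw, Function.update_of_ne hi]
  have hvj : square (v j) ∈ vertexSet q := hsub (.inr ⟨j, hv j⟩)
  exact hux ⟨j, (hv j).trans (hq.square_eq_square hvj (hsub (.inl rfl)) heven)⟩

end Voronoi

open CellFamily Voronoi in
theorem gl4_rational_cohomology_degree_five_vanishes_general (k : Type) [Field k] [CharZero k] :
    Subsingleton (groupCohomology (Rep.trivial k (GL (Fin 4) ℤ) k) 5) :=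
  subsingleton_groupCohomology_trivial (K := cells) (χ := orient (Fin 4) k) (q := 5) (n := 4)
    (fun _ => finite_stabilizer_cell)
    (exists_mem_invariants_boundary_eq (fun _ => subsingleton_orbit_center_inter)
      (fun _ hS _ hcard => outerLink_center_nonempty hS (by omega))
      fun _ _ => isFlipped_or_isFlipped_update k)
    (fun _ _ hm _ => exists_boundary_eq hm) fundCycle_mem_invariants
    fundCycle_ne_zero ker_boundary_eq_span_fundCycle

/-- Lee–Szczarba.  The group cohomology of `GL(4,ℤ)` with trivial
rational coefficients vanishes in degree `5`: `H^5(GL(4,ℤ);ℚ) = 0`. -/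
theorem gl4_rational_cohomology_degree_five_vanishes :
    Subsingleton (groupCohomology (Rep.trivial ℚ (GL (Fin 4) ℤ) ℚ) 5) :=
  gl4_rational_cohomology_degree_five_vanishes_general ℚ
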